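/- arXiv:1610.05804 — 2 statements merged into one kernel-verified Lean document; each statement's English description precedes it below -/
import Mathlib

section
/- Let q ≥ 3 be an integer and χ a non-principal quadratic Dirichlet character modulo q. Then there exists a prime p ≤ q⁴ with χ(p) = 1. -/
/-!
Let `r = 1 * χ`, so that `r ≥ 0` and `r (m ^ 2) ≥ 1`. The Lambert kernel
`K_t(d) = (1 - t) t ^ d / (1 - t ^ d)` satisfies `(1 - t) ∑ r(n) t ^ n = ∑ χ(d) K_t(d)`, and
`1 / d - K_t(d)` is decreasing in `d`. Abel summation and the bound `q / 2` for the partial sums of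
`χ` therefore give `(1 - t) ∑ r(n) t ^ n = ∑ χ(d) / d + O(q (1 - t))` uniformly in `t`, up to the
truncation at `N = q ^ 4`. Hence this quantity is nearly the same at two points `1 - ε` and `1 - δ`.
At `1 - ε` the squares alone contribute about `√ε`. If no prime `p ≤ N` had `χ(p) = 1`, then up to
`N` the function `r` would be at most `1` and supported on integers `d m ^ 2` with `d ∣ q`, so at
`1 - δ` the quantity would be `O(√δ q ^ (1 / 4))`. Taking `ε` of order `q ^ (-2)` and `δ` of order
`q ^ (-7 / 2)` this is a contradiction once `q ≥ 576`; for smaller `q` there is a prime `p ≤ q ^ 4`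
with `p ≡ 1 mod q`.
-/

open Finset

/-! ### Geometric sums and the Lambert kernel -/

section GeomSum

variable {R : Type*} [CommRing R] [LinearOrder R] [IsStrictOrderedRing R]

theorem natCast_mul_pow_pred_le_geom_sum_sq (u : R) (n : ℕ) :
    n * u ^ (n - 1) ≤ ∑ i ∈ range n, (u ^ 2) ^ i := by
  have hpair : ∀ i ∈ range n, 2 * u ^ (n - 1) ≤ (u ^ 2) ^ i + (u ^ 2) ^ (n - 1 - i) := by
    intro i hi
    obtain ⟨j, hj⟩ := Nat.exists_eq_add_of_le (Nat.le_pred_of_lt (mem_range.1 hi))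
    rw [Nat.pred_eq_sub_one] at hj
    rw [hj, Nat.add_sub_cancel_left, pow_add, ← mul_assoc, pow_right_comm u 2 i,
      pow_right_comm u 2 j]
    exact two_mul_le_add_sq _ _
  have htwo : 2 * (n * u ^ (n - 1)) ≤ 2 * ∑ i ∈ range n, (u ^ 2) ^ i := by
    calc 2 * (n * u ^ (n - 1)) = ∑ _i ∈ range n, 2 * u ^ (n - 1) := by
          rw [sum_const, card_range, nsmul_eq_mul]; ring
      _ ≤ ∑ i ∈ range n, ((u ^ 2) ^ i + (u ^ 2) ^ (n - 1 - i)) := sum_le_sum hpair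
      _ = 2 * ∑ i ∈ range n, (u ^ 2) ^ i := by
          rw [sum_add_distrib, sum_range_reflect (fun i => (u ^ 2) ^ i), two_mul]
  exact le_of_mul_le_mul_left htwo two_pos

theorem geom_sum_nonneg_of_neg_one_le {x : R} (hx : -1 ≤ x) (n : ℕ) :
    0 ≤ ∑ i ∈ range n, x ^ i := by
  obtain rfl | hx := hx.eq_or_lt
  · rw [neg_one_geom_sum]
    split_ifs <;> simp
  · obtain rfl | hn := eq_or_ne n 0
    · simp
    · exact (geom_sum_pos' (by linarith) hn).le

theorem geom_sum_le_one_of_nonpos {x : R} (hx : -1 ≤ x) (hx0 : x ≤ 0) (n : ℕ) :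
    ∑ i ∈ range n, x ^ i ≤ 1 := by
  cases n with
  | zero => simp
  | succ n =>
    rw [geom_sum_succ]
    linarith [mul_nonpos_of_nonpos_of_nonneg hx0 (geom_sum_nonneg_of_neg_one_le hx n)]

theorem one_le_geom_sum_of_nonneg {x : R} (hx : 0 ≤ x) {n : ℕ} (hn : n ≠ 0) :
    1 ≤ ∑ i ∈ range n, x ^ i := by
  obtain ⟨n, rfl⟩ := Nat.exists_eq_succ_of_ne_zero hn
  rw [geom_sum_succ, le_add_iff_nonneg_left]
  exact mul_nonneg hx (sum_nonneg fun i _ => pow_nonneg hx i)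

end GeomSum

theorem mul_succ_mul_pow_le_geom_sum_mul_geom_sum {t : ℝ} (h0 : 0 ≤ t) (h1 : t ≤ 1) (n : ℕ) :
    n * (n + 1) * t ^ n ≤ (∑ i ∈ range n, t ^ i) * ∑ i ∈ range (n + 1), t ^ i := by
  have hsqrt : √t ^ 2 = t := Real.sq_sqrt h0
  have hle := natCast_mul_pow_pred_le_geom_sum_sq √t n
  have hle' := natCast_mul_pow_pred_le_geom_sum_sq √t (n + 1)
  rw [hsqrt] at hle hle'
  calc n * (n + 1) * t ^ n = n * (n + 1) * √t ^ (2 * n) := by rw [pow_mul, hsqrt]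
    _ ≤ n * (n + 1) * √t ^ (n - 1 + n) := by
        gcongr n * (n + 1) * ?_
        exact pow_le_pow_of_le_one (Real.sqrt_nonneg t) (Real.sqrt_le_one.2 h1) (by omega)
    _ = n * √t ^ (n - 1) * ((n + 1 : ℕ) * √t ^ (n + 1 - 1)) := by
        rw [pow_add, Nat.add_sub_cancel]; push_cast; ring
    _ ≤ _ := mul_le_mul hle hle' (by positivity) (sum_nonneg fun i _ => pow_nonneg h0 i)

/-- The Lambert kernel `(1 - t) t ^ n / (1 - t ^ n)`, which tends to `1 / n` as `t → 1`. Dividing by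
the geometric sum instead of `1 - t ^ n` keeps the formula meaningful at `t = 1`. -/
noncomputable def lambertKernel (t : ℝ) (n : ℕ) : ℝ := t ^ n / ∑ i ∈ range n, t ^ i

section LambertKernel

variable {t : ℝ} {n : ℕ}

theorem lambertKernel_nonneg (h0 : 0 ≤ t) (n : ℕ) : 0 ≤ lambertKernel t n :=
  div_nonneg (pow_nonneg h0 n) (sum_nonneg fun i _ => pow_nonneg h0 i)

theorem lambertKernel_le_pow (h0 : 0 ≤ t) (hn : n ≠ 0) : lambertKernel t n ≤ t ^ n :=
  div_le_self (pow_nonneg h0 n) (one_le_geom_sum_of_nonneg h0 hn)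

theorem lambertKernel_mul_pow_le_pow (h0 : 0 ≤ t) (h1 : t ≤ 1) (hn : n ≠ 0) (N : ℕ) :
    lambertKernel t n * t ^ (n * (N / n)) ≤ t ^ N := by
  calc lambertKernel t n * t ^ (n * (N / n)) ≤ t ^ n * t ^ (n * (N / n)) :=
        mul_le_mul_of_nonneg_right (lambertKernel_le_pow h0 hn) (pow_nonneg h0 _)
    _ = t ^ (n * (N / n + 1)) := by rw [← pow_add, mul_add_one, add_comm]
    _ ≤ t ^ N := pow_le_pow_of_le_one h0 h1 (Nat.lt_mul_div_succ N (Nat.pos_of_ne_zero hn)).le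

theorem lambertKernel_le_one_div (h0 : 0 ≤ t) (h1 : t ≤ 1) (hn : n ≠ 0) :
    lambertKernel t n ≤ 1 / n := by
  rw [lambertKernel, div_le_div_iff₀ (geom_sum_pos h0 hn) (by positivity), one_mul]
  calc t ^ n * n = ∑ _i ∈ range n, t ^ n := by
        rw [sum_const, card_range, nsmul_eq_mul, mul_comm]
    _ ≤ ∑ i ∈ range n, t ^ i :=
        sum_le_sum fun i hi => pow_le_pow_of_le_one h0 h1 (mem_range.1 hi).le

theorem lambertKernel_sub_succ (h0 : 0 ≤ t) (hn : n ≠ 0) :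
    lambertKernel t n - lambertKernel t (n + 1) =
      t ^ n / ((∑ i ∈ range n, t ^ i) * ∑ i ∈ range (n + 1), t ^ i) := by
  rw [lambertKernel, lambertKernel,
    div_sub_div _ _ (geom_sum_pos h0 hn).ne' (geom_sum_pos h0 n.succ_ne_zero).ne', geom_sum_succ]
  ring

theorem antitone_one_div_sub_lambertKernel (h0 : 0 ≤ t) (h1 : t ≤ 1) :
    Antitone fun n : ℕ => 1 / ((n + 1 : ℕ) : ℝ) - lambertKernel t (n + 1) := by
  refine antitone_nat_of_succ_le fun n => ?_
  have hdecrease : lambertKernel t (n + 1) - lambertKernel t (n + 2) ≤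
      1 / ((n + 1 : ℕ) * ((n + 1 : ℕ) + 1)) := by
    rw [lambertKernel_sub_succ h0 n.succ_ne_zero,
      div_le_div_iff₀ (mul_pos (geom_sum_pos h0 n.succ_ne_zero)
        (geom_sum_pos h0 (n + 1).succ_ne_zero)) (by positivity), mul_comm, one_mul]
    exact mul_succ_mul_pow_le_geom_sum_mul_geom_sum h0 h1 (n + 1)
  have htelescope : (1 : ℝ) / (n + 1 : ℕ) - 1 / (n + 2 : ℕ) =
      1 / ((n + 1 : ℕ) * ((n + 1 : ℕ) + 1)) := by
    push_cast
    field_simp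
    ring
  change 1 / ((n + 2 : ℕ) : ℝ) - lambertKernel t (n + 2) ≤ _
  linarith

theorem one_sub_mul_sum_pow_mul (h0 : 0 ≤ t) (hn : n ≠ 0) (m : ℕ) :
    (1 - t) * ∑ k ∈ Ioc 0 m, t ^ (n * k) = lambertKernel t n * (1 - t ^ (n * m)) := by
  have hS : ∑ i ∈ range n, t ^ i ≠ 0 := (geom_sum_pos h0 hn).ne'
  have hgeom := geom_sum_mul_neg t n
  induction m with
  | zero => simp
  | succ m ih =>
    rw [sum_Ioc_succ_top m.zero_le, mul_add, ih, lambertKernel]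
    field_simp
    linear_combination t ^ (n * (m + 1)) * hgeom

end LambertKernel

theorem sum_Ioc_zero_eq_sum_range {M : Type*} [AddCommMonoid M] (g : ℕ → M) (n : ℕ) :
    ∑ i ∈ Ioc 0 n, g i = ∑ i ∈ range n, g (i + 1) := by
  rw [range_eq_Ico, sum_Ico_add' g, Ico_add_one_add_one_eq_Ioc]

theorem abs_sum_range_mul_le_of_antitone {b c : ℕ → ℝ} (hb : Antitone b) (hb0 : ∀ n, 0 ≤ b n)
    {Q : ℝ} (hc : ∀ n, |∑ i ∈ range n, c i| ≤ Q) (N : ℕ) :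
    |∑ i ∈ range N, b i * c i| ≤ Q * b 0 := by
  have hsum : ∀ n, ∑ i ∈ range n, b i * c i = b (n - 1) * ∑ i ∈ range n, c i +
      ∑ i ∈ range (n - 1), (b i - b (i + 1)) * ∑ j ∈ range (i + 1), c j := fun n => by
    have := sum_range_by_parts b c n
    simp only [smul_eq_mul] at this
    rw [this, sub_eq_add_neg, ← sum_neg_distrib]
    simp only [← neg_mul, neg_sub]
  have hterm : ∀ {x y : ℝ}, 0 ≤ x → |y| ≤ Q → |x * y| ≤ x * Q := fun hx hy => by
    rw [abs_mul, abs_of_nonneg hx]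
    exact mul_le_mul_of_nonneg_left hy hx
  calc |∑ i ∈ range N, b i * c i| ≤ b (N - 1) * Q + ∑ i ∈ range (N - 1), (b i - b (i + 1)) * Q := by
        rw [hsum]
        refine (abs_add_le _ _).trans (add_le_add (hterm (hb0 _) (hc _)) ?_)
        exact (abs_sum_le_sum_abs _ _).trans
          (sum_le_sum fun i _ => hterm (sub_nonneg.2 (hb i.le_succ)) (hc _))
    _ = Q * b 0 := by
        rw [← sum_mul, sum_range_sub']
        ring

theorem sum_Ioc_sum_divisors {M : Type*} [AddCommMonoid M] (g : ℕ → ℕ → M) (N : ℕ) :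
    ∑ n ∈ Ioc 0 N, ∑ d ∈ n.divisors, g d n =
      ∑ d ∈ Ioc 0 N, ∑ k ∈ Ioc 0 (N / d), g d (d * k) := by
  calc ∑ n ∈ Ioc 0 N, ∑ d ∈ n.divisors, g d n = ∑ d ∈ Ioc 0 N, ∑ n ∈ Ioc 0 N with d ∣ n, g d n := by
        refine sum_comm' fun n d => ?_
        simp only [mem_Ioc, Nat.mem_divisors, mem_filter]
        refine ⟨fun ⟨⟨hn, hnN⟩, hdn, _⟩ => ⟨⟨⟨hn, hnN⟩, hdn⟩, Nat.pos_of_dvd_of_pos hdn hn,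
          (Nat.le_of_dvd hn hdn).trans hnN⟩, fun ⟨⟨hn, hdn⟩, _⟩ => ⟨hn, hdn, hn.1.ne'⟩⟩
    _ = ∑ d ∈ Ioc 0 N, ∑ k ∈ Ioc 0 (N / d), g d (d * k) := by
        refine sum_congr rfl fun d hd => ?_
        have hd0 : 0 < d := (mem_Ioc.1 hd).1
        refine sum_nbij' (· / d) (d * ·) ?_ ?_ ?_ ?_ ?_
        · simp only [mem_filter, mem_Ioc]
          exact fun n ⟨⟨hn, hnN⟩, hdn⟩ =>
            ⟨Nat.div_pos (Nat.le_of_dvd hn hdn) hd0, Nat.div_le_div_right hnN⟩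
        · simp only [mem_filter, mem_Ioc, Nat.le_div_iff_mul_le hd0, mul_comm _ d]
          exact fun k ⟨hk, hkN⟩ => ⟨⟨mul_pos hd0 hk, hkN⟩, dvd_mul_right d k⟩
        · exact fun n hn => Nat.mul_div_cancel' (mem_filter.1 hn).2
        · exact fun k _ => Nat.mul_div_cancel_left k hd0
        · exact fun n hn => by rw [Nat.mul_div_cancel' (mem_filter.1 hn).2]

theorem abs_sum_div_sub_lambert_le {c : ℕ → ℝ} (hc1 : ∀ n, |c n| ≤ 1) {Q : ℝ}
    (hc : ∀ n, |∑ i ∈ Ioc 0 n, c i| ≤ Q) {t : ℝ} (h0 : 0 ≤ t) (h1 : t ≤ 1) (N : ℕ) :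
    |∑ d ∈ Ioc 0 N, c d / d - (1 - t) * ∑ n ∈ Ioc 0 N, (∑ d ∈ n.divisors, c d) * t ^ n| ≤
      Q * (1 - t) + N * t ^ N := by
  have hlambert : (1 - t) * ∑ n ∈ Ioc 0 N, (∑ d ∈ n.divisors, c d) * t ^ n =
      ∑ d ∈ Ioc 0 N, c d * (lambertKernel t d * (1 - t ^ (d * (N / d)))) := by
    simp only [sum_mul]
    rw [sum_Ioc_sum_divisors fun d n => c d * t ^ n, mul_sum]
    refine sum_congr rfl fun d hd => ?_
    rw [← one_sub_mul_sum_pow_mul h0 (mem_Ioc.1 hd).1.ne', ← mul_sum]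
    ring
  have hsplit : ∑ d ∈ Ioc 0 N, c d / d -
        (1 - t) * ∑ n ∈ Ioc 0 N, (∑ d ∈ n.divisors, c d) * t ^ n =
      ∑ d ∈ Ioc 0 N, (1 / d - lambertKernel t d) * c d +
        ∑ d ∈ Ioc 0 N, c d * (lambertKernel t d * t ^ (d * (N / d))) := by
    rw [hlambert, ← sum_sub_distrib, ← sum_add_distrib]
    exact sum_congr rfl fun d _ => by ring
  have hmain : |∑ d ∈ Ioc 0 N, (1 / d - lambertKernel t d) * c d| ≤ Q * (1 - t) := by
    simp only [sum_Ioc_zero_eq_sum_range] at hc ⊢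
    refine (abs_sum_range_mul_le_of_antitone (antitone_one_div_sub_lambertKernel h0 h1)
      (fun n => sub_nonneg.2 (lambertKernel_le_one_div h0 h1 n.succ_ne_zero)) hc N).trans_eq ?_
    simp [lambertKernel]
  have htail : |∑ d ∈ Ioc 0 N, c d * (lambertKernel t d * t ^ (d * (N / d)))| ≤ N * t ^ N := by
    calc _ ≤ ∑ _d ∈ Ioc 0 N, t ^ N := (abs_sum_le_sum_abs _ _).trans (sum_le_sum fun d hd => ?_)
      _ = N * t ^ N := by rw [sum_const, Nat.card_Ioc, Nat.sub_zero, nsmul_eq_mul]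
    have hK : 0 ≤ lambertKernel t d * t ^ (d * (N / d)) :=
      mul_nonneg (lambertKernel_nonneg h0 d) (pow_nonneg h0 _)
    rw [abs_mul, abs_of_nonneg hK]
    exact (mul_le_of_le_one_left hK (hc1 d)).trans
      (lambertKernel_mul_pow_le_pow h0 h1 (mem_Ioc.1 hd).1.ne' N)
  rw [hsplit]
  exact (abs_add_le _ _).trans (add_le_add hmain htail)

/-! ### The convolution `1 * f` -/

/-- The Dirichlet convolution `1 * f` of the constant function `1` with a completely multiplicative
function `f`; for a quadratic character these are the coefficients of `ζ(s) L(s, χ)`. -/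
def zetaConv {R : Type*} [CommSemiring R] (f : ℕ →*₀ R) : ArithmeticFunction R :=
  ArithmeticFunction.zeta * (show ArithmeticFunction R from ⟨f, map_zero f⟩)

section ZetaConv

theorem zetaConv_apply {R : Type*} [CommSemiring R] (f : ℕ →*₀ R) (n : ℕ) :
    zetaConv f n = ∑ d ∈ n.divisors, f d := by
  rw [zetaConv, ArithmeticFunction.coe_zeta_mul_apply]
  rfl

theorem isMultiplicative_zetaConv {R : Type*} [CommSemiring R] (f : ℕ →*₀ R) :
    (zetaConv f).IsMultiplicative :=
  ArithmeticFunction.isMultiplicative_zeta.natCast.mul ⟨map_one f, fun _ => map_mul f _ _⟩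

theorem zetaConv_eq_prod_geom_sum {R : Type*} [CommSemiring R] (f : ℕ →*₀ R) {n : ℕ}
    (hn : n ≠ 0) :
    zetaConv f n = ∏ p ∈ n.primeFactors, ∑ i ∈ range (n.factorization p + 1), f p ^ i := by
  rw [(isMultiplicative_zetaConv f).multiplicative_factorization _ hn]
  refine prod_congr rfl fun p hp => ?_
  simp [zetaConv_apply, Nat.sum_divisors_prime_pow (Nat.prime_of_mem_primeFactors hp)]

variable {R : Type*} [CommRing R]

theorem zetaConv_eq_zero {f : ℕ →*₀ R} {n p : ℕ} (hfp : f p = -1) (hodd : Odd (n.factorization p)) :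
    zetaConv f n = 0 := by
  have hp : p ∈ n.primeFactors := by
    rw [← Nat.support_factorization, Finsupp.mem_support_iff]
    exact hodd.pos.ne'
  rw [zetaConv_eq_prod_geom_sum f (Nat.mem_primeFactors.1 hp).2.2]
  refine prod_eq_zero hp ?_
  rw [hfp, neg_one_geom_sum, if_pos hodd.add_one]

theorem exists_squarefree_mul_sq_of_zetaConv_ne_zero {f : ℕ →*₀ R} {n : ℕ}
    (hf : ∀ p ∈ n.primeFactors, f p = -1 ∨ f p = 0) (hne : zetaConv f n ≠ 0) :
    ∃ d m : ℕ, Squarefree d ∧ (∀ p ∈ d.primeFactors, f p = 0) ∧ d * m ^ 2 = n := by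
  obtain ⟨d, m, rfl, hd⟩ := Nat.sq_mul_squarefree n
  have hn : m ^ 2 * d ≠ 0 := fun h => hne (by rw [h, ArithmeticFunction.map_zero])
  obtain ⟨hm0, hd0⟩ := mul_ne_zero_iff.1 hn
  refine ⟨d, m, hd, fun p hp => ?_, mul_comm _ _⟩
  have hpn : p ∈ (m ^ 2 * d).primeFactors :=
    Nat.primeFactors_mono (dvd_mul_left d (m ^ 2)) hn hp
  refine (hf p hpn).resolve_left fun hfp => hne (zetaConv_eq_zero hfp ?_)
  have hdp : d.factorization p = 1 :=
    Nat.factorization_eq_one_of_squarefree hd (Nat.prime_of_mem_primeFactors hp)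
      (Nat.dvd_of_mem_primeFactors hp)
  rw [Nat.factorization_mul hm0 hd0, Nat.factorization_pow, Finsupp.add_apply, hdp]
  exact ⟨m.factorization p, by simp⟩

variable [LinearOrder R] [IsStrictOrderedRing R]

theorem zetaConv_nonneg {f : ℕ →*₀ R} (hf : ∀ p : ℕ, p.Prime → -1 ≤ f p) (n : ℕ) :
    0 ≤ zetaConv f n := by
  obtain rfl | hn := eq_or_ne n 0
  · simp
  rw [zetaConv_eq_prod_geom_sum f hn]
  exact prod_nonneg fun p hp =>
    geom_sum_nonneg_of_neg_one_le (hf p (Nat.prime_of_mem_primeFactors hp)) _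

theorem zetaConv_le_one {f : ℕ →*₀ R} {n : ℕ}
    (hf : ∀ p ∈ n.primeFactors, -1 ≤ f p ∧ f p ≤ 0) : zetaConv f n ≤ 1 := by
  obtain rfl | hn := eq_or_ne n 0
  · simp
  rw [zetaConv_eq_prod_geom_sum f hn]
  exact prod_le_one (fun p hp => geom_sum_nonneg_of_neg_one_le (hf p hp).1 _)
    fun p hp => geom_sum_le_one_of_nonpos (hf p hp).1 (hf p hp).2 _

theorem one_le_zetaConv_sq {f : ℕ →*₀ R} (hf : ∀ p : ℕ, p.Prime → f p = -1 ∨ 0 ≤ f p) {m : ℕ}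
    (hm : m ≠ 0) : 1 ≤ zetaConv f (m ^ 2) := by
  rw [zetaConv_eq_prod_geom_sum f (pow_ne_zero 2 hm)]
  refine Finset.one_le_prod fun p hp => ?_
  obtain hfp | hfp := hf p (Nat.prime_of_mem_primeFactors hp)
  · have hodd : ¬Even ((m ^ 2).factorization p + 1) := by
      simp [Nat.factorization_pow]
    rw [hfp, neg_one_geom_sum, if_neg hodd]
  · exact one_le_geom_sum_of_nonneg hfp (Nat.succ_ne_zero _)

end ZetaConv

/-! ### Truncated Lambert series -/

/-- The Lambert series `∑ f n * t ^ n / (1 - t ^ n)`, rearranged as the power series with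
coefficients `1 * f` and truncated after degree `N`. -/
def lambertSum (f : ℕ →*₀ ℝ) (N : ℕ) (t : ℝ) : ℝ := ∑ n ∈ Ioc 0 N, zetaConv f n * t ^ n

section LambertSum

variable {f : ℕ →*₀ ℝ} {N : ℕ}

theorem abs_sum_div_sub_lambertSum_le (hf : ∀ n, |f n| ≤ 1) {Q : ℝ}
    (hQ : ∀ n, |∑ i ∈ range n, f i| ≤ Q) {t : ℝ} (h0 : 0 ≤ t) (h1 : t ≤ 1) (N : ℕ) :
    |∑ d ∈ Ioc 0 N, f d / d - (1 - t) * lambertSum f N t| ≤ Q * (1 - t) + N * t ^ N := by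
  have hQ' : ∀ n, |∑ i ∈ Ioc 0 n, f i| ≤ Q := fun n => by
    simpa only [sum_range_succ', map_zero, add_zero, ← sum_Ioc_zero_eq_sum_range] using hQ (n + 1)
  simpa only [lambertSum, zetaConv_apply] using abs_sum_div_sub_lambert_le hf hQ' h0 h1 N

theorem one_sub_mul_lambertSum_le (hf : ∀ n, |f n| ≤ 1) {Q : ℝ}
    (hQ : ∀ n, |∑ i ∈ range n, f i| ≤ Q) {s t : ℝ} (hs : 0 ≤ s) (hst : s ≤ t) (ht : t ≤ 1) (N : ℕ) :
    (1 - s) * lambertSum f N s ≤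
      (1 - t) * lambertSum f N t + Q * ((1 - s) + (1 - t)) + 2 * (N * t ^ N) := by
  have hleft := abs_le.1 (abs_sum_div_sub_lambertSum_le hf hQ hs (hst.trans ht) N)
  have hright := abs_le.1 (abs_sum_div_sub_lambertSum_le hf hQ (hs.trans hst) ht N)
  have hpow : (N : ℝ) * s ^ N ≤ N * t ^ N := by gcongr
  linarith [hleft.1, hright.2]

theorem sum_pow_sq_le_lambertSum (hf : ∀ p : ℕ, p.Prime → f p = -1 ∨ 0 ≤ f p) {M : ℕ}
    (hMN : M ^ 2 ≤ N) {t : ℝ} (ht : 0 ≤ t) : ∑ m ∈ Ioc 0 M, t ^ (m ^ 2) ≤ lambertSum f N t := by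
  have hf' : ∀ p : ℕ, p.Prime → -1 ≤ f p := fun p hp =>
    (hf p hp).elim Eq.ge fun h => neg_one_lt_zero.le.trans h
  calc ∑ m ∈ Ioc 0 M, t ^ (m ^ 2) ≤ ∑ m ∈ Ioc 0 M, zetaConv f (m ^ 2) * t ^ (m ^ 2) :=
        sum_le_sum fun m hm => le_mul_of_one_le_left (pow_nonneg ht _)
          (one_le_zetaConv_sq hf (mem_Ioc.1 hm).1.ne')
    _ = ∑ n ∈ (Ioc 0 M).image (· ^ 2), zetaConv f n * t ^ n :=
        (sum_image (f := fun n => zetaConv f n * t ^ n)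
          (Nat.pow_left_injective two_ne_zero).injOn).symm
    _ ≤ lambertSum f N t := sum_le_sum_of_subset_of_nonneg ?_ fun n _ _ =>
        mul_nonneg (zetaConv_nonneg hf' n) (pow_nonneg ht _)
  simp only [image_subset_iff, mem_Ioc]
  exact fun m ⟨hm, hmM⟩ => ⟨by positivity, (Nat.pow_le_pow_left hmM 2).trans hMN⟩

theorem exists_dvd_mul_sq_of_zetaConv_ne_zero {q n : ℕ} (hq : q ≠ 0)
    (hf : ∀ p ∈ n.primeFactors, f p = -1 ∨ f p = 0) (hf0 : ∀ p : ℕ, p.Prime → f p = 0 → p ∣ q)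
    (hne : zetaConv f n ≠ 0) : ∃ d ∈ q.divisors, ∃ m ∈ Ioc 0 n, d * m ^ 2 = n := by
  obtain ⟨d, m, hd, hdf, rfl⟩ := exists_squarefree_mul_sq_of_zetaConv_ne_zero hf hne
  obtain ⟨hd0, hm0⟩ : d ≠ 0 ∧ m ≠ 0 := by
    constructor <;> rintro rfl <;> simp at hne
  have hdq : d ∣ q := by
    rw [← Nat.prod_primeFactors_of_squarefree hd]
    exact prod_primes_dvd q (fun p hp => (Nat.prime_of_mem_primeFactors hp).prime)
      fun p hp => hf0 p (Nat.prime_of_mem_primeFactors hp) (hdf p hp)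
  refine ⟨d, Nat.mem_divisors.2 ⟨hdq, hq⟩, m, mem_Ioc.2 ⟨?_, ?_⟩, rfl⟩
  · exact Nat.pos_of_ne_zero hm0
  · exact (Nat.le_self_pow two_ne_zero m).trans (Nat.le_mul_of_pos_left _ (Nat.pos_of_ne_zero hd0))

theorem lambertSum_le_sum_divisors {q : ℕ} (hq : q ≠ 0)
    (hf : ∀ p : ℕ, p.Prime → p ≤ N → f p = -1 ∨ f p = 0)
    (hf0 : ∀ p : ℕ, p.Prime → f p = 0 → p ∣ q) {t : ℝ} (ht : 0 ≤ t) :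
    lambertSum f N t ≤ ∑ d ∈ q.divisors, ∑ m ∈ Ioc 0 N, t ^ (d * m ^ 2) := by
  have hfn : ∀ n ∈ Ioc 0 N, ∀ p ∈ n.primeFactors, f p = -1 ∨ f p = 0 := fun n hn p hp =>
    hf p (Nat.prime_of_mem_primeFactors hp) ((Nat.le_of_mem_primeFactors hp).trans (mem_Ioc.1 hn).2)
  calc lambertSum f N t = ∑ n ∈ Ioc 0 N with zetaConv f n ≠ 0, zetaConv f n * t ^ n :=
        (sum_filter_of_ne fun n _ h => left_ne_zero_of_mul h).symm
    _ ≤ ∑ n ∈ Ioc 0 N with zetaConv f n ≠ 0, t ^ n := by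
        refine sum_le_sum fun n hn => mul_le_of_le_one_left (pow_nonneg ht n) ?_
        have hn := mem_of_mem_filter n hn
        refine zetaConv_le_one fun p hp => ?_
        obtain h | h := hfn n hn p hp <;> norm_num [h]
    _ ≤ ∑ n ∈ (q.divisors ×ˢ Ioc 0 N).image (fun x => x.1 * x.2 ^ 2), t ^ n := by
        refine sum_le_sum_of_subset_of_nonneg (fun n hn => ?_) fun n _ _ => pow_nonneg ht n
        obtain ⟨hn, hne⟩ := mem_filter.1 hn
        obtain ⟨d, hd, m, hm, hdm⟩ :=
          exists_dvd_mul_sq_of_zetaConv_ne_zero hq (hfn n hn) hf0 hne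
        exact mem_image.2
          ⟨(d, m), mem_product.2 ⟨hd, Ioc_subset_Ioc_right (mem_Ioc.1 hn).2 hm⟩, hdm⟩
    _ ≤ ∑ x ∈ q.divisors ×ˢ Ioc 0 N, t ^ (x.1 * x.2 ^ 2) :=
        sum_image_le_of_nonneg fun n _ => pow_nonneg ht n
    _ = ∑ d ∈ q.divisors, ∑ m ∈ Ioc 0 N, t ^ (d * m ^ 2) := sum_product ..

end LambertSum

/-! ### Sums over squares and divisors -/

theorem natCast_sub_le_sum_one_sub_pow_sq {ε : ℝ} (hε : ε ≤ 1) (M : ℕ) :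
    M - ε * (M * (M + 1) * (2 * M + 1) / 6) ≤ ∑ m ∈ Ioc 0 M, (1 - ε) ^ (m ^ 2) := by
  induction M with
  | zero => simp
  | succ M ih =>
    have hbernoulli := one_add_mul_le_pow (a := -ε) (by linarith) ((M + 1) ^ 2)
    rw [← sub_eq_add_neg] at hbernoulli
    rw [sum_Ioc_succ_top M.zero_le]
    push_cast at hbernoulli ⊢
    linarith

theorem one_sub_pow_le_exp_neg_mul {x : ℝ} (hx : x ≤ 1) (n : ℕ) :
    (1 - x) ^ n ≤ Real.exp (-(n * x)) := by
  rw [← mul_neg, Real.exp_nat_mul]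
  exact pow_le_pow_left₀ (sub_nonneg.2 hx) (Real.one_sub_le_exp_neg x) n

theorem sum_exp_neg_mul_sq_le {a : ℝ} (ha : 0 < a) (M : ℕ) :
    ∑ m ∈ Ioc 0 M, Real.exp (-a * (m : ℝ) ^ 2) ≤ 1 / √a := by
  have hanti : AntitoneOn (fun x : ℝ => Real.exp (-a * x ^ 2)) (Set.Icc 0 (M : ℝ)) := by
    intro x hx y _ hxy
    refine Real.exp_le_exp.2 (mul_le_mul_of_nonpos_left ?_ (neg_nonpos.2 ha.le))
    exact pow_le_pow_left₀ hx.1 hxy 2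
  have hpi : √Real.pi ≤ 2 := Real.sqrt_le_iff.2 ⟨two_pos.le, by linarith [Real.pi_le_four]⟩
  calc ∑ m ∈ Ioc 0 M, Real.exp (-a * (m : ℝ) ^ 2) ≤
        ∫ x in Set.Ioi (0 : ℝ), Real.exp (-a * x ^ 2) := by
        rw [sum_Ioc_zero_eq_sum_range fun m : ℕ => Real.exp (-a * (m : ℝ) ^ 2)]
        exact hanti.sum_range_le_integral (integrable_exp_neg_mul_sq ha).integrableOn
          fun _ _ => (Real.exp_pos _).le
    _ = √Real.pi / 2 / √a := by
        rw [integral_gaussian_Ioi, Real.sqrt_div' _ ha.le, div_right_comm]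
    _ ≤ 1 / √a := by
        gcongr
        linarith

theorem inv_sqrt_le_two_mul_sqrt_sub {x : ℝ} (hx : 1 ≤ x) : 1 / √x ≤ 2 * (√x - √(x - 1)) := by
  have hpos : 0 < √x := Real.sqrt_pos.2 (by linarith)
  rw [div_le_iff₀ hpos]
  nlinarith [sq_nonneg (√x - √(x - 1)), Real.sq_sqrt (by linarith : 0 ≤ x),
    Real.sq_sqrt (by linarith : 0 ≤ x - 1)]

theorem sum_inv_sqrt_le_two_mul_sqrt_card (s : Finset ℕ) (hs : 0 ∉ s) :
    ∑ d ∈ s, 1 / √(d : ℝ) ≤ 2 * √(#s : ℝ) := by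
  induction s using Finset.induction_on_max with
  | empty => simp
  | insert a s hmax ih =>
    have ha : a ∉ s := fun h => (hmax a h).false
    have hcard : ((#s + 1 : ℕ) : ℝ) ≤ a := by
      have hsub : insert a s ⊆ Ioc 0 a := fun d hd =>
        mem_Ioc.2 ⟨Nat.pos_of_ne_zero fun h => hs (h ▸ hd),
          (mem_insert.1 hd).elim Eq.le fun h => (hmax d h).le⟩
      have hle := card_le_card hsub
      rw [card_insert_of_notMem ha, Nat.card_Ioc, Nat.sub_zero] at hle
      exact_mod_cast hle
    have hstep := inv_sqrt_le_two_mul_sqrt_sub (x := (#s + 1 : ℕ)) (by simp)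
    rw [Nat.cast_add_one, add_sub_cancel_right, ← Nat.cast_add_one] at hstep
    rw [sum_insert ha, card_insert_of_notMem ha]
    calc 1 / √(a : ℝ) + ∑ d ∈ s, 1 / √(d : ℝ) ≤ 1 / √((#s + 1 : ℕ) : ℝ) + 2 * √(#s : ℝ) := by
          gcongr
          exact ih fun h => hs (mem_insert_of_mem h)
      _ ≤ 2 * √((#s + 1 : ℕ) : ℝ) := by linarith

theorem card_divisors_le_two_mul_sqrt (n : ℕ) : #n.divisors ≤ 2 * n.sqrt := by
  have hcover : n.divisors ⊆ Ioc 0 n.sqrt ∪ (Ioc 0 n.sqrt).image (n / ·) := by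
    intro d hd
    obtain ⟨hdn, hn⟩ := Nat.mem_divisors.1 hd
    have hd0 := Nat.pos_of_mem_divisors hd
    rw [mem_union, mem_image]
    obtain h | h := le_or_gt d n.sqrt
    · exact Or.inl (mem_Ioc.2 ⟨hd0, h⟩)
    · have hmul := Nat.div_mul_cancel hdn
      refine Or.inr ⟨n / d, mem_Ioc.2 ⟨Nat.div_pos (Nat.divisor_le hd) hd0, ?_⟩,
        Nat.div_div_self hdn hn⟩
      by_contra! hlt
      nlinarith [Nat.lt_succ_sqrt n]
  calc #n.divisors ≤ #(Ioc 0 n.sqrt) + #((Ioc 0 n.sqrt).image (n / ·)) :=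
        (card_le_card hcover).trans (card_union_le _ _)
    _ ≤ n.sqrt + n.sqrt := by
        gcongr
        · simp
        · exact card_image_le.trans (by simp)
    _ = 2 * n.sqrt := (two_mul _).symm

theorem sum_divisors_inv_sqrt_le (n : ℕ) : ∑ d ∈ n.divisors, 1 / √(d : ℝ) ≤ 3 * √√(n : ℝ) := by
  have hcard : (#n.divisors : ℝ) ≤ 2 * √n := by
    calc (#n.divisors : ℝ) ≤ 2 * (n.sqrt : ℝ) := by exact_mod_cast card_divisors_le_two_mul_sqrt n
      _ ≤ 2 * √n := by gcongr; exact Real.nat_sqrt_le_real_sqrt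
  have hsqrt_two : √2 ≤ 3 / 2 := Real.sqrt_le_iff.2 (by norm_num)
  calc ∑ d ∈ n.divisors, 1 / √(d : ℝ) ≤ 2 * √(#n.divisors : ℝ) :=
        sum_inv_sqrt_le_two_mul_sqrt_card _ fun h => (Nat.pos_of_mem_divisors h).false
    _ ≤ 2 * (√2 * √√n) := by
        rw [← Real.sqrt_mul two_pos.le]
        gcongr
    _ ≤ 2 * (3 / 2 * √√n) := by gcongr
    _ = 3 * √√n := by ring

theorem sum_divisors_sum_pow_mul_sq_le (n N : ℕ) {δ : ℝ} (h0 : 0 < δ) (h1 : δ ≤ 1) :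
    ∑ d ∈ n.divisors, ∑ m ∈ Ioc 0 N, (1 - δ) ^ (d * m ^ 2) ≤ 3 * √√(n : ℝ) / √δ := by
  have hinner : ∀ d ∈ n.divisors,
      ∑ m ∈ Ioc 0 N, (1 - δ) ^ (d * m ^ 2) ≤ 1 / √(d : ℝ) * (1 / √δ) := by
    intro d hd
    have hd0 : (0 : ℝ) < d := by exact_mod_cast Nat.pos_of_mem_divisors hd
    calc ∑ m ∈ Ioc 0 N, (1 - δ) ^ (d * m ^ 2) ≤
          ∑ m ∈ Ioc 0 N, Real.exp (-(d * δ) * (m : ℝ) ^ 2) := by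
          refine sum_le_sum fun m _ => (one_sub_pow_le_exp_neg_mul h1 _).trans_eq ?_
          push_cast
          ring_nf
      _ ≤ 1 / √(d * δ) := sum_exp_neg_mul_sq_le (mul_pos hd0 h0) N
      _ = 1 / √(d : ℝ) * (1 / √δ) := by rw [Real.sqrt_mul hd0.le, one_div_mul_one_div]
  calc _ ≤ ∑ d ∈ n.divisors, 1 / √(d : ℝ) * (1 / √δ) := sum_le_sum hinner
    _ = (∑ d ∈ n.divisors, 1 / √(d : ℝ)) / √δ := by rw [← sum_mul, mul_one_div]
    _ ≤ 3 * √√(n : ℝ) / √δ := by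
        gcongr
        exact sum_divisors_inv_sqrt_le n

/-! ### Choice of parameters -/

theorem pow_ten_mul_exp_neg_le {y : ℝ} (hy : 24 ≤ y) :
    y ^ 10 * Real.exp (-(9 / 4 * y)) ≤ 1 / 2000 := by
  have hpow : (24 : ℝ) ^ 16 ≤ y ^ 16 := pow_le_pow_left₀ (by norm_num) hy 16
  have hnum : (2000 : ℝ) ≤ (9 / 4) ^ 26 / (Nat.factorial 26 : ℝ) * 24 ^ 16 := by
    norm_num [Nat.factorial]
  rw [Real.exp_neg, ← div_eq_mul_inv, div_le_iff₀ (Real.exp_pos _)]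
  calc y ^ 10 = 1 / 2000 * (2000 * y ^ 10) := by ring
    _ ≤ 1 / 2000 * ((9 / 4) ^ 26 / (Nat.factorial 26 : ℝ) * y ^ 16 * y ^ 10) := by
        gcongr
        exact hnum.trans (by gcongr)
    _ = 1 / 2000 * ((9 / 4 * y) ^ 26 / (Nat.factorial 26 : ℝ)) := by ring
    _ ≤ 1 / 2000 * Real.exp (9 / 4 * y) := by
        gcongr
        exact Real.pow_div_factorial_le_exp _ (by positivity) 26

theorem natCast_mul_one_sub_pow_le {y : ℝ} (hy : 24 ≤ y) {N : ℕ} (hN : (N : ℝ) = y ^ 8) :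
    N * (1 - 9 / 4 / y ^ 7) ^ N ≤ 1 / 2000 / y ^ 2 := by
  have hy0 : 0 < y := by linarith
  have hδ : 9 / 4 / y ^ 7 ≤ 1 := by
    rw [div_le_one (by positivity)]
    exact (by norm_num : (9 / 4 : ℝ) ≤ 24 ^ 7).trans (by gcongr)
  rw [le_div_iff₀ (by positivity)]
  calc N * (1 - 9 / 4 / y ^ 7) ^ N * y ^ 2 ≤ N * Real.exp (-(N * (9 / 4 / y ^ 7))) * y ^ 2 := by
        gcongr
        exact one_sub_pow_le_exp_neg_mul hδ N
    _ = y ^ 10 * Real.exp (-(9 / 4 * y)) := by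
        rw [hN, show y ^ 8 * (9 / 4 / y ^ 7) = 9 / 4 * y by field_simp]
        ring
    _ ≤ 1 / 2000 := pow_ten_mul_exp_neg_le hy

theorem sqrt_mul_sqrt_div_pow_seven {y : ℝ} (hy : 0 < y) :
    √y * √(9 / 4 / y ^ 7) = 3 / 2 / y ^ 3 := by
  rw [← Real.sqrt_mul hy.le, show y * (9 / 4 / y ^ 7) = (3 / 2 / y ^ 3) ^ 2 by field_simp; norm_num,
    Real.sqrt_sq (by positivity)]

theorem lambert_error_lt_main {y : ℝ} (hy : 24 ≤ y) {N : ℕ} (hN : (N : ℝ) = y ^ 8) :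
    3 * (√y * √(9 / 4 / y ^ 7)) + y ^ 2 / 2 * (1 / 4 / y ^ 4 + 9 / 4 / y ^ 7) +
        2 * (N * (1 - 9 / 4 / y ^ 7) ^ N) <
      1 / 4 / y ^ 4 * (2 * y ^ 2 -
        1 / 4 / y ^ 4 * (2 * y ^ 2 * (2 * y ^ 2 + 1) * (2 * (2 * y ^ 2) + 1) / 6)) := by
  have hy0 : 0 < y := by linarith
  have htail := natCast_mul_one_sub_pow_le hy hN
  set x := 1 / y with hx
  have hx0 : 0 < x := by positivity
  have hx1 : x ≤ 1 / 24 := by rw [hx]; gcongr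
  have hpoly : 9 / 2 * x + 9 / 8 * x ^ 3 + 1 / 8 * x ^ 2 + 1 / 48 * x ^ 4 < 5 / 24 - 1 / 1000 := by
    calc _ ≤ 9 / 2 * (1 / 24) + 9 / 8 * (1 / 24) ^ 3 + 1 / 8 * (1 / 24) ^ 2 +
          1 / 48 * (1 / 24 : ℝ) ^ 4 := by gcongr
      _ < _ := by norm_num
  rw [sqrt_mul_sqrt_div_pow_seven hy0]
  calc 3 * (3 / 2 / y ^ 3) + y ^ 2 / 2 * (1 / 4 / y ^ 4 + 9 / 4 / y ^ 7) +
        2 * (N * (1 - 9 / 4 / y ^ 7) ^ N) ≤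
        3 * (3 / 2 / y ^ 3) + y ^ 2 / 2 * (1 / 4 / y ^ 4 + 9 / 4 / y ^ 7) +
        2 * (1 / 2000 / y ^ 2) := by gcongr
    _ = (9 / 2 * x + 9 / 8 * x ^ 3 + (1 / 8 + 1 / 1000)) / y ^ 2 := by
        rw [hx]; field_simp; ring
    _ < (1 / 3 - 1 / 8 * x ^ 2 - 1 / 48 * x ^ 4) / y ^ 2 := by
        gcongr
        linarith
    _ = _ := by rw [hx]; field_simp; ring

section Quadratic

variable {f : ℕ →*₀ ℝ} {q : ℕ} {Q : ℝ}

theorem lambert_main_le_error_of_forall_prime_ne_one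
    (hf : ∀ n, f n = -1 ∨ f n = 0 ∨ f n = 1) (hq : q ≠ 0) (hf0 : ∀ p : ℕ, p.Prime → f p = 0 → p ∣ q)
    (hQ : ∀ n, |∑ i ∈ range n, f i| ≤ Q) {M N : ℕ} (hMN : M ^ 2 ≤ N)
    (hne : ∀ p : ℕ, p.Prime → p ≤ N → f p ≠ 1) {δ ε : ℝ} (hδ : 0 < δ) (hδε : δ ≤ ε) (hε : ε ≤ 1) :
    ε * (M - ε * (M * (M + 1) * (2 * M + 1) / 6)) ≤
      3 * (√√(q : ℝ) * √δ) + Q * (ε + δ) + 2 * (N * (1 - δ) ^ N) := by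
  have habs : ∀ n, |f n| ≤ 1 := fun n => by obtain h | h | h := hf n <;> simp [h]
  have hsign : ∀ p : ℕ, p.Prime → f p = -1 ∨ 0 ≤ f p := fun p _ =>
    (hf p).imp_right fun h => by obtain h | h := h <;> simp [h]
  have hsquares : M - ε * (M * (M + 1) * (2 * M + 1) / 6) ≤ lambertSum f N (1 - ε) :=
    (natCast_sub_le_sum_one_sub_pow_sq hε M).trans
      (sum_pow_sq_le_lambertSum hsign hMN (by linarith))
  have hsparse : lambertSum f N (1 - δ) ≤ 3 * √√(q : ℝ) / √δ :=
    (lambertSum_le_sum_divisors hq (fun p hp hpN => by simpa [hne p hp hpN] using hf p) hf0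
      (by linarith)).trans (sum_divisors_sum_pow_mul_sq_le q N hδ (hδε.trans hε))
  have hcompare := one_sub_mul_lambertSum_le habs hQ (s := 1 - ε) (t := 1 - δ) (by linarith)
    (by linarith) (by linarith) N
  simp only [sub_sub_cancel] at hcompare
  calc ε * (M - ε * (M * (M + 1) * (2 * M + 1) / 6)) ≤ ε * lambertSum f N (1 - ε) :=
        mul_le_mul_of_nonneg_left hsquares (hδ.le.trans hδε)
    _ ≤ δ * lambertSum f N (1 - δ) + Q * (ε + δ) + 2 * (N * (1 - δ) ^ N) := hcompare
    _ ≤ δ * (3 * √√(q : ℝ) / √δ) + Q * (ε + δ) + 2 * (N * (1 - δ) ^ N) := by gcongr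
    _ = _ := by
        congr 2
        rw [mul_div_assoc', mul_comm, mul_div_assoc, Real.div_sqrt, mul_assoc]

theorem exists_prime_le_pow_four_map_eq_one (hf : ∀ n, f n = -1 ∨ f n = 0 ∨ f n = 1) (hq : 576 ≤ q)
    (hf0 : ∀ p : ℕ, p.Prime → f p = 0 → p ∣ q) (hQ : ∀ n, |∑ i ∈ range n, f i| ≤ q / 2) :
    ∃ p : ℕ, p.Prime ∧ p ≤ q ^ 4 ∧ f p = 1 := by
  by_contra! hne
  obtain ⟨y, hy0, hyq⟩ : ∃ y : ℝ, 0 ≤ y ∧ y ^ 2 = q :=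
    ⟨√q, Real.sqrt_nonneg _, Real.sq_sqrt q.cast_nonneg⟩
  have hy : 24 ≤ y := by
    refine le_of_sq_le_sq ?_ hy0
    rw [hyq]
    exact_mod_cast hq
  -- With `ε = 1 / (4 q ^ 2)` the squares up to `4 q ^ 2` contribute `≍ 1 / q`. Taking
  -- `δ = 9 / (4 q ^ (7 / 2))` makes the competing term `o(1 / q)` and keeps `δ N ≍ √q`, so that the
  -- truncation is harmless.
  have hMN : (2 * q) ^ 2 ≤ q ^ 4 := by nlinarith [Nat.pow_le_pow_left hq 2]
  have hδε : 9 / 4 / y ^ 7 ≤ 1 / 4 / y ^ 4 := by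
    rw [div_le_div_iff₀ (by positivity) (by positivity)]
    have : (24 : ℝ) ^ 3 ≤ y ^ 3 := by gcongr
    nlinarith [pow_nonneg hy0 4]
  have hε : 1 / 4 / y ^ 4 ≤ 1 := by
    rw [div_le_one (by positivity)]
    exact (by norm_num : (1 / 4 : ℝ) ≤ 24 ^ 4).trans (by gcongr)
  have hle := lambert_main_le_error_of_forall_prime_ne_one hf (by omega) hf0 hQ hMN hne
    (by positivity) hδε hε
  have hlt := lambert_error_lt_main hy (N := q ^ 4) (by push_cast [← hyq]; ring)
  rw [← hyq, Real.sqrt_sq hy0] at hle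
  push_cast [← hyq] at hle hlt
  exact hle.not_gt hlt

end Quadratic

/-! ### Dirichlet characters and small moduli -/

theorem abs_sum_range_le_half_of_periodic {c : ℕ → ℝ} {q : ℕ} (hq : 0 < q)
    (hc : Function.Periodic c q) (hc1 : ∀ n, |c n| ≤ 1) (h0 : ∑ i ∈ range q, c i = 0) (N : ℕ) :
    |∑ i ∈ range N, c i| ≤ q / 2 := by
  have hperiodic : Function.Periodic (fun N => ∑ i ∈ range N, c i) q := fun m => by
    simp only [Nat.add_comm m q, sum_range_add, h0, zero_add]
    exact sum_congr rfl fun i _ => by rw [add_comm, hc i]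
  have hbound : ∀ s : Finset ℕ, |∑ i ∈ s, c i| ≤ #s := fun s => by
    simpa using (abs_sum_le_sum_abs c s).trans (sum_le_sum fun i _ => hc1 i)
  have hlt : N % q < q := Nat.mod_lt N hq
  have hhead := hbound (range (N % q))
  have htail := hbound (Ico (N % q) q)
  rw [card_range] at hhead
  rw [Nat.card_Ico, Nat.cast_sub hlt.le, sum_Ico_eq_sub c hlt.le, h0, zero_sub, abs_neg] at htail
  rw [← hperiodic.map_mod_nat N]
  linarith

theorem sum_range_dirichletCharacter_eq_zero {R : Type*} [CommRing R] [IsDomain R] {q : ℕ}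
    {χ : DirichletCharacter R q} (hχ : χ ≠ 1) : ∑ i ∈ range q, χ i = 0 := by
  cases q with
  | zero => simp
  | succ q =>
    rw [← MulChar.sum_eq_zero_of_ne_one hχ, sum_range]
    exact Fintype.sum_congr _ _ fun i => congrArg χ (Fin.cast_val_eq_self i)

theorem dvd_of_dirichletCharacter_eq_zero {R : Type*} [CommRing R] [Nontrivial R] {q p : ℕ}
    (hp : p.Prime) {χ : DirichletCharacter R q} (h : χ p = 0) : p ∣ q := by
  by_contra hpq
  have hunit : IsUnit (p : ZMod q) := (ZMod.isUnit_iff_coprime p q).2 (hp.coprime_iff_not_dvd.2 hpq)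
  exact (hunit.map χ).ne_zero h

theorem prime_iff_coprime_factorial_sqrt {n : ℕ} (hn : 2 ≤ n) :
    n.Prime ↔ n.Coprime (Nat.factorial n.sqrt) := by
  rw [Nat.coprime_factorial_iff (by omega), Nat.sqrt_lt']
  refine ⟨fun h => ?_, fun h => ?_⟩
  · rw [h.minFac_eq]
    exact lt_self_pow₀ h.one_lt one_lt_two
  · by_contra hp
    exact h.not_ge (Nat.minFac_sq_le_self (by omega) hp)

theorem exists_prime_le_pow_four_modEq_one {q : ℕ} (h3 : 3 ≤ q) (hq : q < 576) :
    ∃ p : ℕ, p.Prime ∧ p ≤ q ^ 4 ∧ p ≡ 1 [MOD q] := by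
  have hcheck : ∀ q < 576, 3 ≤ q → ∃ k < 63, (k + 1) * q + 1 ≤ q ^ 4 ∧
      Nat.gcd ((k + 1) * q + 1) (Nat.factorial ((k + 1) * q + 1).sqrt) = 1 := by
    decide +kernel
  obtain ⟨k, -, hle, hcoprime⟩ := hcheck q hq h3
  refine ⟨(k + 1) * q + 1, (prime_iff_coprime_factorial_sqrt ?_).2 hcoprime, hle, ?_⟩
  · nlinarith
  · simp [Nat.ModEq]

theorem stmt_13 (q : ℕ) (hq : 3 ≤ q) (χ : DirichletCharacter ℝ q) (hχ : χ ≠ 1)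
    (hquad : ∀ n : ℕ, χ n = -1 ∨ χ n = 0 ∨ χ n = 1) :
    ∃ p : ℕ, p.Prime ∧ p ≤ q ^ 4 ∧ χ p = 1 := by
  obtain hlt | hge := lt_or_ge q 576
  · obtain ⟨p, hp, hle, hmod⟩ := exists_prime_le_pow_four_modEq_one hq hlt
    refine ⟨p, hp, hle, ?_⟩
    rw [(ZMod.natCast_eq_natCast_iff p 1 q).2 hmod, Nat.cast_one, map_one]
  · have : Fact (1 < q) := ⟨by omega⟩
    have hperiodic : Function.Periodic (fun n : ℕ => χ n) q := fun n => by simp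
    have habs : ∀ n : ℕ, |χ n| ≤ 1 := fun n => by obtain h | h | h := hquad n <;> simp [h]
    exact exists_prime_le_pow_four_map_eq_one
      (f := χ.toMonoidWithZeroHom.comp (Nat.castRingHom (ZMod q)).toMonoidWithZeroHom)
      hquad hge (fun p hp => dvd_of_dirichletCharacter_eq_zero hp)
      (abs_sum_range_le_half_of_periodic (by omega) hperiodic habs
        (sum_range_dirichletCharacter_eq_zero hχ))
end

section
/- Let x ≥ 10^16 and let q be a positive integer with q ≤ x^{1/16}. Then for every residue class a modulo q with gcd(a,q) = 1, there exist primes p₁, p₂, p₃ (not necessarily distinct), each at most x^{1/3}, such that p₁p₂p₃ ≡ a (mod q). -/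
/-!
Put `X ≈ x ^ (1 / 3)` and let `A` be the set of classes of `(ZMod q)ˣ` containing a prime up to `X`.

If a subset `A` of a finite group `G` has density more than `2 / 5` but `A * A * A ≠ G`, then
`A * A` misses a translate of `A⁻¹`. Hence `A * A` has fewer than `3 / 2 * #A` elements, which
forces `A` into a coset of a subgroup of index two.

The density of `A` exceeds `2 / 5` because of two estimates for the primes weighted by the trapezoid
`(N - 2 * n)⁺ - (N - 5 * n)⁺` with `N = 2 * X`: a lower bound by Chebyshev's method for all primes,
and an upper bound by Selberg's sieve for the primes in a single class.

It remains to see that `A` is contained neither in a subgroup `H` of index two nor in its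
complement. The primes up to `q` generate the group, hence one of them lies outside `H`. On the
other hand `H` is the kernel of a quadratic character, which by quadratic reciprocity is the
Legendre symbol of some positive or negative divisor `d` of `q`. Then a prime factor of a suitable
`m ^ 2 - d` lies in `H`.

For `q < 1000` these estimates are not available, but every invertible class contains a prime below
`2 ^ 17`, which is a finite computation.
-/

open Finset
open scoped Pointwise ArithmeticFunction.vonMangoldt ArithmeticFunction.Moebius

/-! ### Triple products of dense sets -/

section Density

variable {G : Type*} [Group G]

theorem card_add_card_le_of_notMem_mul [Fintype G] [DecidableEq G] {A B : Finset G} {x : G}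
    (hx : x ∉ A * B) : #A + #B ≤ Fintype.card G := by
  have hdisj : Disjoint A (x • B⁻¹) := by
    rw [Finset.disjoint_left]
    intro a ha hax
    obtain ⟨c, hc, rfl⟩ := mem_smul_finset.1 hax
    exact hx (mem_mul.2 ⟨_, ha, c⁻¹, mem_inv'.1 hc, by simp⟩)
  calc #A + #B = #(A ∪ x • B⁻¹) := by
        rw [card_union_of_disjoint hdisj, card_smul_finset, card_inv]
    _ ≤ Fintype.card G := card_le_univ _

theorem forall_mem_or_forall_notMem_of_subset_smul {H : Subgroup G} {A : Set G} {a : G}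
    (hA : A ⊆ a • (H : Set G)) : (∀ b ∈ A, b ∈ H) ∨ ∀ b ∈ A, b ∉ H := by
  have hmem : ∀ b ∈ A, a⁻¹ * b ∈ H := fun b hb => (Set.mem_smul_set_iff_inv_smul_mem).1 (hA hb)
  by_cases ha : a ∈ H
  · exact Or.inl fun b hb => by simpa using H.mul_mem ha (hmem b hb)
  · refine Or.inr fun b hb hbH => ha ?_
    simpa using H.mul_mem hbH (H.inv_mem (hmem b hb))

theorem exists_subset_smul_of_card_mul_lt [DecidableEq G] {A : Finset G} (hA : A.Nonempty)
    (h : 2 * #(A * A) < 3 * #A) :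
    ∃ (H : Subgroup G) (a : G),
      (A : Set G) ⊆ a • (H : Set G) ∧ #A ≤ Nat.card H ∧ 2 * Nat.card H < 3 * #A := by
  have hdoubling : (#(A * A) : ℚ) < 3 / 2 * #A := by
    have : (2 : ℚ) * #(A * A) < 3 * #A := by exact_mod_cast h
    linarith
  obtain ⟨a, ha⟩ := hA
  obtain ⟨H, _, hcard, hsub⟩ := Finset.doubling_lt_three_halves hdoubling
  have hcoset : (A : Set G) ⊆ a • (H : Set G) := (hsub a ha).1
  have hcardH : Nat.card (a • (H : Set G) : Set G) = Nat.card H :=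
    Set.natCard_smul_set a (H : Set G)
  refine ⟨H, a, hcoset, ?_, ?_⟩
  · rw [← hcardH, ← Nat.card_eq_finsetCard]
    exact Nat.card_mono ((H : Set G).toFinite.smul_set) hcoset
  · rw [Nat.card_eq_fintype_card]
    have : (2 : ℚ) * Fintype.card H < 3 * #A := by linarith
    exact_mod_cast this

theorem exists_index_eq_two_of_mul_mul_ne_univ [Fintype G] [DecidableEq G] {A : Finset G}
    (hA : 2 * Fintype.card G < 5 * #A) (h : A * A * A ≠ univ) :
    ∃ H : Subgroup G, H.index = 2 ∧ ((∀ b ∈ A, b ∈ H) ∨ ∀ b ∈ A, b ∉ H) := by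
  obtain ⟨g, hg⟩ : ∃ g, g ∉ A * A * A := by simpa [eq_univ_iff_forall] using h
  have hAA : #(A * A) + #A ≤ Fintype.card G := card_add_card_le_of_notMem_mul hg
  have hne : A.Nonempty := by rw [← card_pos]; omega
  obtain ⟨H, a, hsub, hle, hlt⟩ := exists_subset_smul_of_card_mul_lt hne (by omega)
  have hindex : Nat.card H * H.index = Fintype.card G := by
    rw [Subgroup.card_mul_index, Nat.card_eq_fintype_card]
  have hA2 : 2 * #A ≤ Fintype.card G := by
    have : #A ≤ #(A * A) := card_le_card_mul_left hne
    omega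
  have hindex0 : H.index ≠ 0 := fun h0 => by rw [h0] at hindex; omega
  have hindex1 : H.index ≠ 1 := fun h1 => by rw [h1] at hindex; omega
  have hindex3 : H.index < 3 := by
    by_contra! h3
    have := Nat.mul_le_mul_left (Nat.card H) h3
    omega
  exact ⟨H, by omega, forall_mem_or_forall_notMem_of_subset_smul hsub⟩

end Density

/-! ### Quadratic characters as Legendre symbols -/

/-- The quadratic character `χ` of `(ZMod q)ˣ` is given by the Legendre symbols `(d / p)` at all odd
primes `p` not dividing `q`. -/
def IsLegendre (q : ℕ) (χ : (ZMod q)ˣ →* ℤˣ) (d : ℤ) : Prop :=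
  ∀ (p : ℕ) [Fact p.Prime] (hp : p.Coprime q), p ≠ 2 →
    (χ (ZMod.unitOfCoprime p hp) : ℤ) = legendreSym p d

theorem isLegendre_one_one (q : ℕ) : IsLegendre q 1 1 := fun p _ _ _ => by
  rw [legendreSym.at_one, MonoidHom.one_apply, Units.val_one]

theorem exists_two_pow_dvd_sq_sub (k : ℕ) {n : ℤ} (hn : 8 ∣ n - 1) :
    ∃ y : ℤ, 2 ^ k ∣ y ^ 2 - n := by
  suffices h : ∃ y : ℤ, Odd y ∧ 2 ^ (k + 3) ∣ y ^ 2 - n by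
    obtain ⟨y, -, hy⟩ := h
    exact ⟨y, (pow_dvd_pow 2 (by omega)).trans hy⟩
  induction k with
  | zero => exact ⟨1, odd_one, by rw [← dvd_neg]; norm_num; simpa using hn⟩
  | succ k ih =>
    obtain ⟨y, hy, c, hc⟩ := ih
    rcases Int.even_or_odd' c with ⟨e, rfl | rfl⟩
    · exact ⟨y, hy, e, by rw [hc]; ring⟩
    · obtain ⟨s, rfl⟩ := hy
      refine ⟨2 * s + 1 + 2 ^ (k + 2), ?_, e + s + 1 + 2 ^ k, by linear_combination hc⟩
      exact ⟨s + 2 ^ (k + 1), by ring⟩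

section TwoPow

variable {k : ℕ} (χ : (ZMod (2 ^ k))ˣ →* ℤˣ)

theorem map_unitOfCoprime_eq_of_modEq_eight {m n : ℕ} (hm : m.Coprime (2 ^ k))
    (hn : n.Coprime (2 ^ k)) (hodd : Odd n) (h : m ≡ n [MOD 8]) :
    χ (ZMod.unitOfCoprime m hm) = χ (ZMod.unitOfCoprime n hn) := by
  have h8 : (8 : ℤ) ∣ m * n - 1 := by
    have hmn : (8 : ℤ) ∣ m - n := (Int.natCast_modEq_iff.2 h.symm).dvd
    have hn1 : (8 : ℤ) ∣ (n : ℤ) ^ 2 - 1 := Int.eight_dvd_sq_sub_one_of_odd (by exact_mod_cast hodd)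
    have := (hmn.mul_right (n : ℤ)).add hn1
    rwa [show ((m : ℤ) - n) * n + (n ^ 2 - 1) = m * n - 1 by ring] at this
  obtain ⟨y, hy⟩ := exists_two_pow_dvd_sq_sub k h8
  have hsq : (y : ZMod (2 ^ k)) ^ 2 = m * n := by
    have := (ZMod.intCast_zmod_eq_zero_iff_dvd (y ^ 2 - m * n) (2 ^ k)).2 (by exact_mod_cast hy)
    push_cast at this
    exact sub_eq_zero.1 this
  obtain ⟨u, hu⟩ : IsUnit (y : ZMod (2 ^ k)) := by
    rw [← isUnit_pow_iff two_ne_zero, hsq]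
    exact (ZMod.unitOfCoprime m hm).isUnit.mul (ZMod.unitOfCoprime n hn).isUnit
  have hu2 : u ^ 2 = ZMod.unitOfCoprime m hm * ZMod.unitOfCoprime n hn :=
    Units.ext (by simp [hu, hsq])
  have hχ := congrArg χ hu2
  rw [map_pow, map_mul, Int.units_sq, eq_comm, mul_eq_one_iff_eq_inv] at hχ
  rw [hχ, Int.units_inv_eq_self]

theorem coe_map_unitOfCoprime_eq_of_eq_at_three_five (ψ : ZMod 8 →* ℤ)
    (h3 : ∀ hk : Nat.Coprime 3 (2 ^ k), (χ (ZMod.unitOfCoprime 3 hk) : ℤ) = ψ 3)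
    (h5 : ∀ hk : Nat.Coprime 5 (2 ^ k), (χ (ZMod.unitOfCoprime 5 hk) : ℤ) = ψ 5)
    {n : ℕ} (hn : n.Coprime (2 ^ k)) (hodd : Odd n) :
    (χ (ZMod.unitOfCoprime n hn) : ℤ) = ψ n := by
  have hcop : ∀ {m : ℕ}, Odd m → m.Coprime (2 ^ k) := fun hm =>
    (Nat.coprime_two_right.2 hm).pow_right k
  have hreduce : ∀ {m : ℕ} (hm : Odd m), n ≡ m [MOD 8] →
      (χ (ZMod.unitOfCoprime m (hcop hm)) : ℤ) = ψ m →
      (χ (ZMod.unitOfCoprime n hn) : ℤ) = ψ n := by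
    intro m hm hnm hψ
    rw [map_unitOfCoprime_eq_of_modEq_eight χ hn (hcop hm) hm hnm, hψ,
      (ZMod.natCast_eq_natCast_iff n m 8).2 hnm]
  have hn2 : n % 2 = 1 := Nat.odd_iff.1 hodd
  have hn8 : n % 8 = 1 ∨ n % 8 = 3 ∨ n % 8 = 5 ∨ n % 8 = 7 := by omega
  rcases hn8 with h | h | h | h
  · refine hreduce odd_one h ?_
    have : ZMod.unitOfCoprime 1 (hcop odd_one) = 1 := Units.ext (by simp)
    simp [this]
  · exact hreduce (m := 3) (by decide) h (h3 _)
  · exact hreduce (m := 5) (by decide) h (h5 _)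
  · refine hreduce (m := 3 * 5) (by decide) (by rw [Nat.ModEq, h]) ?_
    have : ZMod.unitOfCoprime (3 * 5) (hcop (by decide)) =
        ZMod.unitOfCoprime 3 (hcop (by decide)) * ZMod.unitOfCoprime 5 (hcop (by decide)) :=
      Units.ext (by simp only [ZMod.coe_unitOfCoprime, Nat.cast_mul, Units.val_mul])
    rw [this, map_mul, Units.val_mul, h3, h5, ← map_mul, Nat.cast_mul]
    rfl

theorem exists_isLegendre_two_pow (hk : k ≠ 0) :
    ∃ d : ℤ, d ∣ (2 ^ k : ℕ) ∧ IsLegendre (2 ^ k) χ d := by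
  have htwo : (2 : ℤ) ∣ (2 ^ k : ℕ) := by exact_mod_cast dvd_pow_self 2 hk
  have hodd : ∀ {p : ℕ} [Fact p.Prime], p ≠ 2 → Odd p := fun {p} hp hp2 =>
    hp.out.odd_of_ne_two hp2
  have h3 : Nat.Coprime 3 (2 ^ k) := Nat.Coprime.pow_right _ (by norm_num)
  have h5 : Nat.Coprime 5 (2 ^ k) := Nat.Coprime.pow_right _ (by norm_num)
  have hψ := coe_map_unitOfCoprime_eq_of_eq_at_three_five χ
  rcases Int.units_eq_one_or (χ (ZMod.unitOfCoprime 3 h3)) with c3 | c3 <;>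
  rcases Int.units_eq_one_or (χ (ZMod.unitOfCoprime 5 h5)) with c5 | c5
  · refine ⟨1, one_dvd _, fun p _ hp hp2 => ?_⟩
    rw [legendreSym.at_one]
    exact hψ 1 (fun _ => by simp [c3]) (fun _ => by simp [c5]) hp (hodd hp2)
  · refine ⟨-2, neg_dvd.2 htwo, fun p _ hp hp2 => ?_⟩
    rw [legendreSym.at_neg_two hp2]
    exact hψ ZMod.χ₈'.toMonoidHom (fun _ => by rw [c3]; rfl) (fun _ => by rw [c5]; rfl) hp
      (hodd hp2)
  · refine ⟨-1, neg_dvd.2 (one_dvd _), fun p _ hp hp2 => ?_⟩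
    rw [legendreSym.at_neg_one hp2]
    have h48 : 4 ∣ 8 := by norm_num
    have := hψ (ZMod.χ₄.toMonoidHom.comp (ZMod.castHom h48 (ZMod 4)).toMonoidHom)
      (fun _ => by rw [c3]; rfl) (fun _ => by rw [c5]; rfl) hp (hodd hp2)
    simpa using this
  · refine ⟨2, htwo, fun p _ hp hp2 => ?_⟩
    rw [legendreSym.at_two hp2]
    exact hψ ZMod.χ₈.toMonoidHom (fun _ => by rw [c3]; rfl) (fun _ => by rw [c5]; rfl) hp
      (hodd hp2)

end TwoPow

theorem monoidHom_units_int_eq_of_isCyclic {G : Type*} [Group G] [IsCyclic G]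
    {f g : G →* ℤˣ} (hf : f ≠ 1) (hg : g ≠ 1) : f = g := by
  obtain ⟨c, hc⟩ := IsCyclic.exists_generator (α := G)
  have hneg : ∀ φ : G →* ℤˣ, φ ≠ 1 → φ c = -1 := by
    refine fun φ hφ => (Int.units_eq_one_or (φ c)).resolve_left fun h => hφ ?_
    ext u
    obtain ⟨n, rfl⟩ := hc u
    simp [h]
  ext u
  obtain ⟨n, rfl⟩ := hc u
  simp [hneg f hf, hneg g hg]

/-- The quadratic residue symbol modulo a prime divisor `r` of `q`, as a character of
`(ZMod q)ˣ`. -/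
def residueSymbol {q r : ℕ} [Fact r.Prime] (h : r ∣ q) : (ZMod q)ˣ →* ℤˣ :=
  (Units.map (quadraticChar (ZMod r)).toMonoidHom).comp (ZMod.unitsMap h)

section ResidueSymbol

variable {q r : ℕ} [Fact r.Prime] (h : r ∣ q)

theorem residueSymbol_ne_one [NeZero q] (hr : r ≠ 2) : residueSymbol h ≠ 1 := by
  intro h1
  obtain ⟨a, ha⟩ := quadraticChar_exists_neg_one' (F := ZMod r) (by rwa [ZMod.ringChar_zmod_n])
  obtain ⟨b, hb⟩ := ZMod.unitsMap_surjective h a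
  have := congrArg (fun f : (ZMod q)ˣ →* ℤˣ => (f b : ℤ)) h1
  simp [residueSymbol, hb, ha] at this

theorem isLegendre_residueSymbol (hr : r ≠ 2) :
    IsLegendre q (residueSymbol h) (ZMod.χ₄ r * r) := by
  intro p _ hp hp2
  have hrp : r ≠ p := by
    rintro rfl
    exact (Fact.out : r.Prime).one_lt.ne' (Nat.eq_one_of_dvd_coprimes hp dvd_rfl h)
  have hrec := quadraticChar_odd_prime (F := ZMod r) (by rwa [ZMod.ringChar_zmod_n]) hp2
    (by rwa [ZMod.ringChar_zmod_n])
  rw [ZMod.card] at hrec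
  rw [legendreSym]
  push_cast
  rw [← hrec]
  simp [residueSymbol, ZMod.unitsMap, ZMod.coe_unitOfCoprime]

end ResidueSymbol

theorem chi_four_mul_self_dvd {r : ℕ} (hr : Odd r) : ZMod.χ₄ r * r ∣ (r : ℤ) := by
  rcases Nat.odd_mod_four_iff.1 (Nat.odd_iff.1 hr) with h | h
  · rw [ZMod.χ₄_nat_one_mod_four h, one_mul]
  · rw [ZMod.χ₄_nat_three_mod_four h, neg_one_mul, neg_dvd]

theorem exists_isLegendre_odd_prime_pow {r k : ℕ} (hr : r.Prime) (hr2 : r ≠ 2) (hk : k ≠ 0)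
    (χ : (ZMod (r ^ k))ˣ →* ℤˣ) : ∃ d : ℤ, d ∣ (r ^ k : ℕ) ∧ IsLegendre (r ^ k) χ d := by
  have := Fact.mk hr
  have : NeZero (r ^ k) := ⟨pow_ne_zero _ hr.ne_zero⟩
  have := ZMod.isCyclic_units_of_prime_pow r hr hr2 k
  have hdvd : r ∣ r ^ k := dvd_pow_self r hk
  by_cases hχ : χ = 1
  · exact ⟨1, one_dvd _, hχ ▸ isLegendre_one_one _⟩
  · rw [monoidHom_units_int_eq_of_isCyclic hχ (residueSymbol_ne_one hdvd hr2)]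
    exact ⟨ZMod.χ₄ r * r,
      (chi_four_mul_self_dvd (hr.odd_of_ne_two hr2)).trans (Int.natCast_dvd_natCast.2 hdvd),
      isLegendre_residueSymbol hdvd hr2⟩

theorem exists_isLegendre_mul {a b : ℕ} (hab : a.Coprime b)
    (ha : ∀ χ : (ZMod a)ˣ →* ℤˣ, ∃ d : ℤ, d ∣ a ∧ IsLegendre a χ d)
    (hb : ∀ χ : (ZMod b)ˣ →* ℤˣ, ∃ d : ℤ, d ∣ b ∧ IsLegendre b χ d)
    (χ : (ZMod (a * b))ˣ →* ℤˣ) : ∃ d : ℤ, d ∣ (a * b : ℕ) ∧ IsLegendre (a * b) χ d := by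
  let e : (ZMod (a * b))ˣ ≃* (ZMod a)ˣ × (ZMod b)ˣ :=
    (Units.mapEquiv (ZMod.chineseRemainder hab).toMulEquiv).trans MulEquiv.prodUnits
  let χ' : (ZMod a)ˣ × (ZMod b)ˣ →* ℤˣ := χ.comp e.symm.toMonoidHom
  obtain ⟨d₁, hd₁, h₁⟩ := ha (χ'.comp (MonoidHom.inl _ _))
  obtain ⟨d₂, hd₂, h₂⟩ := hb (χ'.comp (MonoidHom.inr _ _))
  refine ⟨d₁ * d₂, by rw [Nat.cast_mul]; exact mul_dvd_mul hd₁ hd₂, fun p _ hp hp2 => ?_⟩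
  have hpa : p.Coprime a := hp.coprime_mul_right_right
  have hpb : p.Coprime b := hp.coprime_mul_left_right
  have he : ZMod.unitOfCoprime p hp = e.symm ((MonoidHom.inl _ _) (ZMod.unitOfCoprime p hpa) *
      (MonoidHom.inr _ _) (ZMod.unitOfCoprime p hpb)) := by
    rw [MulEquiv.eq_symm_apply]
    ext <;> simp [e, MulEquiv.prodUnits]
  rw [legendreSym.mul, ← h₁ p hpa hp2, ← h₂ p hpb hp2, ← Units.val_mul, he]
  simp only [MonoidHom.comp_apply, ← map_mul]
  rfl

theorem exists_isLegendre {q : ℕ} (hq : q ≠ 0) (χ : (ZMod q)ˣ →* ℤˣ) :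
    ∃ d : ℤ, d ∣ q ∧ IsLegendre q χ d := by
  induction q using Nat.recOnPosPrimePosCoprime with
  | zero => exact absurd rfl hq
  | one => exact ⟨1, one_dvd _, Subsingleton.elim χ 1 ▸ isLegendre_one_one 1⟩
  | prime_pow r k hr hk =>
    rcases eq_or_ne r 2 with rfl | hr2
    · exact exists_isLegendre_two_pow χ hk.ne'
    · exact exists_isLegendre_odd_prime_pow hr hr2 hk.ne' χ
  | coprime a b ha hb hab iha ihb =>
    exact exists_isLegendre_mul hab (iha (by omega)) (ihb (by omega)) χ

/-! ### Small primes inside and outside a subgroup of index two -/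

theorem exists_monoidHom_eq_one_iff_mem_of_index_eq_two {G : Type*} [Group G] {H : Subgroup G}
    (hH : H.index = 2) : ∃ χ : G →* ℤˣ, ∀ u, χ u = 1 ↔ u ∈ H := by
  classical
  refine ⟨{ toFun := fun u => if u ∈ H then 1 else -1
            map_one' := if_pos H.one_mem
            map_mul' := fun u v => ?_ }, fun u => ?_⟩
  · by_cases hu : u ∈ H <;> by_cases hv : v ∈ H <;>
      simp [Subgroup.mul_mem_iff_of_index_two hH, hu, hv]
  · by_cases hu : u ∈ H <;> simp [hu]

theorem exists_prime_dvd_iff_not_dvd (d : ℤ) {n : ℕ} (hn : n ≠ 0) :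
    ∃ m : ℕ, 1 + d.natAbs ≤ m ∧ m ≤ n * (1 + d.natAbs) ∧
      ∀ p : ℕ, p.Prime → p ∣ n → (p ∣ m ↔ ¬(p : ℤ) ∣ d) := by
  classical
  let s : ℕ := ∏ r ∈ n.primeFactors.filter (fun r : ℕ => ¬(r : ℤ) ∣ d), r
  have hs : s ∣ n :=
    (prod_dvd_prod_of_subset _ _ _ (filter_subset _ _)).trans (Nat.prod_primeFactors_dvd n)
  refine ⟨s * (1 + d.natAbs), Nat.le_mul_of_pos_left _ (Nat.pos_of_dvd_of_pos hs (by omega)),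
    Nat.mul_le_mul_right _ (Nat.le_of_dvd (by omega) hs), fun p hp hpn => ⟨fun hpm hpd => ?_,
      fun hpd => ?_⟩⟩
  · rcases hp.dvd_mul.1 hpm with hps | hpd1
    · obtain ⟨r, hr, hpr⟩ := (Prime.dvd_finsetProd_iff hp.prime _).1 hps
      obtain ⟨hrn, hrd⟩ := mem_filter.1 hr
      rw [(Nat.prime_dvd_prime_iff_eq hp (Nat.prime_of_mem_primeFactors hrn)).1 hpr] at hpd
      exact hrd hpd
    · exact hp.one_lt.ne' (Nat.dvd_one.1 ((Nat.dvd_add_left (Int.natCast_dvd.1 hpd)).1 hpd1))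
  · exact (dvd_prod_of_mem _ (mem_filter.2 ⟨Nat.mem_primeFactors.2 ⟨hp, hpn, hn⟩, hpd⟩)).mul_right _

theorem not_prime_dvd_sq_sub {p m : ℕ} {d : ℤ} (hp : p.Prime) (h : p ∣ m ↔ ¬(p : ℤ) ∣ d) :
    ¬(p : ℤ) ∣ (m : ℤ) ^ 2 - d := by
  intro hdvd
  have hiff : (p : ℤ) ∣ (m : ℤ) ^ 2 ↔ (p : ℤ) ∣ d := dvd_iff_dvd_of_dvd_sub hdvd
  rw [(Nat.prime_iff_prime_int.1 hp).dvd_pow_iff_dvd two_ne_zero, Int.natCast_dvd_natCast] at hiff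
  tauto

theorem legendreSym_eq_one_of_dvd_sq_sub {p : ℕ} [Fact p.Prime] {d m : ℤ} (hd : ¬(p : ℤ) ∣ d)
    (h : (p : ℤ) ∣ m ^ 2 - d) : legendreSym p d = 1 := by
  rw [legendreSym.eq_one_iff p (by rwa [Ne, ZMod.intCast_zmod_eq_zero_iff_dvd])]
  have hsq := (ZMod.intCast_zmod_eq_zero_iff_dvd _ p).2 h
  push_cast at hsq
  exact ⟨m, by rw [← sq]; exact (sub_eq_zero.1 hsq).symm⟩

theorem exists_prime_legendreSym_eq_one {n : ℕ} {d : ℤ} (hn : n ≠ 0) (hd : d ∣ n) :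
    ∃ (p : ℕ) (_ : Fact p.Prime), p ≤ (n * (1 + d.natAbs)) ^ 2 + d.natAbs ∧ ¬p ∣ n ∧
      legendreSym p d = 1 := by
  obtain ⟨m, hm, hmle, hiff⟩ := exists_prime_dvd_iff_not_dvd d hn
  have hd0 : 0 < d.natAbs := Int.natAbs_pos.2 (by rintro rfl; simp_all)
  have hone : 1 < ((m : ℤ) ^ 2 - d).natAbs := by
    zify at hd0 hm ⊢
    refine lt_of_lt_of_le ?_ (le_abs_self _)
    nlinarith [le_abs_self d]
  have hp := Nat.minFac_prime hone.ne'
  have hdvd : ((((m : ℤ) ^ 2 - d).natAbs.minFac : ℕ) : ℤ) ∣ (m : ℤ) ^ 2 - d :=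
    Int.natCast_dvd.2 (Nat.minFac_dvd _)
  have hpn : ¬((m : ℤ) ^ 2 - d).natAbs.minFac ∣ n := fun h =>
    not_prime_dvd_sq_sub hp (hiff _ hp h) hdvd
  have := Fact.mk hp
  refine ⟨_, this, ?_, hpn, legendreSym_eq_one_of_dvd_sq_sub (fun h => hpn ?_) hdvd⟩
  · calc ((m : ℤ) ^ 2 - d).natAbs.minFac ≤ ((m : ℤ) ^ 2 - d).natAbs := Nat.minFac_le (by omega)
      _ ≤ m ^ 2 + d.natAbs := by
        refine (Int.natAbs_sub_le ((m : ℤ) ^ 2) d).trans_eq ?_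
        rw [Int.natAbs_pow, Int.natAbs_natCast]
      _ ≤ (n * (1 + d.natAbs)) ^ 2 + d.natAbs := by gcongr
  · exact Int.natCast_dvd_natCast.1 (h.trans hd)

theorem exists_prime_mem_of_index_eq_two {q : ℕ} (hq : q ≠ 0) {H : Subgroup (ZMod q)ˣ}
    (hH : H.index = 2) : ∃ p : ℕ, p.Prime ∧ p ≤ (2 * q * (1 + q)) ^ 2 + q ∧
      ∃ hp : p.Coprime q, ZMod.unitOfCoprime p hp ∈ H := by
  obtain ⟨χ, hχ⟩ := exists_monoidHom_eq_one_iff_mem_of_index_eq_two hH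
  obtain ⟨d, hdq, hleg⟩ := exists_isLegendre hq χ
  have hdle : d.natAbs ≤ q := Nat.le_of_dvd (by omega) (Int.natAbs_dvd_natAbs.2 hdq)
  obtain ⟨p, hp, hple, hpn, hpd⟩ := exists_prime_legendreSym_eq_one (n := 2 * q) (by omega)
    (hdq.trans (Int.natCast_dvd_natCast.2 (dvd_mul_left q 2)))
  have hpq : p.Coprime q := (hp.out.coprime_iff_not_dvd).2 fun h => hpn (h.mul_left 2)
  have hp2 : p ≠ 2 := fun h => hpn (h ▸ dvd_mul_right 2 q)
  refine ⟨p, hp.out, hple.trans (by gcongr), hpq, (hχ _).1 ?_⟩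
  rw [← Units.val_eq_one, hleg p hpq hp2, hpd]

theorem unitOfCoprime_mem_of_forall_prime_le {q n : ℕ} (hn : n.Coprime q) (hn0 : n ≠ 0)
    {H : Subgroup (ZMod q)ˣ}
    (hH : ∀ p : ℕ, p.Prime → p ≤ n → ∀ hp : p.Coprime q, ZMod.unitOfCoprime p hp ∈ H) :
    ZMod.unitOfCoprime n hn ∈ H := by
  induction n using Nat.recOnMul with
  | zero => exact absurd rfl hn0
  | one =>
    rw [show ZMod.unitOfCoprime 1 hn = 1 from Units.ext (by simp)]
    exact H.one_mem
  | prime p hp => exact hH p hp le_rfl hn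
  | mul a b iha ihb =>
    have ha : a.Coprime q := hn.coprime_mul_right
    have hb : b.Coprime q := hn.coprime_mul_left
    have ha0 : a ≠ 0 := left_ne_zero_of_mul hn0
    have hb0 : b ≠ 0 := right_ne_zero_of_mul hn0
    rw [show ZMod.unitOfCoprime (a * b) hn = ZMod.unitOfCoprime a ha * ZMod.unitOfCoprime b hb from
      Units.ext (by simp)]
    exact H.mul_mem
      (iha ha ha0 fun p hp hpa => hH p hp (hpa.trans (Nat.le_mul_of_pos_right a (by omega))))
      (ihb hb hb0 fun p hp hpb => hH p hp (hpb.trans (Nat.le_mul_of_pos_left b (by omega))))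

theorem exists_prime_notMem_of_ne_top {q : ℕ} [NeZero q] {H : Subgroup (ZMod q)ˣ} (hH : H ≠ ⊤) :
    ∃ p : ℕ, p.Prime ∧ p ≤ q ∧ ∃ hp : p.Coprime q, ZMod.unitOfCoprime p hp ∉ H := by
  by_contra! hall
  refine hH (eq_top_iff.2 fun u _ => ?_)
  have hcop := ZMod.val_coe_unit_coprime u
  have hval0 : (u : ZMod q).val ≠ 0 := fun h0 => by
    rw [h0, Nat.coprime_zero_left] at hcop
    subst hcop
    exact hH (Subsingleton.elim _ _)
  have hmem := unitOfCoprime_mem_of_forall_prime_le hcop hval0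
    fun p hp hple hpq => hall p hp (hple.trans (ZMod.val_lt _).le) hpq
  rwa [show ZMod.unitOfCoprime _ hcop = u from Units.ext (by simp)] at hmem

/-! ### A Chebyshev lower bound -/

theorem sum_vonMangoldt_mul_div_eq_log_factorial {t N : ℕ} (ht : t ≤ N) :
    ∑ n ∈ Ioc 0 N, Λ n * ((t / n : ℕ) : ℝ) = Real.log (t.factorial : ℝ) := by
  have hfactorial : ∑ n ∈ Ioc 0 t, Real.log n = Real.log (t.factorial : ℝ) := by
    rw [← Finset.prod_Ico_id_eq_factorial, Nat.cast_prod, Real.log_prod]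
    · exact sum_congr (by ext; simp only [mem_Ioc, mem_Ico]; omega) fun _ _ => rfl
    · intro n hn
      have := (mem_Ico.1 hn).1
      positivity
  rw [← hfactorial, ← sum_subset (Ioc_subset_Ioc_right ht),
    ← ArithmeticFunction.sum_Ioc_mul_zeta_eq_sum, ArithmeticFunction.vonMangoldt_mul_zeta]
  · rfl
  · intro n hnN hnt
    have : t < n := by simp only [mem_Ioc] at hnN hnt; omega
    rw [Nat.div_eq_of_lt this, Nat.cast_zero, mul_zero]

section SumCompDiv

variable {R : Type*} [CommRing R]

theorem sum_range_mul_add_comp_div (f : ℕ → R) (m : ℕ) {n r : ℕ} (hr : r ≤ n) :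
    ∑ t ∈ range (m * n + r), f (t / n) = n * ∑ j ∈ range m, f j + r * f m := by
  rcases Nat.eq_zero_or_pos n with rfl | hn
  · obtain rfl : r = 0 := by omega
    simp
  have hlast : ∀ m r, r ≤ n → ∑ t ∈ range (m * n + r), f (t / n) =
      ∑ t ∈ range (m * n), f (t / n) + r * f m := by
    intro m r hr
    have hblock : ∀ t ∈ range r, f ((m * n + t) / n) = f m := fun t ht => by
      have := mem_range.1 ht
      rw [add_comm, Nat.add_mul_div_right _ _ hn, Nat.div_eq_of_lt (by omega), zero_add]
    rw [sum_range_add, sum_congr rfl hblock, sum_const, card_range, nsmul_eq_mul]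
  have hblocks : ∀ m, ∑ t ∈ range (m * n), f (t / n) = n * ∑ j ∈ range m, f j := by
    intro m
    induction m with
    | zero => simp
    | succ m ih => rw [Nat.succ_mul, hlast m n le_rfl, ih, sum_range_succ]; ring
  rw [hlast m r hr, hblocks]

theorem sum_range_comp_div_le_sum_range_comp_div [PartialOrder R] [IsOrderedRing R] {f g : ℕ → R}
    (h : ∀ m, ∑ j ∈ range m, f j ≤ ∑ j ∈ range m, g j) (N : ℕ) {n : ℕ} (hn : 0 < n) :
    ∑ t ∈ range N, f (t / n) ≤ ∑ t ∈ range N, g (t / n) := by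
  have hr : N % n ≤ n := (Nat.mod_lt N hn).le
  have hinterpolate : ∀ f : ℕ → R, ∑ t ∈ range N, f (t / n) =
      ((n - N % n : ℕ) : R) * ∑ j ∈ range (N / n), f j +
        ((N % n : ℕ) : R) * ∑ j ∈ range (N / n + 1), f j := by
    intro f
    have := sum_range_mul_add_comp_div f (N / n) hr
    rw [Nat.div_add_mod'] at this
    rw [this, sum_range_succ, Nat.cast_sub hr]
    ring
  rw [hinterpolate f, hinterpolate g]
  exact add_le_add (mul_le_mul_of_nonneg_left (h _) (Nat.cast_nonneg _))
    (mul_le_mul_of_nonneg_left (h _) (Nat.cast_nonneg _))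

end SumCompDiv

theorem log_add_one_eq_and_bounds {y : ℝ} (hy : 0 < y) :
    Real.log (y + 1) = Real.log y + Real.log (1 + 1 / y) ∧
      y * Real.log (1 + 1 / y) ≤ 1 ∧ 1 ≤ (y + 1) * Real.log (1 + 1 / y) := by
  refine ⟨?_, ?_, ?_⟩
  · rw [← Real.log_mul hy.ne' (by positivity)]
    congr 1
    field_simp
  · calc y * Real.log (1 + 1 / y) ≤ y * (1 / y) := by
          gcongr
          linarith [Real.log_le_sub_one_of_pos (show (0 : ℝ) < 1 + 1 / y by positivity)]
      _ = 1 := by field_simp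
  · calc (1 : ℝ) = (y + 1) * (1 - (1 + 1 / y)⁻¹) := by field_simp; ring
      _ ≤ (y + 1) * Real.log (1 + 1 / y) := by
        gcongr
        exact Real.one_sub_inv_le_log_of_pos (by positivity)

theorem log_factorial_mem_Icc {K : ℕ} (hK : 1 ≤ K) :
    Real.log (K.factorial : ℝ) ∈
      Set.Icc (K * Real.log K - K) (K * Real.log K - K + Real.log K + 1) := by
  induction K, hK using Nat.le_induction with
  | base => simp
  | succ K hK ih =>
    obtain ⟨hlog, hle, hge⟩ := log_add_one_eq_and_bounds (show (0 : ℝ) < K by exact_mod_cast hK)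
    rw [Nat.factorial_succ, Nat.cast_mul, Real.log_mul (by positivity) (by positivity)]
    push_cast
    rw [hlog]
    constructor <;> nlinarith [ih.1, ih.2]

theorem abs_sum_log_factorial_sub_le {K : ℕ} (hK : 1 ≤ K) :
    |∑ j ∈ range K, Real.log (j.factorial : ℝ) - (K ^ 2 * Real.log K / 2 - 3 / 4 * K ^ 2)| ≤
      K * (Real.log K + 2) := by
  induction K, hK using Nat.le_induction with
  | base => norm_num
  | succ K hK ih =>
    have hK1 : (1 : ℝ) ≤ K := by exact_mod_cast hK
    obtain ⟨hlog, hle, hge⟩ := log_add_one_eq_and_bounds (show (0 : ℝ) < K by linarith)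
    obtain ⟨hfac₁, hfac₂⟩ := log_factorial_mem_Icc hK
    have hu1 : Real.log (1 + 1 / K) ≤ 1 := by
      nlinarith [Real.log_nonneg (show (1 : ℝ) ≤ 1 + 1 / K by simp)]
    have hL : 0 ≤ Real.log K := Real.log_nonneg hK1
    rw [sum_range_succ]
    push_cast
    rw [hlog]
    set u := Real.log (1 + 1 / (K : ℝ))
    rw [abs_le] at ih ⊢
    have hle' : (K : ℝ) * (K * u) ≤ K * 1 := by gcongr
    have hge' : (K + 1 : ℝ) * 1 ≤ (K + 1) * ((K + 1) * u) := by gcongr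
    constructor <;> nlinarith [ih.1, ih.2]

section DivisorCombination

variable {N : ℕ}

theorem sum_vonMangoldt_mul_sum_div_div {d : ℕ} (hd : d ∣ N) :
    ∑ n ∈ Ioc 0 N, Λ n * ∑ t ∈ range N, ((t / n / d : ℕ) : ℝ) =
      d * ∑ j ∈ range (N / d), Real.log (j.factorial : ℝ) := by
  have hfactorial : ∀ t ∈ range N,
      ∑ n ∈ Ioc 0 N, Λ n * ((t / n / d : ℕ) : ℝ) = Real.log ((t / d).factorial : ℝ) := by
    intro t ht
    rw [← sum_vonMangoldt_mul_div_eq_log_factorial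
      ((Nat.div_le_self t d).trans (mem_range.1 ht).le)]
    simp only [Nat.div_div_eq_div_mul, mul_comm]
  have hblocks := sum_range_mul_add_comp_div (fun j => Real.log (j.factorial : ℝ)) (N / d)
    (Nat.zero_le d)
  rw [add_zero, Nat.div_mul_cancel hd, Nat.cast_zero, zero_mul, add_zero] at hblocks
  simp only [mul_sum]
  rw [sum_comm, sum_congr rfl hfactorial, hblocks, mul_sum]

theorem abs_mul_sum_log_factorial_sub_le (hN : N ≠ 0) {d : ℕ} (hd : d ∣ N) :
    |d * ∑ j ∈ range (N / d), Real.log (j.factorial : ℝ) -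
      ((N : ℝ) ^ 2 / d * (Real.log N - Real.log d) / 2 - 3 / 4 * ((N : ℝ) ^ 2 / d))| ≤
        N * (Real.log N + 2) := by
  obtain ⟨K, rfl⟩ := hd
  have hd0 : 0 < d := Nat.pos_of_ne_zero (left_ne_zero_of_mul hN)
  have hK0 : 0 < K := Nat.pos_of_ne_zero (right_ne_zero_of_mul hN)
  have hd1 : (1 : ℝ) ≤ d := by exact_mod_cast hd0
  have : (1 : ℝ) ≤ K := by exact_mod_cast hK0
  rw [Nat.mul_div_cancel_left K hd0, Nat.cast_mul, Real.log_mul (by positivity) (by positivity)]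
  set τ := ∑ j ∈ range K, Real.log (j.factorial : ℝ)
  have hscale : d * τ - ((d * K : ℝ) ^ 2 / d * (Real.log d + Real.log K - Real.log d) / 2 -
      3 / 4 * ((d * K : ℝ) ^ 2 / d)) = d * (τ - (K ^ 2 * Real.log K / 2 - 3 / 4 * K ^ 2)) := by
    field_simp
    ring
  rw [hscale, abs_mul, abs_of_pos (by positivity : (0 : ℝ) < d)]
  calc d * |τ - (K ^ 2 * Real.log K / 2 - 3 / 4 * K ^ 2)| ≤ d * (K * (Real.log K + 2)) := by
        gcongr
        exact abs_sum_log_factorial_sub_le hK0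
    _ ≤ d * (K * (Real.log d + Real.log K + 2)) := by
        have := Real.log_nonneg hd1
        gcongr
        linarith
    _ = d * K * (Real.log d + Real.log K + 2) := by ring

theorem sub_le_sum_vonMangoldt_mul_sum_div (hN : N ≠ 0) {D : Finset ℕ} (hD : ∀ d ∈ D, d ∣ N)
    {c : ℕ → ℝ} (hc : ∑ d ∈ D, c d / d = 0) :
    -(∑ d ∈ D, c d * Real.log d / d) / 2 * N ^ 2 - (∑ d ∈ D, |c d|) * (N * (Real.log N + 2)) ≤
      ∑ n ∈ Ioc 0 N, Λ n * ∑ t ∈ range N, ∑ d ∈ D, c d * ((t / n / d : ℕ) : ℝ) := by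
  set E : ℕ → ℝ := fun d => d * ∑ j ∈ range (N / d), Real.log (j.factorial : ℝ)
  set F : ℕ → ℝ := fun d =>
    (N : ℝ) ^ 2 / d * (Real.log N - Real.log d) / 2 - 3 / 4 * ((N : ℝ) ^ 2 / d)
  have hE : ∑ n ∈ Ioc 0 N, Λ n * ∑ t ∈ range N, ∑ d ∈ D, c d * ((t / n / d : ℕ) : ℝ) =
      ∑ d ∈ D, c d * E d := by
    have hswap : ∀ n, Λ n * ∑ t ∈ range N, ∑ d ∈ D, c d * ((t / n / d : ℕ) : ℝ) =
        ∑ d ∈ D, c d * (Λ n * ∑ t ∈ range N, ((t / n / d : ℕ) : ℝ)) := fun n => by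
      rw [sum_comm, mul_sum]
      refine sum_congr rfl fun d _ => ?_
      rw [← mul_sum, mul_left_comm]
    rw [sum_congr rfl fun n _ => hswap n, sum_comm]
    refine sum_congr rfl fun d hd => ?_
    rw [← mul_sum, sum_vonMangoldt_mul_sum_div_div (hD d hd)]
  have hF : ∑ d ∈ D, c d * F d = -(∑ d ∈ D, c d * Real.log d / d) / 2 * N ^ 2 := by
    calc ∑ d ∈ D, c d * F d
        = ∑ d ∈ D, ((N : ℝ) ^ 2 * (Real.log N / 2 - 3 / 4) * (c d / d) -
            (N : ℝ) ^ 2 / 2 * (c d * Real.log d / d)) :=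
          sum_congr rfl fun d _ => by simp only [F]; ring
      _ = -(∑ d ∈ D, c d * Real.log d / d) / 2 * N ^ 2 := by
          rw [sum_sub_distrib, ← mul_sum, ← mul_sum, hc]
          ring
  have herror : ∑ d ∈ D, c d * F d - ∑ d ∈ D, c d * E d ≤
      (∑ d ∈ D, |c d|) * (N * (Real.log N + 2)) := by
    rw [← sum_sub_distrib, sum_mul]
    refine sum_le_sum fun d hd => ?_
    calc c d * F d - c d * E d ≤ |c d * (E d - F d)| := by
          rw [← neg_sub, ← mul_sub]; exact neg_le_abs _
      _ ≤ |c d| * (N * (Real.log N + 2)) := by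
          rw [abs_mul]
          gcongr
          exact abs_mul_sum_log_factorial_sub_le hN (hD d hd)
  rw [hE, ← hF]
  linarith

end DivisorCombination

/-- Coefficients `c` on the divisors of `60` with `∑ c d / d = 0`, chosen so that
`-∑ c d * log d / d` is large while `chebFun` stays below the indicator function of `[2, 5)`, up to
the factor `15`, in the mean. -/
def chebCoeff : ℕ → ℤ
  | 2 => 15
  | 4 => -15
  | 5 => -15
  | 6 => -15
  | 12 => 10
  | 15 => 5
  | 20 => 7
  | 30 => 6
  | 60 => 2
  | _ => 0

/-- The periodic step function with coefficients `chebCoeff`, playing the role of Chebyshev's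
`⌊x⌋ - ⌊x / 2⌋ - ⌊x / 3⌋ - ⌊x / 5⌋ + ⌊x / 30⌋`. -/
def chebFun (j : ℕ) : ℤ := ∑ d ∈ Nat.divisors 60, chebCoeff d * (j / d : ℕ)

theorem chebFun_add_sixty (j : ℕ) : chebFun (j + 60) = chebFun j := by
  have hmean : ∑ d ∈ Nat.divisors 60, chebCoeff d * (60 / d : ℕ) = 0 := by decide +kernel
  have hshift : ∀ d ∈ Nat.divisors 60, chebCoeff d * ((j + 60) / d : ℕ) =
      chebCoeff d * (j / d : ℕ) + chebCoeff d * (60 / d : ℕ) := fun d hd => by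
    rw [Nat.add_div_of_dvd_left (Nat.dvd_of_mem_divisors hd), Nat.cast_add, mul_add]
  rw [chebFun, sum_congr rfl hshift, sum_add_distrib, hmean, add_zero, chebFun]

theorem sum_range_chebFun_le (m : ℕ) :
    ∑ j ∈ range m, chebFun j ≤ ∑ j ∈ range m, if j ∈ Ico 2 5 then 15 else 0 := by
  induction m using Nat.strong_induction_on with
  | _ m ih =>
    rcases lt_or_ge m 60 with h | h
    · have hsmall : ∀ m < 60, ∑ j ∈ range m, chebFun j ≤
          ∑ j ∈ range m, if j ∈ Ico 2 5 then 15 else 0 := by decide +kernel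
      exact hsmall m h
    · obtain ⟨k, rfl⟩ := Nat.exists_eq_add_of_le' h
      have hperiod : ∑ j ∈ range (k + 60), chebFun j = ∑ j ∈ range k, chebFun j := by
        have h0 : ∑ j ∈ range 60, chebFun j = 0 := by decide +kernel
        rw [add_comm k, sum_range_add, h0, zero_add]
        simp only [add_comm 60, chebFun_add_sixty]
      rw [hperiod]
      refine (ih k (by omega)).trans (sum_le_sum_of_subset_of_nonneg (by gcongr; omega) ?_)
      intro j _ _
      split_ifs <;> norm_num

/-- The number of `t < N` with `2 * n ≤ t < 5 * n`. As a function of `n` it is a trapezoid supported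
on `n < N / 2`, and a difference of two truncated linear functions. -/
def trapezoid (N n : ℕ) : ℕ := (N - 2 * n) - (N - 5 * n)

theorem card_filter_div_mem_Ico (N : ℕ) {n : ℕ} (hn : 0 < n) :
    #{t ∈ range N | t / n ∈ Ico 2 5} = trapezoid N n := by
  have : {t ∈ range N | t / n ∈ Ico 2 5} = Ico (2 * n) (min N (5 * n)) := by
    ext t
    simp only [mem_filter, mem_range, mem_Ico, Nat.le_div_iff_mul_le hn, Nat.div_lt_iff_lt_mul hn]
    omega
  rw [this, Nat.card_Ico, trapezoid]
  omega

theorem sum_range_chebFun_div_le (N : ℕ) {n : ℕ} (hn : 0 < n) :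
    ∑ t ∈ range N, chebFun (t / n) ≤ 15 * (trapezoid N n : ℤ) := by
  refine (sum_range_comp_div_le_sum_range_comp_div sum_range_chebFun_le N hn).trans_eq ?_
  rw [← card_filter_div_mem_Ico N hn, ← sum_filter, sum_const, nsmul_eq_mul, mul_comm]

theorem sum_chebCoeff_mul_log_div_le :
    ∑ d ∈ Nat.divisors 60, (chebCoeff d : ℝ) * Real.log d / d ≤ -4.4685 := by
  have hdiv : Nat.divisors 60 = {1, 2, 3, 4, 5, 6, 10, 12, 15, 20, 30, 60} := by decide +kernel
  have l4 : Real.log 4 = 2 * Real.log 2 := by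
    rw [← Real.log_rpow (by norm_num)]; norm_num
  have l6 : Real.log 6 = Real.log 2 + Real.log 3 := by
    rw [← Real.log_mul (by norm_num) (by norm_num)]; norm_num
  have l12 : Real.log 12 = Real.log 4 + Real.log 3 := by
    rw [← Real.log_mul (by norm_num) (by norm_num)]; norm_num
  have l15 : Real.log 15 = Real.log 3 + Real.log 5 := by
    rw [← Real.log_mul (by norm_num) (by norm_num)]; norm_num
  have l20 : Real.log 20 = Real.log 4 + Real.log 5 := by
    rw [← Real.log_mul (by norm_num) (by norm_num)]; norm_num
  have l30 : Real.log 30 = Real.log 6 + Real.log 5 := by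
    rw [← Real.log_mul (by norm_num) (by norm_num)]; norm_num
  have l60 : Real.log 60 = Real.log 12 + Real.log 5 := by
    rw [← Real.log_mul (by norm_num) (by norm_num)]; norm_num
  have hsum : ∑ d ∈ Nat.divisors 60, (chebCoeff d : ℝ) * Real.log d / d =
      2 / 15 * Real.log 2 - 11 / 10 * Real.log 3 - 25 / 12 * Real.log 5 := by
    simp [hdiv, chebCoeff, l60, l30, l20, l15, l12, l6, l4]
    ring
  rw [hsum]
  linarith [Real.log_two_lt_d9, Real.log_three_gt_d9, Real.log_five_gt_d9]

theorem le_sum_vonMangoldt_mul_trapezoid {N : ℕ} (hN : N ≠ 0) (h60 : 60 ∣ N) :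
    0.14895 * (N : ℝ) ^ 2 - 6 * N * (Real.log N + 2) ≤ ∑ n ∈ Ioc 0 N, Λ n * trapezoid N n := by
  have hmean : ∑ d ∈ Nat.divisors 60, (chebCoeff d : ℝ) / d = 0 := by
    have : ∑ d ∈ Nat.divisors 60, (chebCoeff d : ℚ) / d = 0 := by decide +kernel
    exact_mod_cast congrArg (Rat.cast (K := ℝ)) this
  have habs : ∑ d ∈ Nat.divisors 60, |(chebCoeff d : ℝ)| = 90 := by
    have : ∑ d ∈ Nat.divisors 60, |chebCoeff d| = 90 := by decide +kernel
    exact_mod_cast congrArg (Int.cast (R := ℝ)) this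
  have hlower := sub_le_sum_vonMangoldt_mul_sum_div hN
    (fun d hd => (Nat.dvd_of_mem_divisors hd).trans h60) hmean
  have hupper : ∑ n ∈ Ioc 0 N,
      Λ n * ∑ t ∈ range N, ∑ d ∈ Nat.divisors 60, (chebCoeff d : ℝ) * ((t / n / d : ℕ) : ℝ) ≤
        15 * ∑ n ∈ Ioc 0 N, Λ n * trapezoid N n := by
    rw [mul_sum]
    refine sum_le_sum fun n hn => ?_
    have : ((∑ t ∈ range N, chebFun (t / n) : ℤ) : ℝ) ≤ 15 * (trapezoid N n : ℝ) := by
      exact_mod_cast sum_range_chebFun_div_le N (mem_Ioc.1 hn).1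
    simp only [chebFun, Int.cast_sum, Int.cast_mul, Int.cast_natCast] at this
    rw [mul_left_comm]
    exact mul_le_mul_of_nonneg_left this ArithmeticFunction.vonMangoldt_nonneg
  rw [habs] at hlower
  nlinarith [mul_le_mul_of_nonneg_right sum_chebCoeff_mul_log_div_le (sq_nonneg (N : ℝ))]

theorem five_mul_trapezoid_le (N n : ℕ) : 5 * trapezoid N n ≤ 3 * N := by
  rw [trapezoid]; omega

theorem trapezoid_eq_zero {N n : ℕ} (h : N ≤ 2 * n) : trapezoid N n = 0 := by
  rw [trapezoid]; omega

theorem sum_not_prime_vonMangoldt_mul_trapezoid_le {N : ℕ} (hN : 1 ≤ N) :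
    ∑ n ∈ Ioc 0 N with ¬n.Prime, Λ n * trapezoid N n ≤ 1.2 * N * √N * Real.log N := by
  have hpsi := Chebyshev.psi_sub_theta_le (show (1 : ℝ) ≤ N by exact_mod_cast hN)
  rw [Chebyshev.psi_sub_theta_eq_sum_not_prime, Nat.floor_natCast] at hpsi
  calc ∑ n ∈ Ioc 0 N with ¬n.Prime, Λ n * trapezoid N n
      ≤ ∑ n ∈ Ioc 0 N with ¬n.Prime, Λ n * (0.6 * N) := by
        gcongr with n
        have : (5 : ℝ) * trapezoid N n ≤ 3 * N := by exact_mod_cast five_mul_trapezoid_le N n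
        linarith
    _ = (∑ n ∈ Ioc 0 N with ¬n.Prime, Λ n) * (0.6 * N) := by rw [sum_mul]
    _ ≤ 2 * √N * Real.log N * (0.6 * N) := by gcongr
    _ = 1.2 * N * √N * Real.log N := by ring

theorem sum_prime_vonMangoldt_mul_trapezoid_le (X : ℕ) :
    ∑ n ∈ Ioc 0 (2 * X) with n.Prime, Λ n * trapezoid (2 * X) n ≤
      Real.log X * ∑ p ∈ X.primesLE, (trapezoid (2 * X) p : ℝ) := by
  have hsub : X.primesLE ⊆ {n ∈ Ioc 0 (2 * X) | n.Prime} := fun p hp => by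
    obtain ⟨hpX, hp⟩ := Nat.mem_primesLE.1 hp
    exact mem_filter.2 ⟨mem_Ioc.2 ⟨hp.pos, by omega⟩, hp⟩
  rw [← sum_subset hsub, mul_sum]
  · refine sum_le_sum fun p hp => ?_
    obtain ⟨hpX, hp⟩ := Nat.mem_primesLE.1 hp
    rw [ArithmeticFunction.vonMangoldt_apply_prime hp]
    have := hp.pos
    gcongr
  · intro p hp hpX
    have : ¬p ≤ X := fun h => hpX (Nat.mem_primesLE.2 ⟨h, (mem_filter.1 hp).2⟩)
    rw [trapezoid_eq_zero (by omega), Nat.cast_zero, mul_zero]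

theorem le_log_mul_sum_prime_trapezoid {X N : ℕ} (hX : X ≠ 0) (h30 : 30 ∣ X) (hN : N = 2 * X) :
    0.14895 * (N : ℝ) ^ 2 - 6 * N * (Real.log N + 2) - 1.2 * N * √N * Real.log N ≤
      Real.log X * ∑ p ∈ X.primesLE, (trapezoid N p : ℝ) := by
  have htotal := le_sum_vonMangoldt_mul_trapezoid (N := N) (by omega) (by omega)
  have hprimePowers := sum_not_prime_vonMangoldt_mul_trapezoid_le (N := N) (by omega)
  rw [← sum_filter_add_sum_filter_not _ Nat.Prime] at htotal
  subst hN
  linarith [sum_prime_vonMangoldt_mul_trapezoid_le X]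

/-! ### The trapezoidal weight in residue classes -/

theorem sum_range_max_sub_zero {y : ℝ} (hy : -1 < y) {K : ℕ} (hK : y ≤ K) :
    ∑ k ∈ range K, max (y - k) 0 = (y ^ 2 + y + Int.fract y * (1 - Int.fract y)) / 2 := by
  have hfloor : -1 ≤ ⌊y⌋ := Int.le_floor.2 (by push_cast; exact hy.le)
  obtain ⟨m, hm⟩ := Int.eq_ofNat_of_zero_le (show 0 ≤ ⌊y⌋ + 1 by omega)
  have hym : y = m - 1 + Int.fract y := by
    have : ((⌊y⌋ + 1 : ℤ) : ℝ) = m := by rw [hm]; rfl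
    push_cast at this
    linarith [Int.floor_add_fract y]
  have hfract0 := Int.fract_nonneg y
  have hfract1 := Int.fract_lt_one y
  have htail : ∀ L : ℕ, y ≤ L → L ≤ K + m →
      ∑ k ∈ range L, max (y - k) 0 = ∑ k ∈ range (K + m), max (y - k) 0 := fun L hyL hL =>
    sum_subset (range_mono hL) fun k _ hk => by
      have : (L : ℝ) ≤ k := by exact_mod_cast not_lt.1 (mem_range.not.1 hk)
      exact max_eq_right (by linarith)
  have hlinear : ∀ k ∈ range m, max (y - k) 0 = y - k := fun k hk => by
    have : (k : ℝ) + 1 ≤ m := by exact_mod_cast mem_range.1 hk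
    exact max_eq_left (by linarith)
  have hsum : ∀ m : ℕ, ∑ k ∈ range m, (y - k) = m * y - m * (m - 1) / 2 := by
    intro m
    induction m with
    | zero => simp
    | succ m ih => rw [sum_range_succ, ih]; push_cast; ring
  rw [htail K hK (by omega), ← htail m (by linarith) (by omega), sum_congr rfl hlinear, hsum]
  set f := Int.fract y
  rw [hym]
  ring

theorem sum_range_filter_modEq {M : Type*} [AddCommMonoid M] {N D : ℕ} (hD : 0 < D) (a : ℕ)
    {f : ℕ → M} (hf : ∀ n, N ≤ n → f n = 0) :
    ∑ n ∈ range N with n ≡ a [MOD D], f n = ∑ k ∈ range N, f (a % D + k * D) := by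
  rw [← sum_image (g := fun k => a % D + k * D) (f := f) fun k _ l _ h =>
    Nat.eq_of_mul_eq_mul_right hD (Nat.add_left_cancel h)]
  refine sum_subset (fun n hn => ?_) fun n hn hn' => hf n ?_
  · obtain ⟨hnN, hna⟩ := mem_filter.1 hn
    refine mem_image.2 ⟨n / D, mem_range.2 ((Nat.div_le_self n D).trans_lt (mem_range.1 hnN)), ?_⟩
    rw [← hna]
    exact Nat.mod_add_div' n D
  · obtain ⟨k, -, rfl⟩ := mem_image.1 hn
    by_contra! hlt
    exact hn' (mem_filter.2 ⟨mem_range.2 hlt, by simp [Nat.ModEq]⟩)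

theorem natCast_sub_eq_max {R : Type*} [Ring R] [LinearOrder R] [IsOrderedRing R] (a b : ℕ) :
    ((a - b : ℕ) : R) = max ((a : R) - b) 0 := by
  rcases le_total a b with h | h
  · rw [Nat.sub_eq_zero_of_le h, Nat.cast_zero, max_eq_right (sub_nonpos.2 (Nat.mono_cast h))]
  · rw [Nat.cast_sub h, max_eq_left (sub_nonneg.2 (Nat.mono_cast h))]

theorem trapezoid_add_mul (N r k : ℕ) {D : ℕ} (hD : 0 < D) :
    (trapezoid N (r + k * D) : ℝ) =
      2 * D * max ((N / 2 - r) / D - k : ℝ) 0 - 5 * D * max ((N / 5 - r) / D - k : ℝ) 0 := by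
  rw [trapezoid, Nat.cast_sub (by omega), natCast_sub_eq_max, natCast_sub_eq_max,
    mul_max_of_nonneg _ _ (by positivity), mul_max_of_nonneg _ _ (by positivity), mul_zero,
    mul_zero]
  push_cast
  congr 2 <;> field_simp <;> ring

theorem mul_one_sub_mem_Icc {f : ℝ} (h0 : 0 ≤ f) (h1 : f ≤ 1) :
    f * (1 - f) ∈ Set.Icc (0 : ℝ) (1 / 4) :=
  ⟨mul_nonneg h0 (by linarith), by nlinarith [sq_nonneg (f - 1 / 2)]⟩

theorem abs_sum_trapezoid_modEq_sub_le (N a : ℕ) {D : ℕ} (hD : 0 < D) :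
    |∑ n ∈ range N with n ≡ a [MOD D], (trapezoid N n : ℝ) - 0.15 * N ^ 2 / D| ≤
      (5 * D / 8 : ℝ) := by
  have hD0 : (0 : ℝ) < D := by exact_mod_cast hD
  have hD1 : (1 : ℝ) ≤ D := by exact_mod_cast hD
  have hrD : ((a % D : ℕ) : ℝ) < D := by exact_mod_cast Nat.mod_lt a hD
  rw [sum_range_filter_modEq hD a fun n hn => by rw [trapezoid_eq_zero (by omega), Nat.cast_zero]]
  simp only [trapezoid_add_mul N (a % D) _ hD]
  set r : ℝ := ((a % D : ℕ) : ℝ)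
  have hr0 : 0 ≤ r := Nat.cast_nonneg _
  have hsum : ∀ c : ℝ, 0 ≤ c → c ≤ N →
      ∑ k ∈ range N, max ((c - r) / D - k) 0 = (((c - r) / D) ^ 2 + (c - r) / D +
        Int.fract ((c - r) / D) * (1 - Int.fract ((c - r) / D))) / 2 := fun c hc hcN =>
    sum_range_max_sub_zero (by rw [lt_div_iff₀ hD0]; linarith) (by rw [div_le_iff₀ hD0]; nlinarith)
  have : (0 : ℝ) ≤ N := Nat.cast_nonneg N
  rw [sum_sub_distrib, ← mul_sum, ← mul_sum, hsum _ (by positivity) (by linarith),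
    hsum _ (by positivity) (by linarith)]
  set y₁ : ℝ := (N / 2 - r) / D with hy₁
  set y₂ : ℝ := (N / 5 - r) / D with hy₂
  obtain ⟨hβ₁, hβ₁'⟩ := mul_one_sub_mem_Icc (Int.fract_nonneg y₁) (Int.fract_lt_one y₁).le
  obtain ⟨hβ₂, hβ₂'⟩ := mul_one_sub_mem_Icc (Int.fract_nonneg y₂) (Int.fract_lt_one y₂).le
  obtain ⟨hρ, hρ'⟩ := mul_one_sub_mem_Icc (f := r / D) (by positivity) ((div_le_one hD0).2 hrD.le)
  set β₁ := Int.fract y₁ * (1 - Int.fract y₁)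
  set β₂ := Int.fract y₂ * (1 - Int.fract y₂)
  have herror : 2 * D * ((y₁ ^ 2 + y₁ + β₁) / 2) - 5 * D * ((y₂ ^ 2 + y₂ + β₂) / 2) -
      0.15 * N ^ 2 / D = D * ((3 * (r / D * (1 - r / D)) + 2 * β₁ - 5 * β₂) / 2) := by
    rw [hy₁, hy₂]
    field_simp
    ring
  rw [herror, abs_mul, abs_of_pos hD0]
  calc D * |(3 * (r / D * (1 - r / D)) + 2 * β₁ - 5 * β₂) / 2| ≤ (D : ℝ) * (5 / 8) := by
        gcongr
        rw [abs_le]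
        constructor <;> linarith
    _ = 5 * D / 8 := by ring

theorem abs_sum_trapezoid_modEq_dvd_sub_le (N a : ℕ) {q e : ℕ} (hq : 0 < q) (he : 0 < e)
    (hqe : q.Coprime e) :
    |∑ n ∈ range N with n ≡ a [MOD q] ∧ e ∣ n, (trapezoid N n : ℝ) - 0.15 * N ^ 2 / (q * e)| ≤
      (5 * (q * e) / 8 : ℝ) := by
  obtain ⟨c, hca, hc0⟩ := Nat.chineseRemainder hqe a 0
  have hfilter : {n ∈ range N | n ≡ a [MOD q] ∧ e ∣ n} = {n ∈ range N | n ≡ c [MOD q * e]} := by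
    refine filter_congr fun n _ => ?_
    rw [← Nat.modEq_and_modEq_iff_modEq_mul hqe, ← Nat.modEq_zero_iff_dvd]
    exact and_congr ⟨fun h => h.trans hca.symm, fun h => h.trans hca⟩
      ⟨fun h => h.trans hc0.symm, fun h => h.trans hc0⟩
  rw [hfilter]
  exact_mod_cast abs_sum_trapezoid_modEq_sub_le N c (Nat.mul_pos hq he)

/-! ### Selberg's upper bound sieve -/

theorem sum_divisors_filter_dvd_moebius_div {m : ℕ} (hm : m ≠ 0) (k : ℕ) :
    ∑ d ∈ m.divisors with k ∣ d, μ (m / d) = if m = k then 1 else 0 := by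
  by_cases hkm : k ∣ m
  · obtain ⟨e, rfl⟩ := hkm
    have hk : 0 < k := Nat.pos_of_ne_zero (left_ne_zero_of_mul hm)
    have hmultiples : {d ∈ (k * e).divisors | k ∣ d} = e.divisors.image (k * ·) := by
      ext d
      simp only [mem_filter, Nat.mem_divisors, mem_image]
      constructor
      · rintro ⟨⟨hd, -⟩, c, rfl⟩
        exact ⟨c, ⟨Nat.dvd_of_mul_dvd_mul_left hk hd, right_ne_zero_of_mul hm⟩, rfl⟩
      · rintro ⟨c, ⟨hc, -⟩, rfl⟩
        exact ⟨⟨Nat.mul_dvd_mul_left k hc, hm⟩, dvd_mul_right _ _⟩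
    have hone : k * e = k ↔ e = 1 := by
      rw [Nat.mul_eq_left hk.ne']
    rw [hmultiples, sum_image fun a _ b _ h => Nat.eq_of_mul_eq_mul_left hk h]
    simp only [Nat.mul_div_mul_left _ _ hk, hone]
    rw [Nat.sum_div_divisors e μ, ← ArithmeticFunction.coe_mul_zeta_apply,
      ArithmeticFunction.moebius_mul_coe_zeta, ArithmeticFunction.one_apply]
  · have hempty : {d ∈ m.divisors | k ∣ d} = ∅ :=
      filter_eq_empty_iff.2 fun d hd hkd => hkm (hkd.trans (Nat.dvd_of_mem_divisors hd))
    rw [hempty, sum_empty, if_neg fun h : m = k => hkm (h ▸ dvd_rfl)]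

section SelbergWeight

variable (s : BoundingSieve) {S : Finset ℕ}

/-- The optimal diagonalised weights `∑ (d with m ∣ d), ν d * w d` of Selberg's sieve with weights
`w` of support `S`. -/
noncomputable def selbergDiag (S : Finset ℕ) (m : ℕ) : ℝ :=
  μ m * s.selbergTerms m / ∑ l ∈ S, s.selbergTerms l

/-- The weights of Selberg's sieve, recovered from `selbergDiag` by Möbius inversion. The set `S` of
divisors of `s.prodPrimes` plays the role of the level. -/
noncomputable def selbergWeight (S : Finset ℕ) (d : ℕ) : ℝ :=
  (s.nu d)⁻¹ * ∑ m ∈ S with d ∣ m, (μ (m / d) : ℝ) * selbergDiag s S m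

variable {s}

theorem moebius_sq_eq_one_of_subset_divisors_prodPrimes (hS : S ⊆ s.prodPrimes.divisors) {m : ℕ}
    (hm : m ∈ S) : (μ m : ℝ) ^ 2 = 1 := by
  exact_mod_cast ArithmeticFunction.moebius_sq_eq_one_of_squarefree
    (BoundingSieve.squarefree_of_mem_divisors_prodPrimes (hS hm))

theorem sum_selbergTerms_pos (hS : S ⊆ s.prodPrimes.divisors) (hne : S.Nonempty) :
    0 < ∑ l ∈ S, s.selbergTerms l :=
  sum_pos (fun _ hl => BoundingSieve.selbergTerms_pos (Nat.dvd_of_mem_divisors (hS hl))) hne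

theorem selbergWeight_one (hS : S ⊆ s.prodPrimes.divisors) (hne : S.Nonempty) :
    selbergWeight s S 1 = 1 := by
  have hG := sum_selbergTerms_pos hS hne
  have hterm : ∀ m ∈ S, (μ (m / 1) : ℝ) * selbergDiag s S m =
      s.selbergTerms m / ∑ l ∈ S, s.selbergTerms l := fun m hm => by
    rw [Nat.div_one, selbergDiag, ← mul_div_assoc, ← mul_assoc, ← sq,
      moebius_sq_eq_one_of_subset_divisors_prodPrimes hS hm, one_mul]
  rw [selbergWeight, filter_true_of_mem fun _ _ => one_dvd _, sum_congr rfl hterm, ← sum_div,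
    div_self hG.ne', s.nu_mult.map_one, inv_one, one_mul]

theorem sum_nu_mul_selbergWeight (hS : S ⊆ s.prodPrimes.divisors) (l : ℕ) :
    (∑ d ∈ s.prodPrimes.divisors, if l ∣ d then s.nu d * selbergWeight s S d else 0) =
      if l ∈ S then selbergDiag s S l else 0 := by
  have hexpand : ∀ d ∈ s.prodPrimes.divisors,
      (if l ∣ d then s.nu d * selbergWeight s S d else 0) =
        ∑ m ∈ S, if d ∣ m ∧ l ∣ d then (μ (m / d) : ℝ) * selbergDiag s S m else 0 := by
    intro d hd
    have hnu := BoundingSieve.nu_ne_zero (Nat.dvd_of_mem_divisors hd)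
    rw [selbergWeight, mul_inv_cancel_left₀ hnu, sum_filter]
    by_cases hl : l ∣ d <;> simp only [hl, and_true, and_false, if_true, if_false, sum_const_zero]
  have hinner : ∀ m ∈ S, (∑ d ∈ s.prodPrimes.divisors,
      if d ∣ m ∧ l ∣ d then (μ (m / d) : ℝ) * selbergDiag s S m else 0) =
        if m = l then selbergDiag s S m else 0 := by
    intro m hm
    obtain ⟨hmP, hP⟩ := Nat.mem_divisors.1 (hS hm)
    rw [← sum_filter, ← filter_filter, Nat.divisors_filter_dvd_of_dvd hP hmP, ← sum_mul,
      ← Int.cast_sum, sum_divisors_filter_dvd_moebius_div (ne_zero_of_dvd_ne_zero hP hmP)]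
    split_ifs <;> simp
  rw [sum_congr rfl hexpand, sum_comm, sum_congr rfl hinner, sum_ite_eq']

theorem mainSum_lambdaSquared_selbergWeight (hS : S ⊆ s.prodPrimes.divisors)
    (hne : S.Nonempty) :
    s.mainSum (BoundingSieve.lambdaSquared (selbergWeight s S)) =
      1 / ∑ l ∈ S, s.selbergTerms l := by
  have hG := sum_selbergTerms_pos hS hne
  have hterm : ∀ l ∈ S, (s.selbergTerms l)⁻¹ * selbergDiag s S l ^ 2 =
      s.selbergTerms l / (∑ l ∈ S, s.selbergTerms l) ^ 2 := by
    intro l hl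
    have hpos := BoundingSieve.selbergTerms_pos (Nat.dvd_of_mem_divisors (hS hl))
    rw [selbergDiag, div_pow, mul_pow, moebius_sq_eq_one_of_subset_divisors_prodPrimes hS hl]
    field_simp
  rw [BoundingSieve.mainSum_lambdaSquared_eq_sum_mul_sum_sq]
  simp only [sum_nu_mul_selbergWeight hS, ite_pow, zero_pow two_ne_zero, mul_ite, mul_zero]
  rw [← sum_filter, filter_mem_eq_inter, inter_eq_right.2 hS, sum_congr rfl hterm, ← sum_div]
  field_simp

theorem siftedSum_le_div_add_errSum (hS : S ⊆ s.prodPrimes.divisors) (hne : S.Nonempty) :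
    s.siftedSum ≤ s.totalMass / ∑ l ∈ S, s.selbergTerms l +
      s.errSum (BoundingSieve.lambdaSquared (selbergWeight s S)) := by
  rw [← mul_one_div, ← mainSum_lambdaSquared_selbergWeight hS hne]
  exact BoundingSieve.siftedSum_le_mainSum_errSum_of_upperMoebius _
    (BoundingSieve.upperMoebius_lambdaSquared _ (selbergWeight_one hS hne))

theorem sum_mul_abs_selbergWeight_le (hS : S ⊆ s.prodPrimes.divisors) (hne : S.Nonempty)
    {b : ℕ → ℝ} (hb : ∀ d, 0 ≤ b d) :
    ∑ d ∈ s.prodPrimes.divisors, b d * |selbergWeight s S d| ≤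
      (∑ m ∈ S, (∑ d ∈ m.divisors, b d / s.nu d) * s.selbergTerms m) /
        ∑ l ∈ S, s.selbergTerms l := by
  have hG := sum_selbergTerms_pos hS hne
  have hmoebius : ∀ n : ℕ, |(μ n : ℝ)| ≤ 1 := fun n => by
    exact_mod_cast ArithmeticFunction.abs_moebius_le_one
  have hdiag : ∀ m ∈ S, ∀ d, |(μ (m / d) : ℝ) * selbergDiag s S m| ≤
      s.selbergTerms m / ∑ l ∈ S, s.selbergTerms l := by
    intro m hm d
    have hpos := BoundingSieve.selbergTerms_pos (Nat.dvd_of_mem_divisors (hS hm))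
    rw [abs_mul, selbergDiag, abs_div, abs_mul, abs_of_pos hpos, abs_of_pos hG]
    calc _ ≤ 1 * (1 * s.selbergTerms m / ∑ l ∈ S, s.selbergTerms l) := by
          gcongr <;> exact hmoebius _
      _ = _ := by rw [one_mul, one_mul]
  have hweight : ∀ d ∈ s.prodPrimes.divisors, b d * |selbergWeight s S d| ≤
      ∑ m ∈ S, if d ∣ m then
        b d / s.nu d * (s.selbergTerms m / ∑ l ∈ S, s.selbergTerms l) else 0 := by
    intro d hd
    have hnu := BoundingSieve.nu_pos_of_dvd_prodPrimes (Nat.dvd_of_mem_divisors hd)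
    rw [selbergWeight, abs_mul, abs_of_pos (inv_pos.2 hnu), ← mul_assoc, ← div_eq_mul_inv,
      ← sum_filter, ← mul_sum]
    refine mul_le_mul_of_nonneg_left ?_ (div_nonneg (hb d) hnu.le)
    exact (abs_sum_le_sum_abs _ _).trans (sum_le_sum fun m hm => hdiag m (mem_filter.1 hm).1 d)
  refine (sum_le_sum hweight).trans_eq ?_
  rw [sum_comm, sum_div]
  refine sum_congr rfl fun m hm => ?_
  obtain ⟨hmP, hP⟩ := Nat.mem_divisors.1 (hS hm)
  rw [← sum_filter, ← sum_mul, Nat.divisors_filter_dvd_of_dvd hP hmP, mul_div_assoc]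

end SelbergWeight

theorem abs_lambdaSquared_le {P d : ℕ} (hP : P ≠ 0) (hd : d ∣ P) (w : ℕ → ℝ) :
    |BoundingSieve.lambdaSquared w d| ≤
      ∑ d₁ ∈ P.divisors, ∑ d₂ ∈ P.divisors, if d = d₁.lcm d₂ then |w d₁| * |w d₂| else 0 := by
  have hdP := Nat.divisors_subset_of_dvd hP hd
  have habs : ∀ f : ℕ → ℝ, |∑ e ∈ d.divisors, f e| ≤ ∑ e ∈ P.divisors, |f e| := fun f =>
    (abs_sum_le_sum_abs _ _).trans (sum_le_sum_of_subset_of_nonneg hdP fun _ _ _ => abs_nonneg _)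
  refine (habs _).trans (sum_le_sum fun d₁ _ => (habs _).trans (sum_le_sum fun d₂ _ => ?_))
  split_ifs
  · rw [abs_mul]
  · rw [abs_zero]

theorem errSum_lambdaSquared_le {s : BoundingSieve} (w : ℕ → ℝ) {R : ℝ}
    (hR : ∀ d ∈ s.prodPrimes.divisors, |s.rem d| ≤ R * d) :
    s.errSum (BoundingSieve.lambdaSquared w) ≤
      R * (∑ d ∈ s.prodPrimes.divisors, d * |w d|) ^ 2 := by
  have hP := BoundingSieve.prodPrimes_ne_zero (s := s)
  have hR0 : 0 ≤ R := by
    simpa only [Nat.cast_one, mul_one] using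
      (abs_nonneg _).trans (hR 1 (Nat.one_mem_divisors.2 hP))
  have hterm : ∀ d ∈ s.prodPrimes.divisors, |BoundingSieve.lambdaSquared w d| * |s.rem d| ≤
      ∑ d₁ ∈ s.prodPrimes.divisors, ∑ d₂ ∈ s.prodPrimes.divisors,
        if d = d₁.lcm d₂ then |w d₁| * |w d₂| * (R * d) else 0 := by
    intro d hd
    have hlambda := abs_lambdaSquared_le hP (Nat.dvd_of_mem_divisors hd) w
    refine (mul_le_mul hlambda (hR d hd) (abs_nonneg _) ((abs_nonneg _).trans hlambda)).trans_eq ?_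
    simp only [sum_mul, ite_mul, zero_mul]
  have hlcm : ∀ d₁ ∈ s.prodPrimes.divisors, ∀ d₂ ∈ s.prodPrimes.divisors,
      (∑ d ∈ s.prodPrimes.divisors, if d = d₁.lcm d₂ then |w d₁| * |w d₂| * (R * d) else 0) ≤
        R * (d₁ * |w d₁| * (d₂ * |w d₂|)) := by
    intro d₁ hd₁ d₂ hd₂
    have hle : ((d₁.lcm d₂ : ℕ) : ℝ) ≤ d₁ * d₂ := by
      exact_mod_cast Nat.le_of_dvd
        (Nat.mul_pos (Nat.pos_of_mem_divisors hd₁) (Nat.pos_of_mem_divisors hd₂))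
        (Nat.lcm_dvd_mul d₁ d₂)
    rw [sum_ite_eq', if_pos (Nat.mem_divisors.2
      ⟨Nat.lcm_dvd (Nat.dvd_of_mem_divisors hd₁) (Nat.dvd_of_mem_divisors hd₂), hP⟩)]
    calc |w d₁| * |w d₂| * (R * (d₁.lcm d₂ : ℕ)) ≤ |w d₁| * |w d₂| * (R * (d₁ * d₂)) := by gcongr
      _ = R * (d₁ * |w d₁| * (d₂ * |w d₂|)) := by ring
  rw [BoundingSieve.errSum, sq, sum_mul_sum, mul_sum]
  refine (sum_le_sum hterm).trans ?_
  rw [sum_comm]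
  refine sum_le_sum fun d₁ hd₁ => ?_
  rw [sum_comm, mul_sum]
  exact sum_le_sum fun d₂ hd₂ => hlcm d₁ hd₁ d₂ hd₂

/-! ### Sieving primes in a residue class -/

/-- The product of the primes dividing `n` but not `q`. -/
def coprimeRadical (q n : ℕ) : ℕ := ∏ p ∈ n.primeFactors with ¬p ∣ q, p

theorem primeFactors_coprimeRadical (q n : ℕ) :
    (coprimeRadical q n).primeFactors = {p ∈ n.primeFactors | ¬p ∣ q} :=
  Nat.primeFactors_prod fun _ hp => Nat.prime_of_mem_primeFactors (mem_filter.1 hp).1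

theorem coprimeRadical_dvd (q n : ℕ) : coprimeRadical q n ∣ n :=
  (prod_dvd_prod_of_subset _ _ _ (filter_subset _ _)).trans (Nat.prod_primeFactors_dvd n)

theorem coprimeRadical_pos (q n : ℕ) : 0 < coprimeRadical q n :=
  prod_pos fun _ hp => (Nat.prime_of_mem_primeFactors (mem_filter.1 hp).1).pos

theorem coprime_coprimeRadical (q n : ℕ) : (coprimeRadical q n).Coprime q :=
  Nat.Coprime.prod_left fun _ hp =>
    (Nat.prime_of_mem_primeFactors (mem_filter.1 hp).1).coprime_iff_not_dvd.2 (mem_filter.1 hp).2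

theorem squarefree_coprimeRadical (q n : ℕ) : Squarefree (coprimeRadical q n) := by
  refine Finset.squarefree_prod_of_pairwise_isCoprime (fun p hp r hr hpr => ?_) fun p hp =>
    (Nat.prime_of_mem_primeFactors (mem_filter.1 hp).1).squarefree
  exact Nat.coprime_iff_isRelPrime.1 ((Nat.coprime_primes
    (Nat.prime_of_mem_primeFactors (mem_filter.1 hp).1)
    (Nat.prime_of_mem_primeFactors (mem_filter.1 hr).1)).2 hpr)

/-- The level of the sieve: the squarefree integers up to `z` coprime to `q`. -/
def sieveSupport (q z : ℕ) : Finset ℕ := {k ∈ Icc 1 z | Squarefree k ∧ k.Coprime q}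

theorem mem_sieveSupport {q z k : ℕ} :
    k ∈ sieveSupport q z ↔ (1 ≤ k ∧ k ≤ z) ∧ Squarefree k ∧ k.Coprime q := by
  rw [sieveSupport, mem_filter, mem_Icc]

theorem one_mem_sieveSupport {q z : ℕ} (hz : 1 ≤ z) : 1 ∈ sieveSupport q z :=
  mem_sieveSupport.2 ⟨⟨le_rfl, hz⟩, squarefree_one, Nat.coprime_one_left q⟩

theorem pos_of_mem_sieveSupport {q z k : ℕ} (hk : k ∈ sieveSupport q z) : 0 < k :=
  (mem_sieveSupport.1 hk).1.1

theorem sieveSupport_subset_divisors (q z : ℕ) :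
    sieveSupport q z ⊆ (coprimeRadical q z.factorial).divisors := by
  intro k hk
  obtain ⟨⟨hk1, hkz⟩, hsq, hkq⟩ := mem_sieveSupport.1 hk
  refine Nat.mem_divisors.2 ⟨?_, (coprimeRadical_pos _ _).ne'⟩
  rw [← Nat.prod_primeFactors_of_squarefree hsq]
  refine prod_dvd_prod_of_subset _ _ _ fun p hp => ?_
  obtain ⟨hp, hpk, -⟩ := Nat.mem_primeFactors.1 hp
  refine mem_filter.2 ⟨Nat.mem_primeFactors.2 ⟨hp, ?_, z.factorial_ne_zero⟩, ?_⟩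
  · exact hp.dvd_factorial.2 ((Nat.le_of_dvd hk1 hpk).trans hkz)
  · exact (hp.coprime_iff_not_dvd).1 (hkq.coprime_dvd_left hpk)

/-- The sum `∑ 1 / φ k` over `sieveSupport q z`, the denominator of Selberg's upper bound. -/
noncomputable def selbergSum (q z : ℕ) : ℝ := ∑ k ∈ sieveSupport q z, 1 / (k.totient : ℝ)

/-- The sieve of the integers `n ≡ a [MOD q]`, weighted by `trapezoid N`, by the primes up to `z`
not dividing `q`. -/
noncomputable def progressionSieve (N a q z : ℕ) : BoundingSieve where
  support := {n ∈ range N | n ≡ a [MOD q]}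
  prodPrimes := coprimeRadical q z.factorial
  prodPrimes_squarefree := squarefree_coprimeRadical _ _
  weights n := trapezoid N n
  weights_nonneg _ := Nat.cast_nonneg _
  totalMass := 0.15 * N ^ 2 / q
  nu := ⟨fun d => (d : ℝ)⁻¹, by rw [Nat.cast_zero, inv_zero]⟩
  nu_mult := ⟨by simp, fun {m n} _ => by simp [mul_comm]⟩
  nu_pos_of_prime p hp _ := inv_pos.2 (by exact_mod_cast hp.pos)
  nu_lt_one_of_prime p hp _ := inv_lt_one_of_one_lt₀ (by exact_mod_cast hp.one_lt)

theorem totient_div_eq_prod {n : ℕ} (hn : n ≠ 0) :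
    (n : ℝ) / n.totient = ∏ p ∈ n.primeFactors, (1 - (p : ℝ)⁻¹)⁻¹ := by
  have h := congrArg (Rat.cast : ℚ → ℝ) (Nat.totient_eq_mul_prod_factors n)
  push_cast at h
  rw [h, prod_inv_distrib]
  field_simp

section ProgressionSieve

variable (N a : ℕ) {q z : ℕ}

theorem selbergTerms_progressionSieve {l : ℕ} (hl : l ≠ 0) :
    (progressionSieve N a q z).selbergTerms l = 1 / l.totient := by
  have hnu : ∀ d, (progressionSieve N a q z).nu d = (d : ℝ)⁻¹ := fun _ => rfl
  simp only [BoundingSieve.selbergTerms_apply, hnu]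
  rw [← totient_div_eq_prod hl]
  field_simp

theorem sum_selbergTerms_progressionSieve :
    ∑ l ∈ sieveSupport q z, (progressionSieve N a q z).selbergTerms l = selbergSum q z :=
  sum_congr rfl fun _ hl => selbergTerms_progressionSieve N a (pos_of_mem_sieveSupport hl).ne'

theorem abs_rem_progressionSieve_le (hq : 0 < q) {d : ℕ}
    (hd : d ∈ (coprimeRadical q z.factorial).divisors) :
    |(progressionSieve N a q z).rem d| ≤ 5 * q / 8 * d := by
  have hcoprime := (coprime_coprimeRadical q z.factorial).coprime_dvd_left
    (Nat.dvd_of_mem_divisors hd)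
  have h := abs_sum_trapezoid_modEq_dvd_sub_le N a hq (Nat.pos_of_mem_divisors hd) hcoprime.symm
  have hrem : (progressionSieve N a q z).rem d =
      ∑ n ∈ range N with n ≡ a [MOD q] ∧ d ∣ n, (trapezoid N n : ℝ) - 0.15 * N ^ 2 / (q * d) := by
    rw [← filter_filter, sum_filter (fun n => d ∣ n)]
    change _ - (d : ℝ)⁻¹ * (0.15 * N ^ 2 / q) = _
    rw [inv_mul_eq_div, div_div]
    rfl
  rw [hrem]
  exact h.trans_eq (by ring)

theorem sum_prime_le_siftedSum_progressionSieve :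
    ∑ p ∈ range N with p ≡ a [MOD q] ∧ p.Prime ∧ z < p, (trapezoid N p : ℝ) ≤
      (progressionSieve N a q z).siftedSum := by
  rw [BoundingSieve.siftedSum, ← sum_filter]
  refine sum_le_sum_of_subset_of_nonneg (fun p hp => ?_) fun _ _ _ => Nat.cast_nonneg _
  obtain ⟨hpN, hpa, hp, hzp⟩ := mem_filter.1 hp
  refine mem_filter.2 ⟨mem_filter.2 ⟨hpN, hpa⟩, Nat.Coprime.symm (hp.coprime_iff_not_dvd.2 ?_)⟩
  exact fun h => hzp.not_ge (hp.dvd_factorial.1 (h.trans (coprimeRadical_dvd q z.factorial)))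

theorem sum_prime_modEq_trapezoid_le (hq : 0 < q) (hz : 1 ≤ z) :
    ∑ p ∈ range N with p ≡ a [MOD q] ∧ p.Prime ∧ z < p, (trapezoid N p : ℝ) ≤
      0.15 * N ^ 2 / (q * selbergSum q z) + 5 * q / 8 *
        ((∑ m ∈ sieveSupport q z, (∑ d ∈ m.divisors, (d : ℝ) ^ 2) / m.totient) /
          selbergSum q z) ^ 2 := by
  have hS := sieveSupport_subset_divisors q z
  have hne : (sieveSupport q z).Nonempty := ⟨1, one_mem_sieveSupport hz⟩
  have herror := errSum_lambdaSquared_le (s := progressionSieve N a q z)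
    (selbergWeight (progressionSieve N a q z) (sieveSupport q z))
    fun d hd => abs_rem_progressionSieve_le N a hq hd
  have hweights := sum_mul_abs_selbergWeight_le (s := progressionSieve N a q z) hS hne
    (b := fun d => d) fun d => Nat.cast_nonneg d
  have hsum : ∑ m ∈ sieveSupport q z,
      (∑ d ∈ m.divisors, (d : ℝ) / (progressionSieve N a q z).nu d) *
        (progressionSieve N a q z).selbergTerms m =
      ∑ m ∈ sieveSupport q z, (∑ d ∈ m.divisors, (d : ℝ) ^ 2) / m.totient := by
    refine sum_congr rfl fun m hm => ?_
    rw [selbergTerms_progressionSieve N a (pos_of_mem_sieveSupport hm).ne', mul_one_div]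
    refine congrArg (· / (m.totient : ℝ)) (sum_congr rfl fun d _ => ?_)
    rw [sq, ← div_inv_eq_mul]
    rfl
  rw [hsum, sum_selbergTerms_progressionSieve] at hweights
  calc _ ≤ (progressionSieve N a q z).siftedSum := sum_prime_le_siftedSum_progressionSieve N a
    _ ≤ _ := siftedSum_le_div_add_errSum hS hne
    _ ≤ _ := by
      rw [sum_selbergTerms_progressionSieve, ← div_div]
      refine add_le_add le_rfl (herror.trans ?_)
      exact mul_le_mul_of_nonneg_left
        (pow_le_pow_left₀ (sum_nonneg fun _ _ => by positivity) hweights 2) (by positivity)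

end ProgressionSieve

/-! ### A lower bound for the Selberg sum -/

theorem sum_one_div_le_div_totient {n : ℕ} (hn : n ≠ 0) {S : Finset ℕ}
    (hS : ∀ m ∈ S, m ≠ 0 ∧ m.primeFactors ⊆ n.primeFactors) :
    ∑ m ∈ S, 1 / (m : ℝ) ≤ n / n.totient := by
  let f : ℕ →* ℝ := (invMonoidWithZeroHom : ℝ →*₀ ℝ).toMonoidHom.comp
    (Nat.castRingHom ℝ).toMonoidHom
  have hf : ∀ m, f m = (m : ℝ)⁻¹ := fun _ => rfl
  have heuler := (EulerProduct.summable_and_hasSum_factoredNumbers_prod_filter_prime_geometric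
    (f := f) (fun {p} hp => by
      rw [hf, norm_inv, Real.norm_natCast]
      exact inv_lt_one_of_one_lt₀ (by exact_mod_cast hp.one_lt)) n.primeFactors).2
  rw [filter_true_of_mem fun p hp => Nat.prime_of_mem_primeFactors hp] at heuler
  simp only [hf, ← totient_div_eq_prod hn] at heuler
  have hmem : ∀ m ∈ S, m ∈ Nat.factoredNumbers n.primeFactors := fun m hm =>
    Nat.mem_factoredNumbers_iff_primeFactors_subset.2 (hS m hm)
  simp only [one_div]
  rw [← sum_subtype_of_mem (fun m : ℕ => (m : ℝ)⁻¹) hmem]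
  exact sum_le_hasSum _ (fun _ _ => by positivity) heuler

theorem primeFactors_div_coprimeRadical_subset {q n : ℕ} (hq : q ≠ 0) (hn : n ≠ 0) :
    (n / coprimeRadical q n).primeFactors ⊆ (coprimeRadical q n * q).primeFactors := by
  rw [Nat.primeFactors_mul (coprimeRadical_pos q n).ne' hq, primeFactors_coprimeRadical]
  intro p hp
  have hpn := Nat.primeFactors_mono (Nat.div_dvd_of_dvd (coprimeRadical_dvd q n)) hn hp
  by_cases h : p ∣ q
  · exact mem_union_right _ (Nat.mem_primeFactors.2 ⟨Nat.prime_of_mem_primeFactors hp, h, hq⟩)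
  · exact mem_union_left _ (mem_filter.2 ⟨hpn, h⟩)

theorem sum_fiber_coprimeRadical_le {q : ℕ} (hq : q ≠ 0) {k : ℕ} {S : Finset ℕ}
    (hS : ∀ n ∈ S, n ≠ 0 ∧ coprimeRadical q n = k) :
    ∑ n ∈ S, 1 / (n : ℝ) ≤ q / q.totient * (1 / k.totient) := by
  obtain rfl | ⟨n₀, hn₀⟩ := S.eq_empty_or_nonempty
  · rw [sum_empty]
    positivity
  have hk : 0 < k := (hS n₀ hn₀).2 ▸ coprimeRadical_pos q n₀
  have hkq : k.Coprime q := (hS n₀ hn₀).2 ▸ coprime_coprimeRadical q n₀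
  have hdvd : ∀ n ∈ S, k ∣ n := fun n hn => (hS n hn).2 ▸ coprimeRadical_dvd q n
  have hinj : Set.InjOn (· / k) (S : Set ℕ) := fun a ha b hb hab => by
    rw [← Nat.div_mul_cancel (hdvd a ha), ← Nat.div_mul_cancel (hdvd b hb)]
    exact congrArg (· * k) hab
  have hcofactors : ∑ m ∈ S.image (· / k), 1 / (m : ℝ) ≤ (k * q : ℕ) / (k * q).totient := by
    refine sum_one_div_le_div_totient (Nat.mul_ne_zero hk.ne' hq)
      (forall_mem_image.2 fun n hn => ?_)
    obtain ⟨hn0, rfl⟩ := hS n hn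
    exact ⟨(Nat.div_pos (Nat.le_of_dvd (Nat.pos_of_ne_zero hn0) (hdvd n hn)) hk).ne',
      primeFactors_div_coprimeRadical_subset hq hn0⟩
  have hk' : (0 : ℝ) < k := by exact_mod_cast hk
  calc ∑ n ∈ S, 1 / (n : ℝ)
      = 1 / k * ∑ m ∈ S.image (· / k), 1 / (m : ℝ) := by
        rw [sum_image hinj, mul_sum]
        refine sum_congr rfl fun n hn => ?_
        rw [Nat.cast_div (hdvd n hn) hk'.ne']
        field_simp
    _ ≤ 1 / k * ((k * q : ℕ) / (k * q).totient) := by gcongr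
    _ = q / q.totient * (1 / k.totient) := by
        rw [Nat.totient_mul hkq]
        push_cast
        field_simp

theorem sum_one_div_le_selbergSum {q z : ℕ} (hq : q ≠ 0) {T : Finset ℕ}
    (hT : ∀ n ∈ T, n ≠ 0 ∧ coprimeRadical q n ≤ z) :
    ∑ n ∈ T, 1 / (n : ℝ) ≤ q / q.totient * selbergSum q z := by
  have hmap : ∀ n ∈ T, coprimeRadical q n ∈ sieveSupport q z := fun n hn =>
    mem_sieveSupport.2 ⟨⟨coprimeRadical_pos q n, (hT n hn).2⟩, squarefree_coprimeRadical q n,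
      coprime_coprimeRadical q n⟩
  rw [← sum_fiberwise_of_maps_to hmap, selbergSum, mul_sum]
  refine sum_le_sum fun k _ => sum_fiber_coprimeRadical_le hq fun n hn => ?_
  exact ⟨(hT n (mem_filter.1 hn).1).1, (mem_filter.1 hn).2⟩

theorem two_pow_mul_odd_injective :
    Function.Injective fun a : ℕ × ℕ => 2 ^ a.1 * (2 * a.2 + 1) := by
  have hfactorization : ∀ a j : ℕ, (2 ^ a * (2 * j + 1)).factorization 2 = a := by
    intro a j
    have hodd : (2 * j + 1).factorization 2 = 0 :=
      Nat.factorization_eq_zero_of_not_dvd (by omega)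
    rw [Nat.factorization_mul (by positivity) (by positivity)]
    simp [hodd, Nat.prime_two.factorization_self]
  rintro ⟨a, j⟩ ⟨b, i⟩ h
  obtain rfl : a = b := by
    rw [← hfactorization a j, ← hfactorization b i]
    exact congrArg (·.factorization 2) h
  have := Nat.eq_of_mul_eq_mul_left (by positivity) h
  simp only [Prod.mk.injEq, true_and]
  omega

theorem coprimeRadical_two_pow_mul_le (q a : ℕ) {n : ℕ} (hn : n ≠ 0) :
    coprimeRadical q (2 ^ a * n) ≤ 2 * n := by
  refine Nat.le_of_dvd (by positivity) ?_
  have hsub : (2 ^ a * n).primeFactors ⊆ (2 * n).primeFactors := by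
    rw [Nat.primeFactors_mul (by positivity) hn, Nat.primeFactors_mul two_ne_zero hn]
    refine union_subset_union_left fun p hp => ?_
    have hp' := Nat.prime_of_mem_primeFactors hp
    exact Nat.mem_primeFactors.2
      ⟨hp', hp'.dvd_of_dvd_pow (Nat.dvd_of_mem_primeFactors hp), two_ne_zero⟩
  exact (prod_dvd_prod_of_subset _ _ _ ((filter_subset _ _).trans hsub)).trans
    (Nat.prod_primeFactors_dvd _)

theorem sum_half_pow (m : ℕ) : ∑ a ∈ Icc 1 m, (1 / 2 ^ a : ℝ) = 1 - 1 / 2 ^ m := by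
  induction m with
  | zero => simp
  | succ m ih =>
    rw [sum_Icc_succ_top (by omega), ih, pow_succ]
    field_simp
    ring

-- An integer `2 ^ a * n` with `n` odd has squarefree kernel at most `z` if `a = 0` and `n ≤ z`, or
-- if `2 * n ≤ z`; the second kind contributes `∑ 1 / 2 ^ a = 1` times a sum over odd `n ≤ z / 2`.
theorem sum_one_div_odd_le_selbergSum {q : ℕ} (hq : q ≠ 0) (z : ℕ) :
    ∑ j ∈ range ((z + 1) / 2), 1 / (2 * j + 1 : ℝ) +
      ∑ j ∈ range ((z / 2 + 1) / 2), 1 / (2 * j + 1 : ℝ) ≤ q / q.totient * selbergSum q z := by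
  suffices htrunc : ∀ m : ℕ, ∑ j ∈ range ((z + 1) / 2), 1 / (2 * j + 1 : ℝ) +
      (1 - 1 / 2 ^ m) * ∑ j ∈ range ((z / 2 + 1) / 2), 1 / (2 * j + 1 : ℝ) ≤
        q / q.totient * selbergSum q z by
    refine le_of_tendsto' (x := Filter.atTop) ?_ htrunc
    have hpow : Filter.Tendsto (fun m : ℕ => 1 - 1 / (2 : ℝ) ^ m) Filter.atTop (nhds (1 - 0)) := by
      simpa only [one_div_pow] using (tendsto_pow_atTop_nhds_zero_of_lt_one (r := (1 / 2 : ℝ))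
        (by norm_num) (by norm_num)).const_sub 1
    simpa using (hpow.mul_const _).const_add _
  intro m
  set f : ℕ × ℕ → ℕ := fun a => 2 ^ a.1 * (2 * a.2 + 1) with hf
  set U := ({0} ×ˢ range ((z + 1) / 2)) ∪ (Icc 1 m ×ˢ range ((z / 2 + 1) / 2)) with hU
  have hdisjoint : Disjoint ({0} ×ˢ range ((z + 1) / 2)) (Icc 1 m ×ˢ range ((z / 2 + 1) / 2)) :=
    disjoint_product.2 (Or.inl (by simp))
  have hradical : ∀ n ∈ U.image f, n ≠ 0 ∧ coprimeRadical q n ≤ z := by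
    refine forall_mem_image.2 fun ⟨a, j⟩ haj => ⟨by positivity, ?_⟩
    simp only [U, mem_union, mem_product, mem_singleton, mem_range, mem_Icc] at haj
    obtain ⟨rfl, hj⟩ | ⟨-, hj⟩ := haj
    · refine (Nat.le_of_dvd (by positivity) (coprimeRadical_dvd _ _)).trans ?_
      simp only [hf, pow_zero, one_mul]
      omega
    · exact (coprimeRadical_two_pow_mul_le q a (by omega)).trans (by omega)
  have hterm : ∀ a j : ℕ, 1 / ((2 ^ a * (2 * j + 1) : ℕ) : ℝ) = 1 / 2 ^ a * (1 / (2 * j + 1)) := by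
    intro a j
    push_cast
    rw [div_mul_div_comm, one_mul]
  have hsum := sum_one_div_le_selbergSum hq hradical
  rw [sum_image fun a _ b _ h => two_pow_mul_odd_injective h, hU, sum_union hdisjoint, sum_product,
    sum_product, sum_singleton] at hsum
  simp only [hterm, ← mul_sum, ← sum_mul, sum_half_pow] at hsum
  rwa [pow_zero, div_one, one_mul] at hsum

theorem le_sum_one_div_odd {J : ℕ} (hJ : 12 ≤ J) :
    Real.log (2 * J + 1) / 2 + 0.614 ≤ ∑ j ∈ range J, 1 / (2 * j + 1 : ℝ) := by
  induction J, hJ using Nat.le_induction with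
  | base =>
    have hlog5 : 31 * Real.log 5 ≤ 72 * Real.log 2 := by
      have : Real.log ((5 : ℝ) ^ 31) ≤ Real.log ((2 : ℝ) ^ 72) :=
        Real.log_le_log (by norm_num) (by norm_num)
      simpa [Real.log_pow] using this
    have hlog25 : Real.log (2 * (12 : ℕ) + 1) = 2 * Real.log 5 := by
      rw [show (2 * (12 : ℕ) + 1 : ℝ) = 5 ^ 2 by norm_num, Real.log_pow, Nat.cast_two]
    have : (2.2243 : ℝ) ≤ ∑ j ∈ range 12, 1 / (2 * j + 1 : ℝ) := by
      norm_num [sum_range_succ]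
    rw [hlog25]
    linarith [Real.log_two_lt_d9]
  | succ J hJ ih =>
    have hstep : Real.log (2 * ((J + 1 : ℕ) : ℝ) + 1) =
        Real.log (2 * J + 1) + Real.log (1 + 2 / (2 * J + 1)) := by
      rw [← Real.log_mul (by positivity) (by positivity)]
      congr 1
      push_cast
      field_simp
      ring
    have hlog := Real.log_le_sub_one_of_pos (show (0 : ℝ) < 1 + 2 / (2 * J + 1) by positivity)
    rw [sum_range_succ, hstep]
    linarith [show (2 / (2 * J + 1) : ℝ) = 2 * (1 / (2 * J + 1)) by ring]

theorem log_add_le_selbergSum {q z : ℕ} (hq : q ≠ 0) (hz : 100 ≤ z) :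
    Real.log z + 0.88 ≤ q / q.totient * selbergSum q z := by
  have hodd := le_sum_one_div_odd (J := (z + 1) / 2) (by omega)
  have hhalf := le_sum_one_div_odd (J := (z / 2 + 1) / 2) (by omega)
  have hz0 : (0 : ℝ) < z := by exact_mod_cast (by omega : 0 < z)
  have hlog : Real.log z ≤ Real.log (2 * (((z + 1) / 2 : ℕ) : ℝ) + 1) :=
    Real.log_le_log hz0 (by exact_mod_cast (by omega : z ≤ 2 * ((z + 1) / 2) + 1))
  have hlog_half : Real.log z - Real.log 2 ≤ Real.log (2 * (((z / 2 + 1) / 2 : ℕ) : ℝ) + 1) := by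
    rw [← Real.log_div hz0.ne' two_ne_zero]
    refine Real.log_le_log (by positivity) ((div_le_iff₀ two_pos).2 ?_)
    exact_mod_cast (by omega : z ≤ (2 * ((z / 2 + 1) / 2) + 1) * 2)
  linarith [sum_one_div_odd_le_selbergSum hq z, Real.log_two_lt_d9]

/-! ### The remainder term of the sieve -/

/-- The excess `j p` in `(p ^ 2 + 1) / (p - 1) = p * (1 + j p)`, which is the factor at `p` of
`(∑ d ∈ m.divisors, d ^ 2) / φ m` for squarefree `m`. -/
noncomputable def divisorExcess (p : ℕ) : ℝ := (p + 1) / (p * (p - 1))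

theorem divisorExcess_nonneg (p : ℕ) : 0 ≤ divisorExcess p := by
  obtain rfl | hp := Nat.eq_zero_or_pos p
  · simp [divisorExcess]
  have : (1 : ℝ) ≤ p := by exact_mod_cast hp
  exact div_nonneg (by positivity) (mul_nonneg (by positivity) (by linarith))

theorem one_le_one_add_divisorExcess (p : ℕ) : 1 ≤ 1 + divisorExcess p :=
  le_add_of_nonneg_right (divisorExcess_nonneg p)

theorem divisorExcess_div_nonneg (p : ℕ) : 0 ≤ divisorExcess p / p :=
  div_nonneg (divisorExcess_nonneg p) (Nat.cast_nonneg p)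

theorem one_le_one_add_divisorExcess_div (p : ℕ) : 1 ≤ 1 + divisorExcess p / p :=
  le_add_of_nonneg_right (divisorExcess_div_nonneg p)

theorem sum_divisors_prod_primeFactors {R : Type*} [CommSemiring R] {m : ℕ} (hm : Squarefree m)
    (g : ℕ → R) :
    ∑ d ∈ m.divisors, ∏ p ∈ d.primeFactors, g p = ∏ p ∈ m.primeFactors, (1 + g p) := by
  have hmul : (ArithmeticFunction.prodPrimeFactors g).IsMultiplicative :=
    ArithmeticFunction.IsMultiplicative.prodPrimeFactors _
  have h := hmul.prodPrimeFactors_one_add_of_squarefree hm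
  rw [prod_congr rfl fun p hp => ?_, h]
  · exact sum_congr rfl fun d hd => (ArithmeticFunction.prodPrimeFactors_apply
      (Nat.pos_of_mem_divisors hd).ne').symm
  · have hp := Nat.prime_of_mem_primeFactors hp
    rw [ArithmeticFunction.prodPrimeFactors_apply hp.ne_zero, hp.primeFactors, prod_singleton]

theorem totient_eq_prod_of_squarefree {m : ℕ} (hm : Squarefree m) :
    m.totient = ∏ p ∈ m.primeFactors, (p - 1) := by
  have h := Nat.totient_mul_prod_primeFactors m
  rw [Nat.prod_primeFactors_of_squarefree hm, mul_comm] at h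
  exact Nat.eq_of_mul_eq_mul_left (Nat.pos_of_ne_zero hm.ne_zero) h

theorem sum_sq_divisors_div_totient {m : ℕ} (hm : Squarefree m) :
    (∑ d ∈ m.divisors, (d : ℝ) ^ 2) / m.totient =
      m * ∑ e ∈ m.divisors, ∏ p ∈ e.primeFactors, divisorExcess p := by
  have hsq : ∑ d ∈ m.divisors, (d : ℝ) ^ 2 = ∏ p ∈ m.primeFactors, (1 + (p : ℝ) ^ 2) := by
    rw [← sum_divisors_prod_primeFactors hm]
    refine sum_congr rfl fun d hd => ?_
    rw [prod_pow, ← Nat.cast_prod, Nat.prod_primeFactors_of_squarefree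
      (hm.squarefree_of_dvd (Nat.dvd_of_mem_divisors hd))]
  have htotient : (m.totient : ℝ) = ∏ p ∈ m.primeFactors, ((p : ℝ) - 1) := by
    rw [totient_eq_prod_of_squarefree hm, Nat.cast_prod]
    exact prod_congr rfl fun p hp => Nat.cast_pred (Nat.prime_of_mem_primeFactors hp).pos
  have hprod : (m : ℝ) = ∏ p ∈ m.primeFactors, (p : ℝ) := by
    rw [← Nat.cast_prod, Nat.prod_primeFactors_of_squarefree hm]
  rw [sum_divisors_prod_primeFactors hm, hsq, htotient, hprod, ← prod_div_distrib,
    ← prod_mul_distrib]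
  refine prod_congr rfl fun p hp => ?_
  have hp1 : (1 : ℝ) < p := by exact_mod_cast (Nat.prime_of_mem_primeFactors hp).one_lt
  have : (p : ℝ) - 1 ≠ 0 := by linarith
  rw [divisorExcess]
  field_simp
  ring

/-- The primes up to `z` not dividing `q`. -/
def primesCoprimeTo (q z : ℕ) : Finset ℕ := {p ∈ z.primesLE | ¬p ∣ q}

theorem primeFactors_subset_primesCoprimeTo {q z e : ℕ} (he : e ∈ sieveSupport q z) :
    e.primeFactors ⊆ primesCoprimeTo q z := by
  obtain ⟨⟨he1, hez⟩, -, heq⟩ := mem_sieveSupport.1 he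
  intro p hp
  have hprime := Nat.prime_of_mem_primeFactors hp
  have hpe := Nat.dvd_of_mem_primeFactors hp
  exact mem_filter.2 ⟨Nat.mem_primesLE.2 ⟨(Nat.le_of_dvd he1 hpe).trans hez, hprime⟩,
    hprime.coprime_iff_not_dvd.1 (heq.coprime_dvd_left hpe)⟩

theorem sum_sieveSupport_prod_le (q z : ℕ) {g : ℕ → ℝ} (hg : ∀ p, 0 ≤ g p) :
    ∑ e ∈ sieveSupport q z, ∏ p ∈ e.primeFactors, g p ≤ ∏ p ∈ primesCoprimeTo q z, (1 + g p) := by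
  have hinj : Set.InjOn Nat.primeFactors (sieveSupport q z : Set ℕ) := fun a ha b hb hab => by
    rw [← Nat.prod_primeFactors_of_squarefree (mem_sieveSupport.1 ha).2.1,
      ← Nat.prod_primeFactors_of_squarefree (mem_sieveSupport.1 hb).2.1]
    exact congrArg (fun s => ∏ p ∈ s, p) hab
  rw [prod_one_add, ← sum_image (f := fun s => ∏ p ∈ s, g p) hinj]
  refine sum_le_sum_of_subset_of_nonneg (fun s hs => ?_) fun s _ _ => prod_nonneg fun p _ => hg p
  obtain ⟨e, he, rfl⟩ := mem_image.1 hs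
  exact mem_powerset.2 (primeFactors_subset_primesCoprimeTo he)

theorem sum_multiples_le {e z : ℕ} (he : 0 < e) {S : Finset ℕ}
    (hS : ∀ m ∈ S, m ≤ z ∧ e ∣ m) :
    ∑ m ∈ S, (m : ℝ) ≤ (z : ℝ) ^ 2 / 2 * (1 / e) + z / 2 := by
  have hsub : S ⊆ (range (z / e + 1)).image (e * ·) := by
    intro m hm
    obtain ⟨hmz, c, rfl⟩ := hS m hm
    refine mem_image.2 ⟨c, mem_range.2 (Nat.lt_succ_of_le ?_), rfl⟩
    exact (Nat.le_div_iff_mul_le he).2 (by rwa [mul_comm])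
  have hgauss : ∀ k : ℕ, ∑ c ∈ range (k + 1), (c : ℝ) = k * (k + 1) / 2 := by
    intro k
    have := congrArg (Nat.cast : ℕ → ℝ) (sum_range_id_mul_two (k + 1))
    push_cast [Nat.add_sub_cancel] at this
    linarith
  calc ∑ m ∈ S, (m : ℝ) ≤ ∑ m ∈ (range (z / e + 1)).image (e * ·), (m : ℝ) :=
        sum_le_sum_of_subset_of_nonneg hsub fun _ _ _ => Nat.cast_nonneg _
    _ = e * ((z / e : ℕ) * ((z / e : ℕ) + 1) / 2) := by
        rw [sum_image fun a _ b _ h => Nat.eq_of_mul_eq_mul_left he h, ← hgauss, mul_sum]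
        exact sum_congr rfl fun c _ => by push_cast; ring
    _ ≤ e * (z / e * (z / e + 1) / 2) := by
        have : ((z / e : ℕ) : ℝ) ≤ z / e := Nat.cast_div_le
        gcongr
    _ = _ := by
        have : (e : ℝ) ≠ 0 := by exact_mod_cast he.ne'
        field_simp

theorem mem_sieveSupport_of_dvd {q z k m : ℕ} (hm : m ∈ sieveSupport q z) (h : k ∣ m) :
    k ∈ sieveSupport q z := by
  obtain ⟨⟨hm1, hmz⟩, hsq, hmq⟩ := mem_sieveSupport.1 hm
  exact mem_sieveSupport.2 ⟨⟨Nat.pos_of_dvd_of_pos h hm1, (Nat.le_of_dvd hm1 h).trans hmz⟩,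
    hsq.squarefree_of_dvd h, hmq.coprime_dvd_left h⟩

theorem sum_sieveSupport_sum_divisors (q z : ℕ) (f : ℕ → ℕ → ℝ) :
    ∑ m ∈ sieveSupport q z, ∑ e ∈ m.divisors, f m e =
      ∑ e ∈ sieveSupport q z, ∑ m ∈ sieveSupport q z with e ∣ m, f m e := by
  refine sum_comm' fun m e => ?_
  rw [Nat.mem_divisors, mem_filter]
  exact ⟨fun h => ⟨⟨h.1, h.2.1⟩, mem_sieveSupport_of_dvd h.1 h.2.1⟩,
    fun h => ⟨h.1.1, h.1.2, (pos_of_mem_sieveSupport h.1.1).ne'⟩⟩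

theorem sum_divisors_sq_div_totient_le (q z : ℕ) :
    ∑ m ∈ sieveSupport q z, (∑ d ∈ m.divisors, (d : ℝ) ^ 2) / m.totient ≤
      (z : ℝ) ^ 2 / 2 * ∏ p ∈ primesCoprimeTo q z, (1 + divisorExcess p / p) +
        z / 2 * ∏ p ∈ primesCoprimeTo q z, (1 + divisorExcess p) := by
  set J : ℕ → ℝ := fun e => ∏ p ∈ e.primeFactors, divisorExcess p
  have hJ0 : ∀ e, 0 ≤ J e := fun e => prod_nonneg fun p _ => divisorExcess_nonneg p
  have hJdiv : ∀ e ∈ sieveSupport q z, J e / e = ∏ p ∈ e.primeFactors, divisorExcess p / p := by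
    intro e he
    rw [prod_div_distrib, ← Nat.cast_prod,
      Nat.prod_primeFactors_of_squarefree (mem_sieveSupport.1 he).2.1]
  calc ∑ m ∈ sieveSupport q z, (∑ d ∈ m.divisors, (d : ℝ) ^ 2) / m.totient
      = ∑ m ∈ sieveSupport q z, ∑ e ∈ m.divisors, (m : ℝ) * J e :=
        sum_congr rfl fun m hm => by
          rw [sum_sq_divisors_div_totient (mem_sieveSupport.1 hm).2.1, mul_sum]
    _ = ∑ e ∈ sieveSupport q z, (∑ m ∈ sieveSupport q z with e ∣ m, (m : ℝ)) * J e := by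
        simp only [sum_sieveSupport_sum_divisors, sum_mul]
    _ ≤ ∑ e ∈ sieveSupport q z, ((z : ℝ) ^ 2 / 2 * (1 / e) + z / 2) * J e := by
        refine sum_le_sum fun e he => mul_le_mul_of_nonneg_right ?_ (hJ0 e)
        refine sum_multiples_le (pos_of_mem_sieveSupport he) fun m hm => ?_
        exact ⟨(mem_sieveSupport.1 (mem_filter.1 hm).1).1.2, (mem_filter.1 hm).2⟩
    _ = (z : ℝ) ^ 2 / 2 * ∑ e ∈ sieveSupport q z, ∏ p ∈ e.primeFactors, divisorExcess p / p +
          z / 2 * ∑ e ∈ sieveSupport q z, J e := by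
        rw [← sum_congr rfl hJdiv, mul_sum, mul_sum, ← sum_add_distrib]
        exact sum_congr rfl fun e _ => by ring
    _ ≤ _ := by
        gcongr
        · exact sum_sieveSupport_prod_le q z divisorExcess_div_nonneg
        · exact sum_sieveSupport_prod_le q z divisorExcess_nonneg

theorem prod_primesLE_le_of_step {g b : ℕ → ℝ} (hg : ∀ p, 1 ≤ g p) {k : ℕ}
    (base : ∏ p ∈ (2 * k + 2).primesLE, g p ≤ b k)
    (step : ∀ i ≥ k, b i * g (2 * i + 3) ≤ b (i + 1)) {i n : ℕ} (hi : k ≤ i) (hn : n ≤ 2 * i + 2) :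
    ∏ p ∈ n.primesLE, g p ≤ b i := by
  refine (prod_mono_set_of_one_le hg (Nat.primesLE_mono hn)).trans ?_
  clear hn
  induction i, hi using Nat.le_induction with
  | base => exact base
  | succ i hi ih =>
    have hnotPrime : ¬(2 * i + 3 + 1).Prime := fun h => by
      have := (Nat.prime_dvd_prime_iff_eq Nat.prime_two h).1 ⟨i + 2, by omega⟩
      omega
    have hsub : (2 * (i + 1) + 2).primesLE ⊆ insert (2 * i + 3) (2 * i + 2).primesLE := by
      rw [show 2 * (i + 1) + 2 = 2 * i + 3 + 1 by ring, Nat.primesLE_succ, if_neg hnotPrime,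
        Nat.primesLE_succ]
      split_ifs
      exacts [Subset.rfl, subset_insert _ _]
    calc ∏ p ∈ (2 * (i + 1) + 2).primesLE, g p
        ≤ ∏ p ∈ insert (2 * i + 3) (2 * i + 2).primesLE, g p := prod_mono_set_of_one_le hg hsub
      _ = g (2 * i + 3) * ∏ p ∈ (2 * i + 2).primesLE, g p :=
        prod_insert (Nat.notMem_primesLE (2 * i + 2))
      _ ≤ g (2 * i + 3) * b i := mul_le_mul_of_nonneg_left ih (zero_le_one.trans (hg _))
      _ ≤ b (i + 1) := (mul_comm _ _).trans_le (step i hi)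

theorem prod_one_add_divisorExcess_le {z : ℕ} (hz : 4 ≤ z) :
    ∏ p ∈ z.primesLE, (1 + divisorExcess p) ≤ 3 * √z := by
  have hstep : ∀ i : ℕ, i ≥ 1 →
      25 / 6 * √i * (1 + divisorExcess (2 * i + 3)) ≤ 25 / 6 * √(i + 1 : ℕ) := by
    intro i hi
    have hi' : (1 : ℝ) ≤ i := by exact_mod_cast hi
    have hfactor : 1 + divisorExcess (2 * i + 3) =
        ((2 * i + 3) ^ 2 + 1) / ((2 * i + 3) * (2 * i + 2)) := by
      rw [divisorExcess]
      push_cast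
      have : 2 * (i : ℝ) + 3 - 1 ≠ 0 := by linarith
      field_simp
      ring
    rw [mul_assoc, hfactor]
    refine mul_le_mul_of_nonneg_left (Real.le_sqrt_of_sq_le ?_) (by norm_num)
    rw [mul_pow, Real.sq_sqrt (by positivity), div_pow, ← mul_div_assoc,
      div_le_iff₀ (by positivity)]
    push_cast
    nlinarith [pow_pos (show (0 : ℝ) < i by linarith) 2, pow_pos (show (0 : ℝ) < i by linarith) 3]
  refine (prod_primesLE_le_of_step (g := fun p => 1 + divisorExcess p) (b := fun i => 25 / 6 * √i)
    one_le_one_add_divisorExcess (k := 1) ?_ hstep (i := (z - 1) / 2) (by omega)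
    (by omega)).trans ?_
  · rw [show Nat.primesLE (2 * 1 + 2) = {2, 3} by decide]
    norm_num [divisorExcess]
  · refine (pow_le_pow_iff_left₀ (by positivity) (by positivity) two_ne_zero).1 ?_
    rw [mul_pow, mul_pow, Real.sq_sqrt (by positivity), Real.sq_sqrt (by positivity)]
    have : (((z - 1) / 2 : ℕ) : ℝ) * 2 ≤ z := by exact_mod_cast (by omega : (z - 1) / 2 * 2 ≤ z)
    linarith

/-- An upper bound for both the factor `(1 + divisorExcess p / p) ^ 2` that a prime `p ∤ q`
contributes to the remainder term and the quotient of `p / (p - 1)` by `p ^ (1 / 16)`, which bounds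
the contribution of a prime `p ∣ q`. From `p = 7` on the former is the larger of the two. -/
noncomputable def localFactor (p : ℕ) : ℝ :=
  if p = 2 then 49 / 16 else if p = 3 then 3 / 2 else if p = 5 then 1.131 else
    if p = 7 then 1.056 else (1 + divisorExcess p / p) ^ 2

theorem localFactor_of_seven_lt {p : ℕ} (hp : 7 < p) :
    localFactor p = (1 + divisorExcess p / p) ^ 2 := by
  rw [localFactor, if_neg (by omega), if_neg (by omega), if_neg (by omega), if_neg (by omega)]

theorem one_le_localFactor (p : ℕ) : 1 ≤ localFactor p := by
  rw [localFactor]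
  split_ifs
  iterate 4 norm_num
  exact one_le_pow₀ (one_le_one_add_divisorExcess_div p)

theorem one_add_divisorExcess_div_sq_le (p : ℕ) :
    (1 + divisorExcess p / p) ^ 2 ≤ localFactor p := by
  rw [localFactor]
  split_ifs with h h h h
  iterate 4 subst h; norm_num [divisorExcess]
  exact le_rfl

theorem inv_one_sub_inv_le_localFactor_mul {p : ℕ} (hp : p.Prime) :
    (1 - (p : ℝ)⁻¹)⁻¹ ≤ localFactor p * (p : ℝ) ^ ((1 : ℝ) / 16) := by
  have hroot : ∀ c : ℝ, 0 ≤ c → c ^ 16 ≤ p → c ≤ (p : ℝ) ^ ((1 : ℝ) / 16) := by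
    intro c hc h
    rw [one_div, Real.le_rpow_inv_iff_of_pos hc (Nat.cast_nonneg p) (by norm_num)]
    exact_mod_cast h
  obtain hp11 | hp11 := le_or_gt 11 p
  · have hp' : (11 : ℝ) ≤ p := by exact_mod_cast hp11
    have hinv : (1 - (p : ℝ)⁻¹)⁻¹ ≤ 1.1 := by
      have : (p : ℝ)⁻¹ ≤ 11⁻¹ := inv_anti₀ (by norm_num) hp'
      rw [inv_le_comm₀ (by linarith) (by norm_num)]
      norm_num at this ⊢
      linarith
    calc (1 - (p : ℝ)⁻¹)⁻¹ ≤ (p : ℝ) ^ ((1 : ℝ) / 16) :=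
          hinv.trans (hroot 1.1 (by norm_num) (by norm_num; linarith))
      _ ≤ localFactor p * (p : ℝ) ^ ((1 : ℝ) / 16) :=
          le_mul_of_one_le_left (by positivity) (one_le_localFactor p)
  · have hcases : p = 2 ∨ p = 3 ∨ p = 5 ∨ p = 7 := by
      have := hp.two_le
      interval_cases p <;> first | omega | (exfalso; revert hp; norm_num)
    obtain rfl | rfl | rfl | rfl := hcases
    · have := hroot 1 (by norm_num) (by norm_num)
      norm_num [localFactor] at this ⊢
      linarith
    · have := hroot 1 (by norm_num) (by norm_num)
      norm_num [localFactor] at this ⊢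
      linarith
    · have := hroot (1250 / 1131) (by norm_num) (by norm_num)
      norm_num [localFactor] at this ⊢
      linarith
    · have := hroot 1.12 (by norm_num) (by norm_num)
      norm_num [localFactor] at this ⊢
      linarith

theorem one_sub_mul_one_add_divisorExcess_div_le {i : ℕ} (hi : 1 ≤ i) :
    (1 - 1 / (4 * i + 2)) * (1 + divisorExcess (2 * i + 3) / (2 * i + 3 : ℕ)) ≤
      1 - 1 / (4 * (i + 1 : ℕ) + 2) := by
  have hi' : (1 : ℝ) ≤ i := by exact_mod_cast hi
  have hexcess : divisorExcess (2 * i + 3) / (2 * i + 3 : ℕ) ≤ 1 / ((2 * i + 1) * (2 * i + 3)) := by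
    rw [divisorExcess, div_div]
    push_cast
    have : 0 < 2 * (i : ℝ) + 3 - 1 := by linarith
    rw [div_le_div_iff₀ (by positivity) (by positivity)]
    nlinarith
  have hle_one : (1 : ℝ) - 1 / (4 * i + 2) ≤ 1 := sub_le_self _ (by positivity)
  calc (1 - 1 / (4 * i + 2)) * (1 + divisorExcess (2 * i + 3) / (2 * i + 3 : ℕ))
      = 1 - 1 / (4 * i + 2) + (1 - 1 / (4 * i + 2)) *
          (divisorExcess (2 * i + 3) / (2 * i + 3 : ℕ)) := by ring
    _ ≤ 1 - 1 / (4 * i + 2) + 1 * (1 / ((2 * i + 1) * (2 * i + 3))) := by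
        gcongr
        exact divisorExcess_div_nonneg _
    _ = 1 - 1 / (4 * (i + 1 : ℕ) + 2) := by
        push_cast
        field_simp
        ring

theorem prod_localFactor_le (n : ℕ) : ∏ p ∈ n.primesLE, localFactor p ≤ 6.16 := by
  have hnonneg : ∀ i : ℕ, 0 ≤ 1 - 1 / (4 * i + 2 : ℝ) := fun i => by
    rw [sub_nonneg, div_le_one (by positivity)]
    linarith [show (0 : ℝ) ≤ i from Nat.cast_nonneg i]
  have hstep : ∀ i : ℕ, i ≥ 4 → 5.487 * (18 / 17 * (1 - 1 / (4 * i + 2 : ℝ))) ^ 2 *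
      localFactor (2 * i + 3) ≤ 5.487 * (18 / 17 * (1 - 1 / (4 * (i + 1 : ℕ) + 2 : ℝ))) ^ 2 := by
    intro i hi
    rw [localFactor_of_seven_lt (by omega), mul_assoc, ← mul_pow, mul_assoc (18 / 17)]
    have h := one_sub_mul_one_add_divisorExcess_div_le (i := i) (by omega)
    have := mul_nonneg (hnonneg i)
      (zero_le_one.trans (one_le_one_add_divisorExcess_div (2 * i + 3)))
    gcongr
  refine (prod_primesLE_le_of_step (b := fun i => 5.487 * (18 / 17 * (1 - 1 / (4 * i + 2 : ℝ))) ^ 2)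
    one_le_localFactor (k := 4) ?_ hstep (i := n + 4) (by omega) (by omega)).trans ?_
  · rw [show Nat.primesLE (2 * 4 + 2) = {2, 3, 5, 7} by decide]
    norm_num [localFactor]
  · have hle_one : 1 - 1 / (4 * (n + 4 : ℕ) + 2 : ℝ) ≤ 1 := sub_le_self _ (by positivity)
    have := hnonneg (n + 4)
    calc _ ≤ 5.487 * (18 / 17 * 1 : ℝ) ^ 2 := by gcongr
      _ ≤ _ := by norm_num

theorem div_totient_le_prod_localFactor {q : ℕ} (hq : q ≠ 0) :
    (q : ℝ) / q.totient ≤ (∏ p ∈ q.primeFactors, localFactor p) * (q : ℝ) ^ ((1 : ℝ) / 16) := by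
  have hradical : ∏ p ∈ q.primeFactors, (p : ℝ) ≤ q := by
    rw [← Nat.cast_prod]
    exact_mod_cast Nat.le_of_dvd (Nat.pos_of_ne_zero hq) (Nat.prod_primeFactors_dvd q)
  calc (q : ℝ) / q.totient = ∏ p ∈ q.primeFactors, (1 - (p : ℝ)⁻¹)⁻¹ := totient_div_eq_prod hq
    _ ≤ ∏ p ∈ q.primeFactors, (localFactor p * (p : ℝ) ^ ((1 : ℝ) / 16)) := by
        refine prod_le_prod (fun p _ => inv_nonneg.2 (sub_nonneg.2 (Nat.cast_inv_le_one p)))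
          fun p hp => inv_one_sub_inv_le_localFactor_mul (Nat.prime_of_mem_primeFactors hp)
    _ = (∏ p ∈ q.primeFactors, localFactor p) *
          (∏ p ∈ q.primeFactors, (p : ℝ)) ^ ((1 : ℝ) / 16) := by
        rw [prod_mul_distrib, Real.finsetProd_rpow _ _ fun _ _ => Nat.cast_nonneg _]
    _ ≤ (∏ p ∈ q.primeFactors, localFactor p) * (q : ℝ) ^ ((1 : ℝ) / 16) := by
        have : 0 ≤ ∏ p ∈ q.primeFactors, localFactor p :=
          prod_nonneg fun p _ => zero_le_one.trans (one_le_localFactor p)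
        gcongr

theorem prod_localFactor_mul_prod_localFactor_le (q z : ℕ) :
    (∏ p ∈ primesCoprimeTo q z, localFactor p) * ∏ p ∈ q.primeFactors, localFactor p ≤ 6.16 := by
  have hdisjoint : Disjoint (primesCoprimeTo q z) q.primeFactors := disjoint_left.2 fun p hp hpq =>
    (mem_filter.1 hp).2 (Nat.dvd_of_mem_primeFactors hpq)
  rw [← prod_union hdisjoint]
  refine (prod_mono_set_of_one_le one_le_localFactor (union_subset (fun p hp => ?_) fun p hp => ?_)
    ).trans (prod_localFactor_le (max z q))
  · exact Nat.primesLE_mono (le_max_left z q) (mem_filter.1 hp).1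
  · exact Nat.mem_primesLE.2 ⟨(Nat.le_of_mem_primeFactors hp).trans (le_max_right z q),
      Nat.prime_of_mem_primeFactors hp⟩

theorem prod_sq_mul_div_totient_le {q : ℕ} (hq : q ≠ 0) (z : ℕ) :
    (∏ p ∈ primesCoprimeTo q z, (1 + divisorExcess p / p)) ^ 2 * (q / q.totient) ≤
      6.16 * (q : ℝ) ^ ((1 : ℝ) / 16) := by
  have hsq : (∏ p ∈ primesCoprimeTo q z, (1 + divisorExcess p / p)) ^ 2 ≤
      ∏ p ∈ primesCoprimeTo q z, localFactor p := by
    rw [← prod_pow]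
    exact prod_le_prod (fun p _ => sq_nonneg _) fun p _ => one_add_divisorExcess_div_sq_le p
  calc _ ≤ (∏ p ∈ primesCoprimeTo q z, localFactor p) *
        ((∏ p ∈ q.primeFactors, localFactor p) * (q : ℝ) ^ ((1 : ℝ) / 16)) := by
        gcongr
        · exact prod_nonneg fun p _ => zero_le_one.trans (one_le_localFactor p)
        · exact div_totient_le_prod_localFactor hq
    _ ≤ _ := by
        rw [← mul_assoc]
        gcongr
        exact prod_localFactor_mul_prod_localFactor_le q z

theorem sum_divisors_sq_div_totient_sq_le (q : ℕ) {z : ℕ} (hz : 10 ^ 6 ≤ z) :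
    (∑ m ∈ sieveSupport q z, (∑ d ∈ m.divisors, (d : ℝ) ^ 2) / m.totient) ^ 2 ≤
      1.01 / 4 * (z : ℝ) ^ 4 * (∏ p ∈ primesCoprimeTo q z, (1 + divisorExcess p / p)) ^ 2 := by
  set C := ∏ p ∈ primesCoprimeTo q z, (1 + divisorExcess p / p)
  have hz' : (10 : ℝ) ^ 6 ≤ z := by exact_mod_cast hz
  have hC1 : 1 ≤ C := one_le_prod fun p _ => one_le_one_add_divisorExcess_div p
  have hsqrt : 3 * √(z : ℝ) ≤ 0.003 * z := by
    have : (1000 : ℝ) ≤ √z := Real.le_sqrt_of_sq_le (by linarith)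
    nlinarith [Real.sq_sqrt (show (0 : ℝ) ≤ z by positivity)]
  have hsecond : ∏ p ∈ primesCoprimeTo q z, (1 + divisorExcess p) ≤ 0.003 * z * C :=
    calc _ ≤ ∏ p ∈ z.primesLE, (1 + divisorExcess p) :=
          prod_mono_set_of_one_le one_le_one_add_divisorExcess (filter_subset _ _)
      _ ≤ 0.003 * z := (prod_one_add_divisorExcess_le (by omega)).trans hsqrt
      _ ≤ 0.003 * z * C := le_mul_of_one_le_right (by positivity) hC1
  calc _ ≤ ((z : ℝ) ^ 2 / 2 * C + z / 2 * (0.003 * z * C)) ^ 2 := by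
        gcongr
        refine (sum_divisors_sq_div_totient_le q z).trans ?_
        gcongr
    _ = 1.003 ^ 2 / 4 * z ^ 4 * C ^ 2 := by ring
    _ ≤ _ := by gcongr; norm_num

/-! ### Density of the primes among the invertible classes -/

theorem sum_prime_modEq_trapezoid_le_log (N a : ℕ) {q z : ℕ} (hq : 0 < q) (hz : 10 ^ 6 ≤ z) :
    ∑ p ∈ range N with p ≡ a [MOD q] ∧ p.Prime ∧ z < p, (trapezoid N p : ℝ) ≤
      (0.15 * N ^ 2 / (Real.log z + 0.88) +
        0.973 * (z : ℝ) ^ 4 * ((q : ℝ) ^ 2 * (q : ℝ) ^ ((1 : ℝ) / 16)) /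
          (Real.log z + 0.88) ^ 2) / q.totient := by
  have hG := log_add_le_selbergSum hq.ne' (by omega : 100 ≤ z)
  have hH := sum_divisors_sq_div_totient_sq_le q hz
  have hC := prod_sq_mul_div_totient_le hq.ne' z
  set G := selbergSum q z
  set H := ∑ m ∈ sieveSupport q z, (∑ d ∈ m.divisors, (d : ℝ) ^ 2) / m.totient
  set C := ∏ p ∈ primesCoprimeTo q z, (1 + divisorExcess p / p)
  set l := Real.log z + 0.88
  have hl0 : 0 < l := add_pos_of_nonneg_of_pos (Real.log_natCast_nonneg z) (by norm_num)
  have hq0 : (0 : ℝ) < q := by exact_mod_cast hq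
  have : (0 : ℝ) < q.totient := by exact_mod_cast Nat.totient_pos.2 hq
  have hG' : l * q.totient / q ≤ G := by
    rw [div_le_iff₀ hq0]
    calc l * q.totient ≤ q / q.totient * G * q.totient := by gcongr
      _ = G * q := by field_simp
  have hmain : 0.15 * (N : ℝ) ^ 2 / (q * G) ≤ 0.15 * (N : ℝ) ^ 2 / l / q.totient := by
    rw [div_div]
    refine div_le_div_of_nonneg_left (by positivity) (by positivity) ?_
    rwa [div_le_iff₀ hq0, mul_comm G] at hG'
  have hremainder : 5 * q / 8 * (H / G) ^ 2 ≤
      0.973 * (z : ℝ) ^ 4 * ((q : ℝ) ^ 2 * (q : ℝ) ^ ((1 : ℝ) / 16)) / l ^ 2 / q.totient := by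
    calc 5 * q / 8 * (H / G) ^ 2
        = 5 * q / 8 * (H ^ 2 / G ^ 2) := by rw [div_pow]
      _ ≤ 5 * q / 8 * ((1.01 / 4 * (z : ℝ) ^ 4 * C ^ 2) / (l * q.totient / q) ^ 2) := by gcongr
      _ = 5.05 / 32 * (z : ℝ) ^ 4 * q ^ 2 * (C ^ 2 * (q / q.totient)) / l ^ 2 / q.totient := by
          field_simp
          ring
      _ ≤ 5.05 / 32 * (z : ℝ) ^ 4 * q ^ 2 * (6.16 * (q : ℝ) ^ ((1 : ℝ) / 16)) / l ^ 2 /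
          q.totient := by gcongr
      _ = (5.05 / 32 * 6.16) * ((z : ℝ) ^ 4 * ((q : ℝ) ^ 2 * (q : ℝ) ^ ((1 : ℝ) / 16))) / l ^ 2 /
          q.totient := by ring
      _ ≤ 0.973 * ((z : ℝ) ^ 4 * ((q : ℝ) ^ 2 * (q : ℝ) ^ ((1 : ℝ) / 16))) / l ^ 2 /
          q.totient := by gcongr; norm_num
      _ = _ := by ring
  rw [add_div]
  exact (sum_prime_modEq_trapezoid_le N a hq (by omega)).trans (add_le_add hmain hremainder)

theorem exp_thirtySix_le {x : ℝ} (hx : 9 * 10 ^ 15 ≤ x) : Real.exp 36 ≤ x := by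
  rw [show (36 : ℝ) = (36 : ℕ) * 1 by norm_num, Real.exp_nat_mul]
  calc Real.exp 1 ^ 36 ≤ 2.7183 ^ 36 := by gcongr; linarith [Real.exp_one_lt_d9]
    _ ≤ 9 * 10 ^ 15 := by norm_num
    _ ≤ x := hx

theorem log_le_mul_sqrt {x : ℝ} (hx : Real.exp 36 ≤ x) : Real.log x ≤ 0.00001 * √x := by
  have hx0 : 0 < x := (Real.exp_pos 36).trans_le hx
  have hmono := Real.log_div_sqrt_antitoneOn (Real.exp_le_exp.2 (by norm_num : (2 : ℝ) ≤ 36))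
    ((Real.exp_le_exp.2 (by norm_num)).trans hx) hx
  have hsqrt : √(Real.exp 36) = Real.exp 1 ^ 18 := by
    rw [Real.sqrt_eq_iff_mul_self_eq (Real.exp_pos _).le (by positivity), ← Real.exp_nat_mul,
      ← Real.exp_add]
    norm_num
  have hexp : (3600000 : ℝ) ≤ Real.exp 1 ^ 18 :=
    calc (3600000 : ℝ) ≤ 2.718 ^ 18 := by norm_num
      _ ≤ _ := by gcongr; linarith [Real.exp_one_gt_d9]
  simp only [Real.log_exp, hsqrt] at hmono
  rw [← div_le_iff₀ (Real.sqrt_pos.2 hx0)]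
  refine hmono.trans ((div_le_iff₀ (by positivity)).2 ?_)
  linarith

theorem trapezoid_error_le {x y : ℝ} (hx : Real.exp 36 ≤ x) (hy : y ≤ 2 * √x) :
    6 * (2 * x) * (Real.log (2 * x) + 2) + 1.2 * (2 * x) * √(2 * x) * Real.log (2 * x) +
      Real.log x * (0.6 * (2 * x) * y) ≤ 0.00004 * (2 * x) ^ 2 := by
  have hx0 : 0 < x := (Real.exp_pos 36).trans_le hx
  have hlog36 : 36 ≤ Real.log x := (Real.le_log_iff_exp_le hx0).2 hx
  have hlog := log_le_mul_sqrt hx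
  have hsq : √x ^ 2 = x := Real.sq_sqrt hx0.le
  set s := √x
  have : 3600000 ≤ s := by linarith
  have hlog2 : Real.log (2 * x) ≤ 0.00002 * s := by
    rw [Real.log_mul two_ne_zero hx0.ne']
    linarith [Real.log_two_lt_d9]
  have hlog2_nonneg : 0 ≤ Real.log (2 * x) := Real.log_nonneg (by nlinarith)
  have hsqrt2 : √(2 * x) ≤ 1.5 * s := by
    rw [Real.sqrt_le_left (by positivity)]
    nlinarith
  calc _ ≤ 6 * (2 * x) * (0.00002 * s + 2) + 1.2 * (2 * x) * (1.5 * s) * (0.00002 * s) +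
          Real.log x * (0.6 * (2 * x) * (2 * s)) := by gcongr
    _ ≤ 6 * (2 * x) * (0.00002 * s + 2) + 1.2 * (2 * x) * (1.5 * s) * (0.00002 * s) +
          (0.00001 * s) * (0.6 * (2 * x) * (2 * s)) := by gcongr
    _ = 2 * x * (0.000048 * s ^ 2 + 0.00012 * s + 12) := by ring
    _ ≤ 2 * x * (0.00008 * s ^ 2) := by gcongr; nlinarith
    _ = _ := by rw [hsq]; ring

theorem mul_sieve_bound_le {L l : ℝ} (hL : 36 ≤ L) (hl : 0.40332 * L + 0.4214 ≤ l) :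
    L * (0.4 * (0.15 / l + 0.03892 / l ^ 2)) ≤ 0.1489 := by
  have hl0 : 0 < l := by linarith
  calc L * (0.4 * (0.15 / l + 0.03892 / l ^ 2)) = L * (0.06 * l + 0.015568) / l ^ 2 := by
        field_simp
        ring
    _ ≤ 0.1489 := by
        rw [div_le_iff₀ (by positivity)]
        nlinarith

theorem sixteen_mul_log_le {q X : ℕ} (hq : 0 < q) (hX : 9 * 10 ^ 15 ≤ X)
    (h : q ^ 16 ≤ (X + 30) ^ 3) : 16 * Real.log q ≤ 3 * Real.log X + 0.000001 := by
  have hX' : (9 * 10 ^ 15 : ℝ) ≤ X := by exact_mod_cast hX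
  have hX0 : (0 : ℝ) < X := by linarith
  have : (0 : ℝ) < q := by exact_mod_cast hq
  have hlog : Real.log ((q : ℝ) ^ 16) ≤ Real.log ((X + 30 : ℝ) ^ 3) :=
    Real.log_le_log (by positivity) (by exact_mod_cast h)
  rw [Real.log_pow, Real.log_pow, show (X + 30 : ℝ) = X * (1 + 30 / X) by field_simp,
    Real.log_mul hX0.ne' (by positivity)] at hlog
  have hshift := Real.log_le_sub_one_of_pos (show (0 : ℝ) < 1 + 30 / X by positivity)
  have hsmall : 30 / (X : ℝ) ≤ 0.0000001 := by
    rw [div_le_iff₀ hX0]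
    linarith
  push_cast at hlog
  linarith

theorem neg_le_log_two_fifths : -0.917 ≤ Real.log 0.4 := by
  have h : Real.log ((2 : ℝ)⁻¹ ^ 41) ≤ Real.log ((0.4 : ℝ) ^ 31) :=
    Real.log_le_log (by norm_num) (by norm_num)
  rw [Real.log_pow, Real.log_pow, Real.log_inv] at h
  push_cast at h
  linarith [Real.log_two_lt_d9]

theorem log_le_log_floor_add {t : ℝ} (ht : 1100000 ≤ t) :
    Real.log t ≤ Real.log ⌊t⌋₊ + 0.000001 := by
  have hlt := Nat.lt_floor_add_one t
  have hz0 : (0 : ℝ) < ⌊t⌋₊ := by linarith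
  rw [← sub_le_iff_le_add', ← Real.log_div (by linarith) hz0.ne']
  refine (Real.log_le_sub_one_of_pos (by positivity)).trans ?_
  rw [sub_le_iff_le_add, div_le_iff₀ hz0]
  linarith

-- The level is chosen so that `z ^ 4 * q ^ (33 / 16) ≈ (0.4 * X) ^ 2`, which keeps the remainder
-- term of the sieve of order `X ^ 2 / log z ^ 2`.
theorem exists_sieve_level {q X : ℕ} (hq : 0 < q) (hX : 9 * 10 ^ 15 ≤ X)
    (h : q ^ 16 ≤ (X + 30) ^ 3) :
    ∃ z : ℕ, 10 ^ 6 ≤ z ∧ (z + q : ℝ) ≤ 2 * √X ∧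
      (z : ℝ) ^ 4 * ((q : ℝ) ^ 2 * (q : ℝ) ^ ((1 : ℝ) / 16)) ≤ 0.16 * X ^ 2 ∧
      0.40332 * Real.log X + 0.4214 ≤ Real.log z + 0.88 := by
  have hX' : (9 * 10 ^ 15 : ℝ) ≤ X := by exact_mod_cast hX
  have hX0 : (0 : ℝ) < X := by linarith
  have hq0 : (0 : ℝ) < q := by exact_mod_cast hq
  have hq1 : (1 : ℝ) ≤ q := by exact_mod_cast hq
  have hlogX : 36 ≤ Real.log X := (Real.le_log_iff_exp_le hX0).2 (exp_thirtySix_le hX')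
  have hlogq := sixteen_mul_log_le hq hX h
  have hlog04 := neg_le_log_two_fifths
  set t : ℝ := √(0.4 * X / (q : ℝ) ^ ((33 : ℝ) / 32)) with ht
  have ht0 : 0 < t := by positivity
  have hlogt : Real.log t = (Real.log 0.4 + Real.log X - 33 / 32 * Real.log q) / 2 := by
    rw [ht, Real.log_sqrt (by positivity), Real.log_div (by positivity) (by positivity),
      Real.log_mul (by norm_num) hX0.ne', Real.log_rpow hq0]
  have ht_large : 1100000 ≤ t :=
    calc (1100000 : ℝ) ≤ 2.718 ^ 14 := by norm_num
      _ ≤ Real.exp 1 ^ 14 := by gcongr; linarith [Real.exp_one_gt_d9]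
      _ = Real.exp 14 := by rw [← Real.exp_nat_mul]; norm_num
      _ ≤ t := (Real.le_log_iff_exp_le ht0).1 (by linarith)
  have hzt : (⌊t⌋₊ : ℝ) ≤ t := Nat.floor_le ht0.le
  refine ⟨⌊t⌋₊, Nat.le_floor (by norm_num; linarith), ?_, ?_, ?_⟩
  · have hqX : (q : ℝ) ≤ √X := by
      rw [← Real.log_le_log_iff hq0 (by positivity), Real.log_sqrt hX0.le]
      linarith
    have htX : t ≤ √X := Real.sqrt_le_sqrt (div_le_of_le_mul₀ (by positivity) hX0.le (by
      nlinarith [Real.one_le_rpow hq1 (show (0 : ℝ) ≤ 33 / 32 by norm_num)]))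
    linarith
  · have hrpow : (q : ℝ) ^ 2 * (q : ℝ) ^ ((1 : ℝ) / 16) = ((q : ℝ) ^ ((33 : ℝ) / 32)) ^ 2 := by
      rw [← Real.rpow_natCast, ← Real.rpow_natCast, ← Real.rpow_mul hq0.le, ← Real.rpow_add hq0]
      norm_num
    calc (⌊t⌋₊ : ℝ) ^ 4 * ((q : ℝ) ^ 2 * (q : ℝ) ^ ((1 : ℝ) / 16))
        ≤ t ^ 4 * ((q : ℝ) ^ ((33 : ℝ) / 32)) ^ 2 := by rw [hrpow]; gcongr
      _ = (t ^ 2 * (q : ℝ) ^ ((33 : ℝ) / 32)) ^ 2 := by ring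
      _ = (0.4 * X) ^ 2 := by
          rw [ht, Real.sq_sqrt (by positivity), div_mul_cancel₀ _ (by positivity)]
      _ = 0.16 * X ^ 2 := by ring
  · linarith [log_le_log_floor_add ht_large]

/-- The invertible classes modulo `q` of the primes up to `X`. -/
noncomputable def primeClasses (q X : ℕ) [NeZero q] : Finset (ZMod q)ˣ := by
  classical
  exact {u | ∃ p : ℕ, p.Prime ∧ p ≤ X ∧ (p : ZMod q) = u}

theorem mem_primeClasses {q X : ℕ} [NeZero q] {u : (ZMod q)ˣ} :
    u ∈ primeClasses q X ↔ ∃ p : ℕ, p.Prime ∧ p ≤ X ∧ (p : ZMod q) = u := by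
  simp [primeClasses]

theorem unitOfCoprime_mem_primeClasses {q X p : ℕ} [NeZero q] (hp : p.Prime) (hpX : p ≤ X)
    (hpq : p.Coprime q) : ZMod.unitOfCoprime p hpq ∈ primeClasses q X :=
  mem_primeClasses.2 ⟨p, hp, hpX, (ZMod.coe_unitOfCoprime p hpq).symm⟩

theorem primesLE_subset_biUnion_union {q X N : ℕ} [NeZero q] (hN : X < N) (z : ℕ) :
    X.primesLE ⊆ ((primeClasses q X).biUnion fun u =>
      {p ∈ range N | p ≡ (u : ZMod q).val [MOD q] ∧ p.Prime ∧ z < p}) ∪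
        (Icc 1 z ∪ Icc 1 q) := by
  intro p hp
  obtain ⟨hpX, hp⟩ := Nat.mem_primesLE.1 hp
  simp only [mem_union, mem_biUnion, mem_filter, mem_range, mem_Icc]
  by_cases hpz : p ≤ z
  · exact Or.inr (Or.inl ⟨hp.pos, hpz⟩)
  by_cases hpq : p ∣ q
  · exact Or.inr (Or.inr ⟨hp.pos, Nat.le_of_dvd (Nat.pos_of_ne_zero (NeZero.ne q)) hpq⟩)
  have hcoprime := hp.coprime_iff_not_dvd.2 hpq
  refine Or.inl ⟨ZMod.unitOfCoprime p hcoprime,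
    unitOfCoprime_mem_primeClasses hp hpX hcoprime, by omega, ?_, hp, by omega⟩
  rw [← ZMod.natCast_eq_natCast_iff, ZMod.natCast_zmod_val, ZMod.coe_unitOfCoprime]

theorem pairwiseDisjoint_filter_modEq_val {q : ℕ} [NeZero q] (s : Set (ZMod q)ˣ) (t : Finset ℕ)
    (P : ℕ → Prop) [DecidablePred P] :
    s.PairwiseDisjoint fun u => {n ∈ t | n ≡ (u : ZMod q).val [MOD q] ∧ P n} := by
  intro u _ v _ huv
  rw [Function.onFun, disjoint_left]
  intro n hu hv
  refine huv (Units.ext (ZMod.val_injective q ?_))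
  have hmod := (mem_filter.1 hu).2.1.symm.trans (mem_filter.1 hv).2.1
  exact hmod.eq_of_lt_of_lt (ZMod.val_lt _) (ZMod.val_lt _)

theorem sum_primesLE_le_card_primeClasses_mul_add {q X N z : ℕ} [NeZero q] (hN : X < N)
    {f : ℕ → ℝ} {B C : ℝ} (hf : ∀ n, 0 ≤ f n) (hfC : ∀ n, f n ≤ C)
    (hB : ∀ a, ∑ p ∈ range N with p ≡ a [MOD q] ∧ p.Prime ∧ z < p, f p ≤ B) :
    ∑ p ∈ X.primesLE, f p ≤ #(primeClasses q X) * B + C * (z + q) := by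
  classical
  have hC : 0 ≤ C := (hf 0).trans (hfC 0)
  have hcard : (#(Icc 1 z ∪ Icc 1 q) : ℝ) ≤ z + q := by
    exact_mod_cast (card_union_le (Icc 1 z) (Icc 1 q)).trans_eq (by simp)
  set S := (primeClasses q X).biUnion fun u =>
    {p ∈ range N | p ≡ (u : ZMod q).val [MOD q] ∧ p.Prime ∧ z < p}
  calc ∑ p ∈ X.primesLE, f p
      ≤ ∑ p ∈ S ∪ (Icc 1 z ∪ Icc 1 q), f p :=
        sum_le_sum_of_subset_of_nonneg (primesLE_subset_biUnion_union hN z) fun _ _ _ => hf _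
    _ ≤ ∑ p ∈ S, f p + ∑ p ∈ Icc 1 z ∪ Icc 1 q, f p :=
        le_of_le_of_eq (le_add_of_nonneg_right (sum_nonneg fun _ _ => hf _)) sum_union_inter
    _ ≤ ∑ _u ∈ primeClasses q X, B + #(Icc 1 z ∪ Icc 1 q) • C := by
        rw [sum_biUnion (pairwiseDisjoint_filter_modEq_val _ _ _)]
        exact add_le_add (sum_le_sum fun _ _ => hB _) (sum_le_card_nsmul _ _ _ fun p _ => hfC p)
    _ ≤ #(primeClasses q X) * B + C * (z + q) := by
        rw [sum_const, nsmul_eq_mul, nsmul_eq_mul, mul_comm _ C]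
        gcongr

theorem sum_prime_modEq_trapezoid_le_of_level {q X z : ℕ} (a : ℕ) {l : ℝ} (hq : 0 < q)
    (hz : 10 ^ 6 ≤ z) (hl : l = Real.log z + 0.88)
    (hzq : (z : ℝ) ^ 4 * ((q : ℝ) ^ 2 * (q : ℝ) ^ ((1 : ℝ) / 16)) ≤ 0.16 * X ^ 2) :
    ∑ p ∈ range (2 * X) with p ≡ a [MOD q] ∧ p.Prime ∧ z < p, (trapezoid (2 * X) p : ℝ) ≤
      (2 * X) ^ 2 * (0.15 / l + 0.03892 / l ^ 2) / q.totient := by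
  refine (sum_prime_modEq_trapezoid_le_log (2 * X) a hq hz).trans ?_
  rw [← hl, Nat.cast_mul, Nat.cast_ofNat, mul_add, mul_div_assoc', mul_div_assoc', mul_comm 0.15]
  gcongr (_ + ?_ / _) / _
  linarith

theorem sum_primesLE_trapezoid_le_of_card_primeClasses_le {q X z : ℕ} [NeZero q] {l : ℝ}
    (hX : 0 < X) (hz : 10 ^ 6 ≤ z) (hl : l = Real.log z + 0.88)
    (hzq : (z : ℝ) ^ 4 * ((q : ℝ) ^ 2 * (q : ℝ) ^ ((1 : ℝ) / 16)) ≤ 0.16 * X ^ 2)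
    (hcard : 5 * #(primeClasses q X) ≤ 2 * q.totient) :
    ∑ p ∈ X.primesLE, (trapezoid (2 * X) p : ℝ) ≤
      (2 * X) ^ 2 * (0.4 * (0.15 / l + 0.03892 / l ^ 2)) + 0.6 * (2 * X) * (z + q) := by
  have hq : 0 < q := Nat.pos_of_ne_zero (NeZero.ne q)
  have : (0 : ℝ) < q.totient := by exact_mod_cast Nat.totient_pos.2 hq
  have hl0 : 0 < l := hl ▸ add_pos_of_nonneg_of_pos (Real.log_natCast_nonneg z) (by norm_num)
  have htrapezoid (n : ℕ) : (trapezoid (2 * X) n : ℝ) ≤ 0.6 * (2 * X) := by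
    have : (5 * trapezoid (2 * X) n : ℝ) ≤ 3 * (2 * X) := by
      exact_mod_cast five_mul_trapezoid_le (2 * X) n
    linarith
  have hcard' : (#(primeClasses q X) : ℝ) ≤ 0.4 * q.totient := by
    have : 5 * (#(primeClasses q X) : ℝ) ≤ 2 * q.totient := by exact_mod_cast hcard
    linarith
  refine (sum_primesLE_le_card_primeClasses_mul_add (by omega : X < 2 * X)
    (fun _ => Nat.cast_nonneg _) htrapezoid
    fun a => sum_prime_modEq_trapezoid_le_of_level a hq hz hl hzq).trans (add_le_add_left ?_ _)
  calc _ ≤ 0.4 * q.totient * ((2 * X) ^ 2 * (0.15 / l + 0.03892 / l ^ 2) / q.totient) := by gcongr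
    _ = _ := by field_simp

theorem two_mul_totient_lt_five_mul_card_primeClasses {q X : ℕ} [NeZero q] (h30 : 30 ∣ X)
    (hX : 9 * 10 ^ 15 ≤ X) (h : q ^ 16 ≤ (X + 30) ^ 3) :
    2 * q.totient < 5 * #(primeClasses q X) := by
  obtain ⟨z, hz, hzX, hzq, hl⟩ := exists_sieve_level (Nat.pos_of_ne_zero (NeZero.ne q)) hX h
  by_contra! hcard
  have hX36 : Real.exp 36 ≤ X := exp_thirtySix_le (by exact_mod_cast hX)
  have hX0 : (0 : ℝ) < X := (Real.exp_pos 36).trans_le hX36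
  have hL : 36 ≤ Real.log X := (Real.le_log_iff_exp_le hX0).2 hX36
  have hlower := le_log_mul_sum_prime_trapezoid (by omega) h30 (rfl : 2 * X = 2 * X)
  have hupper := sum_primesLE_trapezoid_le_of_card_primeClasses_le (by omega) hz rfl hzq hcard
  have hmain := mul_le_mul_of_nonneg_left (mul_sieve_bound_le hL hl) (sq_nonneg (2 * X : ℝ))
  have herror := trapezoid_error_le hX36 hzX
  push_cast at hlower
  nlinarith [mul_le_mul_of_nonneg_left hupper (by linarith : 0 ≤ Real.log X)]

/-! ### Products of three primes to a large modulus -/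

theorem primeClasses_mul_mul_eq_univ {q X : ℕ} [NeZero q] [DecidableEq (ZMod q)ˣ]
    (hqX : (2 * q * (1 + q)) ^ 2 + q ≤ X) (hcard : 2 * q.totient < 5 * #(primeClasses q X)) :
    primeClasses q X * primeClasses q X * primeClasses q X = univ := by
  by_contra hne
  obtain ⟨H, hH, hin | hout⟩ := exists_index_eq_two_of_mul_mul_ne_univ
    (by rwa [ZMod.card_units_eq_totient]) hne
  · have hH_ne_top : H ≠ ⊤ := by
      rintro rfl
      simp at hH
    obtain ⟨p, hp, hpq, hcop, hpH⟩ := exists_prime_notMem_of_ne_top hH_ne_top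
    exact hpH (hin _ (unitOfCoprime_mem_primeClasses hp (by omega) hcop))
  · obtain ⟨p, hp, hpq, hcop, hpH⟩ := exists_prime_mem_of_index_eq_two (NeZero.ne q) hH
    exact hout _ (unitOfCoprime_mem_primeClasses hp (hpq.trans hqX) hcop) hpH

theorem exists_primes_mul_mul_modEq_of_eq_univ {q X a : ℕ} [NeZero q] [DecidableEq (ZMod q)ˣ]
    (h : primeClasses q X * primeClasses q X * primeClasses q X = univ) (ha : a.Coprime q) :
    ∃ p₁ p₂ p₃ : ℕ, p₁.Prime ∧ p₂.Prime ∧ p₃.Prime ∧ p₁ ≤ X ∧ p₂ ≤ X ∧ p₃ ≤ X ∧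
      p₁ * p₂ * p₃ ≡ a [MOD q] := by
  have hmem := mem_univ (ZMod.unitOfCoprime a ha)
  simp only [← h, mem_mul, mem_primeClasses] at hmem
  obtain ⟨_, ⟨u, ⟨p₁, hp₁, hle₁, hu⟩, v, ⟨p₂, hp₂, hle₂, hv⟩, rfl⟩,
    w, ⟨p₃, hp₃, hle₃, hw⟩, heq⟩ := hmem
  refine ⟨p₁, p₂, p₃, hp₁, hp₂, hp₃, hle₁, hle₂, hle₃, ?_⟩
  rw [← ZMod.natCast_eq_natCast_iff]
  push_cast
  rw [hu, hv, hw, ← Units.val_mul, ← Units.val_mul, heq, ZMod.coe_unitOfCoprime]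

theorem sq_add_le_of_pow_sixteen_le {q X : ℕ} (hq : 1000 ≤ q) (h : q ^ 16 ≤ (X + 30) ^ 3) :
    (2 * q * (1 + q)) ^ 2 + q ≤ X := by
  by_contra! hlt
  have hX : X + 30 ≤ 6 * q ^ 4 := by nlinarith [pow_le_pow_left₀ (by omega) hq 3]
  have hpow : q ^ 16 ≤ 216 * q ^ 12 :=
    h.trans ((Nat.pow_le_pow_left hX 3).trans_eq (by ring))
  have hq4 : 1000 ^ 4 ≤ q ^ 4 := Nat.pow_le_pow_left hq 4
  have hq12 : 0 < q ^ 12 := by positivity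
  nlinarith

theorem exists_primes_mul_mul_modEq_of_le {q a : ℕ} {y : ℝ} (hq : 1000 ≤ q)
    (hy : (q : ℝ) ^ 16 ≤ y ^ 3) (ha : a.Coprime q) :
    ∃ p₁ p₂ p₃ : ℕ, p₁.Prime ∧ p₂.Prime ∧ p₃.Prime ∧ p₁ ≤ ⌊y⌋₊ ∧ p₂ ≤ ⌊y⌋₊ ∧ p₃ ≤ ⌊y⌋₊ ∧
      p₁ * p₂ * p₃ ≡ a [MOD q] := by
  classical
  have : NeZero q := ⟨by omega⟩
  have hy16 : (10 : ℝ) ^ 16 ≤ y := by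
    refine (Odd.pow_le_pow (by decide : Odd 3)).1 (le_trans ?_ hy)
    calc ((10 : ℝ) ^ 16) ^ 3 = 1000 ^ 16 := by norm_num
      _ ≤ (q : ℝ) ^ 16 := by gcongr; exact_mod_cast hq
  set X := 30 * (⌊y⌋₊ / 30)
  have hXle : X ≤ ⌊y⌋₊ := Nat.mul_div_le _ _
  have hfloor : 10 ^ 16 ≤ ⌊y⌋₊ := Nat.le_floor (by exact_mod_cast hy16)
  have hqX : q ^ 16 ≤ (X + 30) ^ 3 := by
    have hyX : y ≤ X + 30 :=
      (Nat.lt_floor_add_one y).le.trans (by exact_mod_cast (by omega : ⌊y⌋₊ + 1 ≤ X + 30))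
    exact_mod_cast hy.trans (pow_le_pow_left₀ (by linarith) hyX 3)
  obtain ⟨p₁, p₂, p₃, hp₁, hp₂, hp₃, hle₁, hle₂, hle₃, hmod⟩ :=
    exists_primes_mul_mul_modEq_of_eq_univ (primeClasses_mul_mul_eq_univ
      (sq_add_le_of_pow_sixteen_le hq hqX)
      (two_mul_totient_lt_five_mul_card_primeClasses (dvd_mul_right 30 _) (by omega) hqX)) ha
  exact ⟨p₁, p₂, p₃, hp₁, hp₂, hp₃, hle₁.trans hXle, hle₂.trans hXle, hle₃.trans hXle, hmod⟩

/-! ### Primes in residue classes to a small modulus -/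

/-- A bit mask marking primes: the `i`-th bit, for `i < 2 ^ k`, tells whether `1 < n + i` is
coprime to `363!`, which means that `n + i` is prime as long as it is smaller than `363 ^ 2`. The
recursion is on `k` rather than along the interval to keep its depth small. -/
def primeMask : ℕ → ℕ → ℕ
  | 0, n => bif Nat.blt 1 n && Nat.gcd n (Nat.factorial 363) == 1 then 1 else 0
  | k + 1, n => primeMask k n ||| primeMask k (n + 2 ^ k) <<< 2 ^ k

theorem prime_of_coprime_factorial {n m : ℕ} (hn : 1 < n) (hnm : n < m ^ 2)
    (h : n.Coprime m.factorial) : n.Prime := by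
  by_contra hp
  have hsq := Nat.minFac_sq_le_self (by omega) hp
  have hle : n.minFac ≤ m := (lt_of_pow_lt_pow_left' 2 (hsq.trans_lt hnm)).le
  have hprime := Nat.minFac_prime hn.ne'
  exact Nat.not_coprime_of_dvd_of_dvd hprime.one_lt n.minFac_dvd (hprime.dvd_factorial.2 hle) h

theorem prime_of_testBit_primeMask {k n i : ℕ} (hk : n + 2 ^ k ≤ 363 ^ 2)
    (h : (primeMask k n).testBit i) : (n + i).Prime ∧ i < 2 ^ k := by
  induction k generalizing n i with
  | zero =>
    rw [primeMask] at h
    cases hc : (Nat.blt 1 n && Nat.gcd n (Nat.factorial 363) == 1)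
    · simp [hc] at h
    · rw [hc, cond_true, Nat.testBit_one_eq_true_iff_self_eq_zero] at h
      subst h
      simp only [Bool.and_eq_true, Nat.blt_eq, beq_iff_eq] at hc
      exact ⟨prime_of_coprime_factorial (m := 363) hc.1 (by omega) hc.2, by simp⟩
  | succ k ih =>
    rw [pow_succ] at hk ⊢
    rw [primeMask, Nat.testBit_or, Nat.testBit_shiftLeft, Bool.or_eq_true, Bool.and_eq_true,
      decide_eq_true_eq] at h
    rcases h with h | ⟨hi, h⟩
    · obtain ⟨hprime, hlt⟩ := ih (by omega) h
      exact ⟨hprime, by omega⟩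
    · obtain ⟨hprime, hlt⟩ := ih (by omega) h
      rw [show n + 2 ^ k + (i - 2 ^ k) = n + i by omega] at hprime
      exact ⟨hprime, by omega⟩

/-- Reduction of a bit mask modulo `q`: superposes the blocks of length `q` of the bits of `P`, of
which there should be at most `2 ^ j`, so that the bits at the positions below `q` mark the residue
classes met by the set bits of `P`. -/
def foldBits (q : ℕ) : ℕ → ℕ → ℕ
  | 0, P => P
  | j + 1, P => foldBits q j (P ||| P >>> (q * 2 ^ j))

theorem exists_testBit_of_testBit_foldBits {q j P i : ℕ} (h : (foldBits q j P).testBit i) :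
    ∃ n, n ≡ i [MOD q] ∧ P.testBit n := by
  induction j generalizing P with
  | zero => exact ⟨i, rfl, h⟩
  | succ j ih =>
    obtain ⟨n, hn, hP⟩ := ih h
    rw [Nat.testBit_or, Nat.testBit_shiftRight, Bool.or_eq_true] at hP
    rcases hP with hP | hP
    · exact ⟨n, hn, hP⟩
    · exact ⟨_, (by simp [Nat.ModEq] : q * 2 ^ j + n ≡ n [MOD q]).trans hn, hP⟩

/-- A bit mask marking the multiples of `d` below `2 ^ j * d`. -/
def multiplesMask (d : ℕ) : ℕ → ℕ
  | 0 => 1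
  | j + 1 => multiplesMask d j ||| multiplesMask d j <<< (d * 2 ^ j)

theorem dvd_of_testBit_multiplesMask {d j i : ℕ} (h : (multiplesMask d j).testBit i) : d ∣ i := by
  induction j generalizing i with
  | zero =>
    rw [multiplesMask, Nat.testBit_one_eq_true_iff_self_eq_zero] at h
    exact h ▸ dvd_zero d
  | succ j ih =>
    rw [multiplesMask, Nat.testBit_or, Nat.testBit_shiftLeft, Bool.or_eq_true, Bool.and_eq_true,
      decide_eq_true_eq] at h
    rcases h with h | ⟨hi, h⟩
    · exact ih h
    · rw [← Nat.sub_add_cancel hi]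
      exact dvd_add (ih h) (dvd_mul_right _ _)

/-- A bit mask marking the multiples below `2 ^ j` of the members `d > 1` of a list that divide
`q`. -/
def noncoprimeMask (q j : ℕ) : List ℕ → ℕ
  | [] => 0
  | d :: l => (bif Nat.blt 1 d && q % d == 0 then multiplesMask d j else 0) ||| noncoprimeMask q j l

theorem not_coprime_of_testBit_noncoprimeMask {q j i : ℕ} {l : List ℕ}
    (h : (noncoprimeMask q j l).testBit i) : ¬ i.Coprime q := by
  induction l with
  | nil => simp [noncoprimeMask] at h
  | cons d l ih =>
    rw [noncoprimeMask, Nat.testBit_or, Bool.or_eq_true] at h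
    rcases h with h | h
    · cases hd : Nat.blt 1 d && q % d == 0
      · simp [hd] at h
      · rw [hd, cond_true] at h
        simp only [Bool.and_eq_true, Nat.blt_eq, beq_iff_eq] at hd
        exact Nat.not_coprime_of_dvd_of_dvd hd.1 (dvd_of_testBit_multiplesMask h)
          (Nat.dvd_of_mod_eq_zero hd.2)
    · exact ih h

/-- Whether, for `q < 1024`, every class coprime to `q` contains a prime below `2 ^ 17`. The classes
that are not coprime to `q` are marked through the divisors of `q` below `32` and their
cofactors. -/
def coversCoprimeClasses (q : ℕ) : Bool :=
  (foldBits q 17 (primeMask 17 0) |||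
    noncoprimeMask q 10 (List.range 32 ++ (List.range 32).map (q / ·))) % 2 ^ q == 2 ^ q - 1

theorem coversCoprimeClasses_of_lt {q : ℕ} (hq : q < 1000) :
    coversCoprimeClasses q = true := by
  have h : (List.range 1000).all coversCoprimeClasses = true := by
    decide +kernel
  exact List.all_eq_true.1 h q (List.mem_range.2 hq)

theorem exists_prime_modEq_of_lt {q a : ℕ} (hq : 0 < q) (hq' : q < 1000) (ha : a.Coprime q) :
    ∃ p, p.Prime ∧ p < 2 ^ 17 ∧ p ≡ a [MOD q] := by
  have h := coversCoprimeClasses_of_lt hq'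
  rw [coversCoprimeClasses, beq_iff_eq] at h
  have hbit := congrArg (fun n => n.testBit (a % q)) h
  simp only [Nat.testBit_mod_two_pow, Nat.testBit_two_pow_sub_one, Nat.mod_lt a hq, decide_true,
    Bool.true_and, Nat.testBit_or, Bool.or_eq_true] at hbit
  rcases hbit with hbit | hbit
  · obtain ⟨p, hpa, hp⟩ := exists_testBit_of_testBit_foldBits hbit
    obtain ⟨hprime, hlt⟩ := prime_of_testBit_primeMask (by norm_num) hp
    rw [zero_add] at hprime
    exact ⟨p, hprime, hlt, hpa.trans (Nat.mod_modEq a q)⟩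
  · refine absurd ?_ (not_coprime_of_testBit_noncoprimeMask hbit)
    rwa [Nat.Coprime, (Nat.mod_modEq a q).gcd_eq]

theorem exists_primes_mul_mul_modEq_of_lt {q a : ℕ} (hq : 0 < q) (hq' : q < 1000)
    (ha : a.Coprime q) :
    ∃ p₁ p₂ p₃ : ℕ, p₁.Prime ∧ p₂.Prime ∧ p₃.Prime ∧ p₁ ≤ 2 ^ 17 ∧ p₂ ≤ 2 ^ 17 ∧ p₃ ≤ 2 ^ 17 ∧
      p₁ * p₂ * p₃ ≡ a [MOD q] := by
  obtain ⟨p, hp, hplt, hpq⟩ := exists_prime_modEq_of_lt hq hq' (Nat.coprime_one_left q)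
  obtain ⟨r, hr, hrlt, hrq⟩ := exists_prime_modEq_of_lt hq hq' ha
  exact ⟨p, p, r, hp, hp, hr, hplt.le, hplt.le, hrlt.le, by simpa using (hpq.mul hpq).mul hrq⟩

/-! ### Products of three primes -/

theorem exists_primes_le_mul_mul_modEq {q a : ℕ} {y : ℝ} (hq : 0 < q) (hy : 2 ^ 17 ≤ y)
    (hqy : (q : ℝ) ^ 16 ≤ y ^ 3) (ha : a.Coprime q) :
    ∃ p₁ p₂ p₃ : ℕ, p₁.Prime ∧ p₂.Prime ∧ p₃.Prime ∧ (p₁ : ℝ) ≤ y ∧ (p₂ : ℝ) ≤ y ∧ (p₃ : ℝ) ≤ y ∧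
      p₁ * p₂ * p₃ ≡ a [MOD q] := by
  have hy0 : 0 ≤ y := le_trans (by norm_num) hy
  simp only [← Nat.le_floor_iff hy0]
  rcases lt_or_ge q 1000 with hq_small | hq_large
  · have hfloor : 2 ^ 17 ≤ ⌊y⌋₊ := Nat.le_floor (by exact_mod_cast hy)
    obtain ⟨p₁, p₂, p₃, h₁, h₂, h₃, hle₁, hle₂, hle₃, hmod⟩ :=
      exists_primes_mul_mul_modEq_of_lt hq hq_small ha
    exact ⟨p₁, p₂, p₃, h₁, h₂, h₃, hle₁.trans hfloor, hle₂.trans hfloor, hle₃.trans hfloor, hmod⟩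
  · exact exists_primes_mul_mul_modEq_of_le hq_large hqy ha

theorem stmt_19 (x : ℝ) (hx : (10 : ℝ) ^ 16 ≤ x) (q : ℕ) (hq : 0 < q)
    (hqx : (q : ℝ) ≤ x ^ ((1 : ℝ) / 16)) (a : ℕ) (ha : a.Coprime q) :
    ∃ p₁ p₂ p₃ : ℕ, p₁.Prime ∧ p₂.Prime ∧ p₃.Prime ∧
      (p₁ : ℝ) ≤ x ^ ((1 : ℝ) / 3) ∧ (p₂ : ℝ) ≤ x ^ ((1 : ℝ) / 3) ∧
      (p₃ : ℝ) ≤ x ^ ((1 : ℝ) / 3) ∧ p₁ * p₂ * p₃ ≡ a [MOD q] := by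
  have hx0 : 0 ≤ x := le_trans (by norm_num) hx
  have hroot : (x ^ ((1 : ℝ) / 3)) ^ 3 = x := by
    rw [one_div]
    exact_mod_cast Real.rpow_inv_natCast_pow hx0 three_ne_zero
  have hqx16 : (q : ℝ) ^ 16 ≤ x := by
    rw [one_div] at hqx
    exact_mod_cast (Real.le_rpow_inv_iff_of_pos q.cast_nonneg hx0 (by norm_num)).1 hqx
  have hlarge : 2 ^ 17 ≤ x ^ ((1 : ℝ) / 3) := by
    refine le_of_pow_le_pow_left₀ three_ne_zero (by positivity) ?_
    rw [hroot]
    exact le_trans (by norm_num) hx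
  exact exists_primes_le_mul_mul_modEq hq hlarge (hqx16.trans_eq hroot.symm) ha
end
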